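/- arXiv:2108.09962 — 11 statements merged into one kernel-verified Lean document; each statement's English description precedes it below -/
import Mathlib

section
/- Let d, r, n be positive integers with n > d + r, and let F be a family of n convex sets in R^d (indexed by {1,...,n}, repetitions allowed). If more than C(n, d+1) - C(n-r, d+1) of the (d+1)-element index subsets correspond to intersecting (d+1)-tuples of F, then F contains an intersecting subfamily of size at least d + r + 1. (Here C(a,b) denotes the binomial coefficient.) -/
/-- If `f` is alternating, whether `f (v ∘ s)` vanishes depends only on the range of `s`. -/
theorem AlternatingMap.comp_eq_zero_of_image_eq {R M N ι : Type*} [CommRing R] [AddCommGroup M]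
    [Module R M] [AddCommGroup N] [Module R N] [DecidableEq ι] {k : ℕ} (f : M [⋀^Fin k]→ₗ[R] N) (v : ι → M)
    {s t : Fin k → ι} (hst : Finset.univ.image s = Finset.univ.image t) (hs : f (v ∘ s) = 0) :
    f (v ∘ t) = 0 := by
  by_cases ht : Function.Injective t
  · have hs' : Function.Injective s := by
      rw [← Set.injOn_univ, ← Finset.coe_univ, ← Finset.card_image_iff, hst,
        Finset.card_image_of_injective _ ht]
    have hr : Set.range t = Set.range s := by
      have := congrArg (fun x : Finset ι => (x : Set ι)) hst
      simpa using this.symm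
    let σ : Equiv.Perm (Fin k) := (Equiv.ofInjective t ht).trans
      ((Equiv.setCongr hr).trans (Equiv.ofInjective s hs').symm)
    have hσ : v ∘ t = (v ∘ s) ∘ σ := by
      funext i
      have : s (σ i) = t i := by
        simp only [σ, Equiv.trans_apply]
        rw [Equiv.apply_ofInjective_symm hs']
        rfl
      simp [this]
    rw [hσ, f.map_perm, hs, smul_zero]
  · exact f.map_eq_zero_of_not_injective _ fun h => ht h.of_comp

/-- If the vectors indexed by `Y ∪ A` span, and an alternating map vanishes on `insert y A` for
all `y ∈ Y`, then it vanishes on `insert x A` for all `x`. -/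
theorem AlternatingMap.vanish_insert {R M N ι : Type*} [CommRing R] [AddCommGroup M]
    [Module R M] [AddCommGroup N] [Module R N] [DecidableEq ι] {d : ℕ}
    (f : M [⋀^Fin (d + 1)]→ₗ[R] N) (v : ι → M) {A : Finset ι} (hA : A.card = d) (Y : Set ι)
    (hspan : Submodule.span R (v '' (Y ∪ A)) = ⊤)
    (hY : ∀ y ∈ Y, ∀ s : Fin (d + 1) → ι, Finset.univ.image s = insert y A → f (v ∘ s) = 0)
    (x : ι) (s : Fin (d + 1) → ι) (hs : Finset.univ.image s = insert x A) : f (v ∘ s) = 0 := by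
  let a : Fin d → ι := fun i => (A.equivFinOfCardEq hA).symm i
  have ha : Finset.univ.image a = A := by
    ext i
    simp only [Finset.mem_image, Finset.mem_univ, true_and, a]
    constructor
    · rintro ⟨j, rfl⟩
      exact Subtype.property _
    · intro hi
      exact ⟨A.equivFinOfCardEq hA ⟨i, hi⟩, by simp⟩
  have hcons (y : ι) : Finset.univ.image (Fin.cons y a : Fin (d + 1) → ι) = insert y A := by
    rw [← ha]
    ext i
    simp [Fin.exists_fin_succ, eq_comm]
  have hcomp (y : ι) : (Fin.cons (v y) (v ∘ a) : Fin (d + 1) → M) = v ∘ Fin.cons y a := by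
    funext i
    refine Fin.cases ?_ (fun j => ?_) i <;> simp
  let g : M →ₗ[R] N :=
    { toFun := fun z => f.curryLeft z (v ∘ a)
      map_add' := by simp
      map_smul' := by simp }
  have hg (y : ι) : g (v y) = f (v ∘ Fin.cons y a) := by
    rw [← hcomp]
    rfl
  have hg0 : g = 0 := by
    refine LinearMap.ext_on hspan ?_
    rintro _ ⟨y, hy | hy, rfl⟩
    · rw [hg, hY y hy _ (hcons y)]
      rfl
    · rw [hg]
      refine f.map_eq_zero_of_not_injective _ fun h => ?_
      have h1 := Finset.card_image_of_injective Finset.univ h.of_comp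
      rw [hcons, Finset.insert_eq_self.2 (by simpa using hy), hA] at h1
      simp at h1
  refine f.comp_eq_zero_of_image_eq v ((hcons x).trans hs.symm) ?_
  rw [← hg, hg0]
  rfl

/-- There are arbitrarily long finite sequences of vectors in general position in `ℝ^m`. -/
theorem exists_general_position (n m : ℕ) : ∃ v : Fin n → Fin m → ℝ,
    ∀ T : Finset (Fin n), m ≤ T.card → Submodule.span ℝ (v '' T) = ⊤ := by
  refine ⟨fun i j => (i : ℝ) ^ (j : ℕ), fun T hT => ?_⟩
  obtain ⟨T', hT', hcard⟩ := Finset.exists_subset_card_eq hT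
  let e := T'.orderEmbOfFin hcard
  let M : Matrix (Fin m) (Fin m) ℝ := Matrix.vandermonde fun k => ((e k : ℕ) : ℝ)
  have hM : IsUnit M := by
    rw [Matrix.isUnit_iff_isUnit_det, isUnit_iff_ne_zero]
    refine Matrix.det_vandermonde_ne_zero_iff.2 fun a b hab => e.injective (Fin.ext ?_)
    exact_mod_cast hab
  have hli : LinearIndependent ℝ M.row := Matrix.linearIndependent_rows_iff_isUnit.2 hM
  have htop := hli.span_eq_top_of_card_eq_finrank' (by simp)
  rw [eq_top_iff, ← htop]
  refine Submodule.span_mono ?_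
  rintro _ ⟨k, rfl⟩
  exact ⟨e k, hT' (T'.orderEmbOfFin_mem hcard k), rfl⟩

/-- If an alternating map on `V` with `k` arguments vanishes on all tuples of vectors from a
spanning family `v` as soon as it vanishes on the subfamilies in `N`, then `N` has at least
`(finrank V).choose k` members. -/
theorem choose_finrank_le_card.{u, w} {K V : Type u} {ι : Type w} [Field K] [AddCommGroup V] [Module K V]
    [Module.Finite K V] [DecidableEq ι] {k : ℕ} (v : ι → V)
    (hv : Submodule.span K (Set.range v) = ⊤) (N : Finset (Finset ι))
    (hN : ∀ (Q : Type u) [AddCommGroup Q] [Module K Q] (f : V [⋀^Fin k]→ₗ[K] Q),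
      (∀ S ∈ N, ∀ s : Fin k → ι, Finset.univ.image s = S → f (v ∘ s) = 0) →
      ∀ s : Fin k → ι, f (v ∘ s) = 0) :
    (Module.finrank K V).choose k ≤ N.card := by
  classical
  let w : Finset ι → ⋀[K]^k V := fun S =>
    if h : ∃ s : Fin k → ι, Finset.univ.image s = S then exteriorPower.ιMulti K k (v ∘ h.choose)
    else 0
  let W : Submodule K (⋀[K]^k V) := Submodule.span K (N.image w : Set (⋀[K]^k V))
  have hzero := hN _ (W.mkQ.compAlternatingMap (exteriorPower.ιMulti K k)) (by
    intro S hS s hs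
    have h : ∃ s : Fin k → ι, Finset.univ.image s = S := ⟨s, hs⟩
    refine AlternatingMap.comp_eq_zero_of_image_eq _ v (h.choose_spec.trans hs.symm) ?_
    simp only [LinearMap.compAlternatingMap_apply, Submodule.mkQ_apply,
      Submodule.Quotient.mk_eq_zero]
    have hw : w S = exteriorPower.ιMulti K k (v ∘ h.choose) := dif_pos h
    rw [← hw]
    exact Submodule.subset_span (by simpa using ⟨S, hS, rfl⟩))
  have hW : W = ⊤ := by
    rw [eq_top_iff, ← exteriorPower.ιMulti_span_of_span K k V hv, Submodule.span_le]
    rintro _ ⟨u, hu, rfl⟩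
    have hu' : ∀ i, ∃ j, v j = u i := by simpa [Set.range_subset_iff] using hu
    choose s hs using hu'
    obtain rfl : v ∘ s = u := funext hs
    simpa using hzero s
  rw [← exteriorPower.finrank_eq K k, ← finrank_top, ← hW]
  exact (finrank_span_finset_le_card _).trans Finset.card_image_le

section Convex

variable {E ι : Type*} [NormedAddCommGroup E] [NormedSpace ℝ E]

/-- In a strictly convex space a convex set has at most one point of minimal norm. -/
theorem Convex.eq_of_norm_le [StrictConvexSpace ℝ E] {K : Set E} (hK : Convex ℝ K) {p q : E}
    (hp : p ∈ K) (hq : q ∈ K) (hmin : ∀ z ∈ K, ‖p‖ ≤ ‖z‖) (hqp : ‖q‖ ≤ ‖p‖) : p = q := by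
  have hpq : ‖p‖ = ‖q‖ := le_antisymm (hmin q hq) hqp
  by_contra hne
  have h1 := (norm_midpoint_lt_iff hpq).2 hne
  have h2 := hmin _ (hK hp hq (a := 1 / 2) (b := 1 / 2) (by norm_num) (by norm_num) (by norm_num))
  rw [← smul_add] at h2
  exact absurd h1 (not_lt.2 h2)

/-- A point of minimal norm in the intersection of `dim E + 1` convex sets has minimal norm
already in the intersection of some `dim E` of them. -/
theorem exists_subset_norm_le [FiniteDimensional ℝ E] {C : ι → Set E}
    (hC : ∀ i, Convex ℝ (C i)) {S : Finset ι} (hS : S.card = Module.finrank ℝ E + 1) {p : E}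
    (hp : p ∈ ⋂ i ∈ S, C i) (hmin : ∀ z ∈ ⋂ i ∈ S, C i, ‖p‖ ≤ ‖z‖) :
    ∃ A ⊆ S, A.card = Module.finrank ℝ E ∧ ∀ z ∈ ⋂ i ∈ A, C i, ‖p‖ ≤ ‖z‖ := by
  by_contra! hcon
  let F : Option ι → Set E := fun o => o.elim (Metric.ball 0 ‖p‖) C
  have hF : (⋂ o ∈ S.insertNone, F o).Nonempty := by
    refine Convex.helly_theorem (𝕜 := ℝ) (by simp [hS]) ?_ ?_
    · rintro (_ | i) -
      · exact convex_ball 0 ‖p‖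
      · exact hC i
    · intro I hI hcard
      by_cases hnone : none ∈ I
      · have hsub : I.eraseNone ⊆ S := fun i hi => by
          simpa using hI (Finset.mem_eraseNone.1 hi)
        obtain ⟨z, hz, hlt⟩ := hcon I.eraseNone hsub (by
          rw [Finset.card_eraseNone_of_mem hnone, hcard]
          rfl)
        refine ⟨z, Set.mem_iInter₂.2 ?_⟩
        rintro (_ | i) hi
        · simpa [F] using hlt
        · exact Set.mem_iInter₂.1 hz i (Finset.mem_eraseNone.2 hi)
      · refine ⟨p, Set.mem_iInter₂.2 ?_⟩
        rintro (_ | i) hi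
        · exact absurd hi hnone
        · exact Set.mem_iInter₂.1 hp i (by simpa using hI hi)
  obtain ⟨z, hz⟩ := hF
  rw [Set.mem_iInter₂] at hz
  have h1 : ‖z‖ < ‖p‖ := by simpa [F] using hz none (by simp)
  exact absurd (hmin z (Set.mem_iInter₂.2 fun i hi => hz (some i) (by simpa using hi)))
    (not_le.2 h1)

open scoped Classical in
/-- If no `dim E + r + 1` of `n` compact convex sets have a common point, then at least
`(n - r).choose (dim E + 1)` of their `(dim E + 1)`-tuples have no common point. -/
theorem choose_le_card_nonintersecting {n r : ℕ} [FiniteDimensional ℝ E] [StrictConvexSpace ℝ E]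
    (C : Fin n → Set E) (hconv : ∀ i, Convex ℝ (C i)) (hcomp : ∀ i, IsCompact (C i))
    (hn : Module.finrank ℝ E + r < n)
    (hr : ∀ S : Finset (Fin n), (⋂ i ∈ S, C i).Nonempty → S.card ≤ Module.finrank ℝ E + r) :
    (n - r).choose (Module.finrank ℝ E + 1) ≤
      ((Finset.powersetCard (Module.finrank ℝ E + 1) (Finset.univ : Finset (Fin n))).filter
        (fun S => ¬ (⋂ i ∈ S, C i).Nonempty)).card := by
  set d := Module.finrank ℝ E
  obtain ⟨v, hv⟩ := exists_general_position n (n - r)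
  have hspan : Submodule.span ℝ (Set.range v) = ⊤ := by
    simpa using hv Finset.univ (by simp)
  have hmin (S : Finset (Fin n)) : ∃ p : E, S.card = d + 1 → (⋂ i ∈ S, C i).Nonempty →
      p ∈ ⋂ i ∈ S, C i ∧ ∀ z ∈ ⋂ i ∈ S, C i, ‖p‖ ≤ ‖z‖ := by
    by_cases h : S.card = d + 1 ∧ (⋂ i ∈ S, C i).Nonempty
    · obtain ⟨i, hi⟩ : S.Nonempty := Finset.card_pos.1 (by omega)
      have hK : IsCompact (⋂ i ∈ S, C i) := (hcomp i).of_isClosed_subset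
        (isClosed_biInter fun j _ => (hcomp j).isClosed) (Set.biInter_subset_of_mem hi)
      obtain ⟨p, hp, hpmin⟩ := hK.exists_isMinOn h.2 continuous_norm.continuousOn
      exact ⟨p, fun _ _ => ⟨hp, fun z hz => hpmin hz⟩⟩
    · exact ⟨0, fun h1 h2 => absurd ⟨h1, h2⟩ h⟩
  choose p hp using hmin
  have key := choose_finrank_le_card (K := ℝ) (k := d + 1) v hspan
    ((Finset.powersetCard (d + 1) (Finset.univ : Finset (Fin n))).filter
        (fun S => ¬ (⋂ i ∈ S, C i).Nonempty)) ?_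
  · simpa using key
  intro Q _ _ f hf
  by_contra! hbad
  obtain ⟨s₀, hs₀⟩ := hbad
  let bad : Finset (Finset (Fin n)) := Finset.univ.filter fun S =>
    ∃ s : Fin (d + 1) → Fin n, Finset.univ.image s = S ∧ f (v ∘ s) ≠ 0
  have hbadcard : ∀ S ∈ bad, S.card = d + 1 := by
    intro S hS
    obtain ⟨s, rfl, hs⟩ := (Finset.mem_filter.1 hS).2
    have hinj : Function.Injective s := by
      by_contra h
      exact hs (f.map_eq_zero_of_not_injective _ fun h' => h h'.of_comp)
    simp [Finset.card_image_of_injective _ hinj]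
  have hbadface : ∀ S ∈ bad, (⋂ i ∈ S, C i).Nonempty := by
    intro S hS
    by_contra h
    obtain ⟨s, hs, hne⟩ := (Finset.mem_filter.1 hS).2
    exact hne (hf S (Finset.mem_filter.2 ⟨by simp [hbadcard S hS], h⟩) s hs)
  obtain ⟨S, hS, hmax⟩ := bad.exists_max_image (fun S => ‖p S‖)
    ⟨_, Finset.mem_filter.2 ⟨Finset.mem_univ _, s₀, rfl, hs₀⟩⟩
  obtain ⟨hpS, hpmin⟩ := hp S (hbadcard S hS) (hbadface S hS)
  obtain ⟨A, hAS, hA, hAmin⟩ := exists_subset_norm_le hconv (hbadcard S hS) hpS hpmin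
  obtain ⟨x, hxA, hx⟩ : ∃ x, x ∉ A ∧ insert x A = S :=
    (Finset.covBy_iff_exists_insert.1 (Finset.covBy_iff_card_sdiff_eq_one.2 ⟨hAS, by
      rw [Finset.card_sdiff_of_subset hAS, hbadcard S hS, hA]; omega⟩))
  let B : Finset (Fin n) := Finset.univ.filter fun i => p S ∈ C i
  have hB : B.card ≤ d + r :=
    hr B ⟨p S, Set.mem_iInter₂.2 fun i hi => (Finset.mem_filter.1 hi).2⟩
  have hpA : p S ∈ ⋂ i ∈ A, C i :=
    Set.mem_iInter₂.2 fun i hi => Set.mem_iInter₂.1 hpS i (hAS hi)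
  have hAB : A ⊆ B := fun i hi =>
    Finset.mem_filter.2 ⟨Finset.mem_univ _, Set.mem_iInter₂.1 hpA i hi⟩
  obtain ⟨s, hs, hne⟩ := (Finset.mem_filter.1 hS).2
  refine hne (f.vanish_insert v hA (Bᶜ : Finset (Fin n)) ?_ ?_ x s (hs.trans hx.symm))
  · rw [← Finset.coe_union]
    refine hv _ ?_
    rw [Finset.card_union_of_disjoint
      (Finset.disjoint_left.2 fun i hi hi' => (Finset.mem_compl.1 hi) (hAB hi')),
      Finset.card_compl, Fintype.card_fin, hA]
    omega
  · intro y hy t ht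
    by_contra hne'
    have hmem : insert y A ∈ bad := Finset.mem_filter.2 ⟨Finset.mem_univ _, t, ht, hne'⟩
    obtain ⟨hq, -⟩ := hp _ (hbadcard _ hmem) (hbadface _ hmem)
    rw [Set.mem_iInter₂] at hq
    have heq : p S = p (insert y A) :=
      (convex_iInter₂ fun i _ => hconv i).eq_of_norm_le hpA
        (Set.mem_iInter₂.2 fun i hi => hq i (Finset.mem_insert_of_mem hi)) hAmin (hmax _ hmem)
    have hyB : y ∉ B := by simpa using hy
    exact hyB (Finset.mem_filter.2 ⟨Finset.mem_univ _, heq ▸ hq y (Finset.mem_insert_self y A)⟩)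

end Convex

/-- A finite family of convex sets can be shrunk to compact convex sets, after transport along a
linear equivalence to a normed space, without losing any intersection. -/
theorem exists_compact_convex_family {E F ι : Type*} [Finite ι] [AddCommGroup E] [Module ℝ E]
    [NormedAddCommGroup F] [NormedSpace ℝ F] (φ : F ≃ₗ[ℝ] E) (A : ι → Set E)
    (hconv : ∀ i, Convex ℝ (A i)) :
    ∃ C : ι → Set F, (∀ i, Convex ℝ (C i)) ∧ (∀ i, IsCompact (C i)) ∧
      ∀ S : Finset ι, (⋂ i ∈ S, C i).Nonempty ↔ (⋂ i ∈ S, A i).Nonempty := by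
  have hq (S : Finset ι) : ∃ q : E, (⋂ i ∈ S, A i).Nonempty → q ∈ ⋂ i ∈ S, A i := by
    by_cases h : (⋂ i ∈ S, A i).Nonempty
    · exact ⟨h.some, fun _ => h.some_mem⟩
    · exact ⟨0, fun h' => absurd h' h⟩
  choose q hq using hq
  let C : ι → Set F := fun i => convexHull ℝ
    ((fun S => φ.symm (q S)) '' {S : Finset ι | i ∈ S ∧ (⋂ j ∈ S, A j).Nonempty})
  have hCA (i : ι) : C i ⊆ φ.toLinearMap ⁻¹' A i := by
    refine convexHull_min ?_ ((hconv i).linear_preimage φ.toLinearMap)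
    rintro _ ⟨S, ⟨hi, hS⟩, rfl⟩
    simpa using Set.mem_iInter₂.1 (hq S hS) i hi
  refine ⟨C, fun i => convex_convexHull ℝ _,
    fun i => ((Set.toFinite _).image _).isCompact_convexHull ℝ, fun S => ⟨?_, fun h => ?_⟩⟩
  · rintro ⟨z, hz⟩
    exact ⟨φ z, Set.mem_iInter₂.2 fun i hi => hCA i (Set.mem_iInter₂.1 hz i hi)⟩
  · exact ⟨φ.symm (q S), Set.mem_iInter₂.2 fun i hi =>
      subset_convexHull ℝ _ ⟨S, ⟨hi, h⟩, rfl⟩⟩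

open scoped Classical in
/-- Fractional Helly theorem (exact form) for convex sets in ℝ^d. -/
theorem stmt0 (d r n : ℕ) (hd : 0 < d) (hr : 0 < r) (hn : d + r < n)
    (A : Fin n → Set (Fin d → ℝ)) (hconv : ∀ i, Convex ℝ (A i))
    (hcount : n.choose (d + 1) - (n - r).choose (d + 1) <
      ((Finset.powersetCard (d + 1) (Finset.univ : Finset (Fin n))).filter
        (fun S : Finset (Fin n) => (⋂ i ∈ S, A i).Nonempty)).card) :
    ∃ S : Finset (Fin n), d + r + 1 ≤ S.card ∧ (⋂ i ∈ S, A i).Nonempty := by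
  by_contra! hcon
  obtain ⟨C, hC, hcomp, hCA⟩ :=
    exists_compact_convex_family (WithLp.linearEquiv 2 ℝ (Fin d → ℝ)) A hconv
  have hfin : Module.finrank ℝ (WithLp 2 (Fin d → ℝ)) = d := finrank_euclideanSpace_fin
  have : StrictConvexSpace ℝ (WithLp 2 (Fin d → ℝ)) :=
    inferInstanceAs (StrictConvexSpace ℝ (EuclideanSpace ℝ (Fin d)))
  have key := choose_le_card_nonintersecting (r := r) C hC hcomp (by rwa [hfin]) (by
    intro S hS
    by_contra h
    exact Set.nonempty_iff_ne_empty.1 ((hCA S).1 hS) (hcon S (by omega)))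
  simp only [hfin, hCA] at key
  have hsum := Finset.card_filter_add_card_filter_not
    (s := Finset.powersetCard (d + 1) (Finset.univ : Finset (Fin n)))
    (fun S => (⋂ i ∈ S, A i).Nonempty)
  rw [Finset.card_powersetCard, Finset.card_univ, Fintype.card_fin] at hsum
  omega
end

section
/- Let d, r, t, n be positive integers with n > d + r and r >= (t-1)d, and let F be a family of n sets from F_{t,d} (indexed by {1,...,n}, repetitions allowed). If more than g_d(n,t,r) of the (d+1)-element subfamilies of F are intersecting, then F contains an intersecting subfamily of size at least d + r + 1. -/
/-- `S ∈ 𝓕_{t,d}`: `S ⊆ (ℝ^d)^t` is a Cartesian product `A_1 × ⋯ × A_t`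
of convex sets `A_i ⊆ ℝ^d`. -/
def IsProdOfConvex (t d : ℕ) (S : Set (Fin t → Fin d → ℝ)) : Prop :=
  ∃ A : Fin t → Set (Fin d → ℝ), (∀ j, Convex ℝ (A j)) ∧ S = {x | ∀ j, x j ∈ A j}

/-- `g_d(n,t,r) = C(n,d+1) - min { ∑_i C(n_i, d+1) : n_1 + ⋯ + n_t = n - r + (t-1)d }`. -/
noncomputable def gFun (d n t r : ℕ) : ℕ :=
  n.choose (d + 1) -
    sInf {m : ℕ | ∃ f : Fin t → ℕ,
      (∑ i, f i) = n - r + (t - 1) * d ∧ m = ∑ i, (f i).choose (d + 1)}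

open Finset Module

/-- Any `m` points of the moment curve in `ℝ^m` with distinct parameters form a basis. -/
theorem exists_basis_momentCurve {ι : Type*} {c : ι → ℝ} (hc : Function.Injective c) (m : ℕ)
    (U : Finset ι) (hU : m ≤ U.card) :
    ∃ (u : Fin m → ι) (b : Basis (Fin m) ℝ (Fin m → ℝ)),
      (∀ i, u i ∈ U) ∧ ∀ i, b i = fun j : Fin m => c (u i) ^ (j : ℕ) := by
  obtain ⟨W, hWU, hW⟩ := exists_subset_card_eq hU
  let e := (W.equivFinOfCardEq hW).symm
  have hinj : Function.Injective fun i => c (e i) :=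
    hc.comp (Subtype.val_injective.comp e.injective)
  have hli : LinearIndependent ℝ (Matrix.vandermonde fun i => c (e i)).row :=
    Matrix.linearIndependent_rows_of_det_ne_zero (Matrix.det_vandermonde_ne_zero_iff.2 hinj)
  refine ⟨fun i => e i, basisOfLinearIndependentOfCardEqFinrank' _ hli (by simp),
    fun i => hWU (e i).2, fun i => ?_⟩
  rw [coe_basisOfLinearIndependentOfCardEqFinrank']
  rfl

/-- An alternating form that vanishes on one enumeration of a finite set of vectors vanishes on
each of them. -/
theorem AlternatingMap.eq_zero_of_image_eq {ι M : Type*} [DecidableEq ι] [AddCommGroup M]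
    [Module ℝ M] {k : ℕ} (φ : M [⋀^Fin k]→ₗ[ℝ] ℝ) (g : ι → M) {v w : Fin k → ι}
    (hw : Function.Injective w) (h : univ.image v = univ.image w) (hv : φ (g ∘ v) = 0) :
    φ (g ∘ w) = 0 := by
  have hmem : ∀ i, ∃ j, v j = w i := fun i => by
    have : w i ∈ univ.image v := h ▸ mem_image_of_mem w (mem_univ i)
    simpa using this
  choose σ hσ using hmem
  have hσi : Function.Injective σ := fun i j hij => hw (by rw [← hσ i, ← hσ j, hij])
  have key := φ.map_perm (g ∘ v) (Equiv.ofBijective σ (Finite.injective_iff_bijective.1 hσi))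
  have hcomp : (g ∘ v) ∘ (Equiv.ofBijective σ (Finite.injective_iff_bijective.1 hσi)) = g ∘ w := by
    ext i
    simp [hσ]
  rw [hcomp, hv, smul_zero] at key
  exact key

open scoped Classical in
/-- A lower bound for the number of `(d+1)`-sets that violate `P`, when the `(d+1)`-sets satisfying
`P` can be swept in decreasing order of a weight `N` so that each of them is removed together with
a `d`-subset `A` all of whose remaining extensions lie in a set of at most `d + r` points. -/
theorem choose_le_card_filter_not {ι : Type*} [Finite ι] (V : Finset ι) (d r : ℕ)
    (P : Finset ι → Prop) (N : Finset ι → ℝ)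
    (hP : ∀ T ⊆ V, T.card = d + 1 → P T → ∃ A ⊆ T, A.card = d ∧ ∃ B ⊆ V, A ⊆ B ∧
      B.card ≤ d + r ∧ ∀ x ∈ V, x ∉ B → P (insert x A) → N T < N (insert x A)) :
    (V.card - r).choose (d + 1) ≤
      ((powersetCard (d + 1) V).filter fun S => ¬ P S).card := by
  rcases Nat.lt_or_ge (V.card - r) (d + 1) with hlt | hge
  · simp [Nat.choose_eq_zero_of_lt hlt]
  obtain ⟨c, hc⟩ : ∃ c : ι → ℝ, Function.Injective c := by
    obtain ⟨k, ⟨e⟩⟩ := Finite.exists_equiv_fin ι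
    exact ⟨fun i => ((e i : ℕ) : ℝ),
      Nat.cast_injective.comp (Fin.val_injective.comp e.injective)⟩
  set m := V.card - r with hm
  let g : ι → Fin m → ℝ := fun i j => c i ^ (j : ℕ)
  set Q := (powersetCard (d + 1) V).filter fun S => ¬ P S with hQ
  have hcard : ∀ S : Q, (S : Finset ι).card = d + 1 := fun S =>
    (mem_powersetCard.1 (mem_filter.1 S.2).1).2
  let enum : ∀ S : Q, Fin (d + 1) → ι := fun S i =>
    (((S : Finset ι).equivFinOfCardEq (hcard S)).symm i : ι)
  have henum : ∀ S : Q, univ.image (enum S) = S := by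
    intro S
    ext x
    simp only [mem_image, mem_univ, true_and, enum]
    constructor
    · rintro ⟨i, rfl⟩
      exact Subtype.prop _
    · intro hx
      exact ⟨(S : Finset ι).equivFinOfCardEq (hcard S) ⟨x, hx⟩, by simp⟩
  let L : ((Fin m → ℝ) [⋀^Fin (d + 1)]→ₗ[ℝ] ℝ) →ₗ[ℝ] (Q → ℝ) :=
    { toFun := fun φ S => φ (g ∘ enum S)
      map_add' := fun φ ψ => by ext S; simp
      map_smul' := fun a φ => by ext S; simp }
  have hL : Function.Injective L := by
    rw [← LinearMap.ker_eq_bot, LinearMap.ker_eq_bot']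
    intro φ hφ
    have hmiss : ∀ S : Q, φ (g ∘ enum S) = 0 := fun S => congrFun hφ S
    have hall : ∀ (v : Fin (d + 1) → ι), Function.Injective v → (∀ i, v i ∈ V) →
        φ (g ∘ v) = 0 := by
      by_contra! hcon
      let bad : Set (Finset ι) := {T | ∃ v : Fin (d + 1) → ι, Function.Injective v ∧
        (∀ i, v i ∈ V) ∧ φ (g ∘ v) ≠ 0 ∧ univ.image v = T}
      obtain ⟨T, ⟨v, hv, hvV, hne, hvT⟩, hmax⟩ := Set.exists_max_image bad N (Set.toFinite _)
        (by obtain ⟨v, h1, h2, h3⟩ := hcon; exact ⟨_, v, h1, h2, h3, rfl⟩)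
      have hTV : T ⊆ V := by
        rw [← hvT]
        intro x hx
        obtain ⟨i, -, rfl⟩ := mem_image.1 hx
        exact hvV i
      have hTc : T.card = d + 1 := by
        rw [← hvT, card_image_of_injective _ hv, card_univ, Fintype.card_fin]
      have hbadP : ∀ S ⊆ V, S.card = d + 1 → ∀ w : Fin (d + 1) → ι, Function.Injective w →
          univ.image w = S → φ (g ∘ w) ≠ 0 → P S := by
        intro S hSV hSc w hw hwS hwne
        by_contra hPS
        have hSQ : S ∈ Q := mem_filter.2 ⟨mem_powersetCard.2 ⟨hSV, hSc⟩, hPS⟩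
        exact hwne (φ.eq_zero_of_image_eq g hw ((henum ⟨S, hSQ⟩).trans hwS.symm)
          (hmiss ⟨S, hSQ⟩))
      obtain ⟨A, hAT, hAc, B, hBV, hAB, hBc, hstep⟩ :=
        hP T hTV hTc (hbadP T hTV hTc v hv hvT hne)
      let a : Fin d → ι := fun i => ((A.equivFinOfCardEq hAc).symm i : ι)
      have ha : Function.Injective a :=
        Subtype.val_injective.comp (A.equivFinOfCardEq hAc).symm.injective
      have haA : ∀ i, a i ∈ A := fun i => Subtype.prop _
      have haS : ∀ x ∈ A, ∃ i, a i = x := fun x hx => ⟨A.equivFinOfCardEq hAc ⟨x, hx⟩, by simp [a]⟩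
      have himg : ∀ x, univ.image (Fin.cons x a : Fin (d + 1) → ι) = insert x A := by
        intro x
        ext y
        simp only [mem_image, mem_univ, true_and, Fin.exists_fin_succ, Fin.cons_zero,
          Fin.cons_succ, mem_insert]
        constructor
        · rintro (rfl | ⟨i, rfl⟩)
          exacts [Or.inl rfl, Or.inr (haA i)]
        · rintro (rfl | h)
          exacts [Or.inl rfl, Or.inr (haS y h)]
      let f : (Fin m → ℝ) →ₗ[ℝ] ℝ :=
        φ.toMultilinearMap.toLinearMap (Fin.cons 0 (g ∘ a)) 0
      have hf : ∀ x, f (g x) = φ (g ∘ (Fin.cons x a : Fin (d + 1) → ι)) := by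
        intro x
        simp only [f, MultilinearMap.toLinearMap_apply, Fin.update_cons_zero]
        change φ _ = φ _
        congr 1
        ext i : 1
        refine Fin.cases ?_ (fun i => ?_) i <;> simp
      have hfA : ∀ x ∈ A, f (g x) = 0 := by
        intro x hx
        obtain ⟨i, rfl⟩ := haS x hx
        rw [hf]
        exact φ.map_eq_zero_of_eq _ (i := 0) (j := i.succ) (by simp) (Fin.succ_ne_zero i).symm
      have hfB : ∀ x ∈ V, x ∉ B → f (g x) = 0 := by
        intro x hxV hxB
        have hxA : x ∉ A := fun h => hxB (hAB h)
        by_contra hne'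
        rw [hf] at hne'
        have hinj : Function.Injective (Fin.cons x a : Fin (d + 1) → ι) := by
          rw [Fin.cons_injective_iff]
          refine ⟨?_, ha⟩
          rintro ⟨i, rfl⟩
          exact hxA (haA i)
        have hsub : insert x A ⊆ V := insert_subset hxV (hAB.trans hBV)
        have hPx := hbadP (insert x A) hsub (by rw [card_insert_of_notMem hxA, hAc]) _ hinj
          (himg x) hne'
        have hlt := hstep x hxV hxB hPx
        refine absurd (hmax (insert x A) ⟨_, hinj, fun i => ?_, hne', himg x⟩) (not_le.2 hlt)
        exact hsub (himg x ▸ mem_image_of_mem _ (mem_univ i))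
      have hUc : m ≤ (A ∪ (V \ B)).card := by
        have hdisj : Disjoint A (V \ B) :=
          disjoint_left.2 fun x hx hx' => (mem_sdiff.1 hx').2 (hAB hx)
        rw [card_union_of_disjoint hdisj, card_sdiff_of_subset hBV]
        omega
      obtain ⟨u, b, hu, hb⟩ := exists_basis_momentCurve hc m _ hUc
      have hf0 : f = 0 := b.ext fun i => by
        have hbi : b i = g (u i) := hb i
        rw [hbi, LinearMap.zero_apply]
        rcases mem_union.1 (hu i) with h | h
        · exact hfA _ h
        · exact hfB _ (mem_sdiff.1 h).1 (mem_sdiff.1 h).2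
      obtain ⟨x, hx⟩ : (T \ A).Nonempty := by
        rw [← card_pos, card_sdiff_of_subset hAT]
        omega
      have hTx : insert x A = T := by
        refine eq_of_subset_of_card_le
          (insert_subset (mem_sdiff.1 hx).1 hAT) ?_
        rw [card_insert_of_notMem (mem_sdiff.1 hx).2]
        omega
      refine hne (φ.eq_zero_of_image_eq g hv (((himg x).trans hTx).trans hvT.symm) ?_)
      rw [← hf, hf0, LinearMap.zero_apply]
    obtain ⟨u, b, hu, hb⟩ := exists_basis_momentCurve hc m V (Nat.sub_le _ _)
    refine b.ext_alternating fun v hv => ?_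
    have hbv : (fun i => b (v i)) = g ∘ (u ∘ v) := funext fun i => hb (v i)
    rw [hbv, AlternatingMap.zero_apply]
    refine hall _ (fun i j hij => hv (b.injective ?_)) fun i => hu _
    rw [hb, hb]
    exact congrArg g hij
  have hdim := LinearMap.finrank_le_finrank_of_injective hL
  rw [finrank_pi, Fintype.card_coe,
    (exteriorPower.alternatingMapLinearEquiv (R := ℝ) (M := Fin m → ℝ) (N := ℝ)
      (n := d + 1)).finrank_eq, Module.finrank_linearMap, exteriorPower.finrank_eq] at hdim
  simpa using hdim

/-- A finite family of convex sets can be shrunk to closed convex sets with the same nerve. -/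
theorem exists_isClosed_convex_nerve_iff {ι E : Type*} [Finite ι] [NormedAddCommGroup E]
    [NormedSpace ℝ E] (A : ι → Set E) (hA : ∀ i, Convex ℝ (A i)) :
    ∃ C : ι → Set E, (∀ i, Convex ℝ (C i)) ∧ (∀ i, IsClosed (C i)) ∧
      ∀ S : Finset ι, (⋂ i ∈ S, C i).Nonempty ↔ (⋂ i ∈ S, A i).Nonempty := by
  let I := {S : Finset ι // (⋂ i ∈ S, A i).Nonempty}
  choose p hp using fun S : I => S.2
  refine ⟨fun i => convexHull ℝ (p '' {S : I | i ∈ S.1}), fun i => convex_convexHull ℝ _,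
    fun i => (Set.toFinite _).isClosed_convexHull ℝ, fun S => ⟨fun h => h.mono ?_, fun h => ?_⟩⟩
  · refine Set.iInter₂_mono fun i _ => convexHull_min ?_ (hA i)
    rintro _ ⟨T, hT, rfl⟩
    exact Set.mem_iInter₂.1 (hp T) i hT
  · exact ⟨p ⟨S, h⟩, Set.mem_iInter₂.2 fun i hi =>
      subset_convexHull ℝ _ ⟨⟨S, h⟩, hi, rfl⟩⟩

/-- If a finite intersection of at least `dim E` convex sets misses a further convex set, and is
nonempty, then already `dim E` of the sets have an intersection that misses it. -/
theorem exists_subset_card_eq_finrank_disjoint {ι E : Type*} [AddCommGroup E] [Module ℝ E]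
    [FiniteDimensional ℝ E] {C : ι → Set E} (hC : ∀ i, Convex ℝ (C i)) {D : Set E}
    (hD : Convex ℝ D) {T : Finset ι} (hT : finrank ℝ E ≤ T.card) (hne : (⋂ i ∈ T, C i).Nonempty)
    (hdisj : Disjoint (⋂ i ∈ T, C i) D) :
    ∃ A ⊆ T, A.card = finrank ℝ E ∧ Disjoint (⋂ i ∈ A, C i) D := by
  classical
  by_contra! hcon
  let G : Option ι → Set E := fun o => o.elim D C
  have hG : (⋂ o ∈ insertNone T, G o).Nonempty := by
    refine Convex.helly_theorem' (𝕜 := ℝ) (fun o _ => ?_) fun I hI hIc => ?_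
    · cases o
      exacts [hD, hC _]
    · have hsub : eraseNone I ⊆ T := fun i hi => by
        simpa using hI (mem_eraseNone.1 hi)
      by_cases hnone : none ∈ I
      · have hle : (eraseNone I).card ≤ finrank ℝ E := by
          have h1 : insertNone (eraseNone I) = I := by
            rw [insertNone_eraseNone, insert_eq_of_mem hnone]
          have h2 := card_insertNone (eraseNone I)
          rw [h1] at h2
          omega
        obtain ⟨A, hIA, hAT, hAc⟩ := exists_subsuperset_card_eq hsub hle hT
        obtain ⟨x, hxA, hxD⟩ := Set.not_disjoint_iff.1 (hcon A hAT hAc)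
        refine ⟨x, Set.mem_iInter₂.2 fun o ho => ?_⟩
        cases o with
        | none => exact hxD
        | some i => exact Set.mem_iInter₂.1 hxA i (hIA (mem_eraseNone.2 ho))
      · obtain ⟨x, hx⟩ := hne
        refine ⟨x, Set.mem_iInter₂.2 fun o ho => ?_⟩
        cases o with
        | none => exact absurd ho hnone
        | some i => exact Set.mem_iInter₂.1 hx i (hsub (mem_eraseNone.2 ho))
  obtain ⟨x, hx⟩ := hG
  rw [Set.mem_iInter₂] at hx
  refine Set.disjoint_left.1 hdisj (Set.mem_iInter₂.2 fun i hi => ?_)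
    (hx none (none_mem_insertNone))
  exact hx (some i) (some_mem_insertNone.2 hi)

open scoped Classical in
/-- The upper bound theorem for families of convex sets: if no more than `d + r` members of a family
of convex sets in a `d`-dimensional space have a common point, then at least `C(n - r, d + 1)` of
the `(d+1)`-subfamilies are not intersecting. -/
theorem choose_le_card_not_intersecting {ι E : Type*} [Finite ι] [NormedAddCommGroup E]
    [InnerProductSpace ℝ E] [FiniteDimensional ℝ E] (A : ι → Set E) (hA : ∀ i, Convex ℝ (A i))
    (V : Finset ι) (r : ℕ)
    (hV : ∀ S ⊆ V, (⋂ i ∈ S, A i).Nonempty → S.card ≤ finrank ℝ E + r) :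
    (V.card - r).choose (finrank ℝ E + 1) ≤
      ((powersetCard (finrank ℝ E + 1) V).filter fun S => ¬ (⋂ i ∈ S, A i).Nonempty).card := by
  obtain ⟨C, hC, hCc, hCA⟩ := exists_isClosed_convex_nerve_iff A hA
  simp only [← hCA] at hV ⊢
  have hclosed : ∀ S : Finset ι, IsClosed (⋂ i ∈ S, C i) := fun S =>
    isClosed_biInter fun i _ => hCc i
  have hconv : ∀ S : Finset ι, Convex ℝ (⋂ i ∈ S, C i) := fun S =>
    convex_iInter₂ fun i _ => hC i
  refine choose_le_card_filter_not V _ r (fun S => (⋂ i ∈ S, C i).Nonempty)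
    (fun S => Metric.infDist 0 (⋂ i ∈ S, C i)) fun T hTV hTc hT => ?_
  obtain ⟨p, hpT, hp⟩ := (hclosed T).exists_infDist_eq_dist hT 0
  have hdisj : Disjoint (⋂ i ∈ T, C i) (Metric.ball 0 (‖p‖)) := by
    refine Set.disjoint_left.2 fun x hx hxb => ?_
    have h1 := Metric.infDist_le_dist_of_mem (x := (0 : E)) hx
    rw [hp, dist_zero_left, dist_zero_left] at h1
    exact absurd (mem_ball_zero_iff.1 hxb) (not_lt.2 h1)
  obtain ⟨U, hUT, hUc, hU⟩ := exists_subset_card_eq_finrank_disjoint hC (convex_ball 0 (‖p‖))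
    (by omega) hT hdisj
  have hpU : p ∈ ⋂ i ∈ U, C i :=
    Set.mem_iInter₂.2 fun i hi => Set.mem_iInter₂.1 hpT i (hUT hi)
  refine ⟨U, hUT, hUc, V.filter fun i => p ∈ C i, filter_subset _ _, fun i hi => ?_, ?_, ?_⟩
  · exact mem_filter.2 ⟨hTV (hUT hi), Set.mem_iInter₂.1 hpU i hi⟩
  · exact hV _ (filter_subset _ _) ⟨p, Set.mem_iInter₂.2 fun i hi => (mem_filter.1 hi).2⟩
  · intro x hxV hxB hx
    obtain ⟨q, hqx, hq⟩ := (hclosed (insert x U)).exists_infDist_eq_dist hx 0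
    have hqU : q ∈ ⋂ i ∈ U, C i :=
      Set.mem_iInter₂.2 fun i hi => Set.mem_iInter₂.1 hqx i (mem_insert_of_mem hi)
    have hmin : ∀ y ∈ ⋂ i ∈ U, C i, ‖p‖ ≤ ‖y‖ := fun y hy =>
      not_lt.1 fun h => Set.disjoint_left.1 hU hy (mem_ball_zero_iff.2 h)
    rw [hp, hq, dist_zero_left, dist_zero_left]
    refine lt_of_le_of_ne (hmin q hqU) fun heq => ?_
    have hpq : p ≠ q := by
      rintro rfl
      exact hxB (mem_filter.2 ⟨hxV, Set.mem_iInter₂.1 hqx x (mem_insert_self _ _)⟩)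
    have hmid : (1 / 2 : ℝ) • (p + q) ∈ ⋂ i ∈ U, C i := by
      rw [smul_add]
      exact hconv U hpU hqU (by norm_num) (by norm_num) (by norm_num)
    exact absurd ((norm_midpoint_lt_iff heq).2 hpq) (not_lt.2 (hmin _ hmid))

open scoped Classical in
/-- The upper bound theorem for convex sets in `ℝ^d`. -/
theorem choose_le_card_not_intersecting_pi {ι : Type*} [Finite ι] {d : ℕ}
    (A : ι → Set (Fin d → ℝ)) (hA : ∀ i, Convex ℝ (A i)) (V : Finset ι) (r : ℕ)
    (hV : ∀ S ⊆ V, (⋂ i ∈ S, A i).Nonempty → S.card ≤ d + r) :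
    (V.card - r).choose (d + 1) ≤
      ((powersetCard (d + 1) V).filter fun S => ¬ (⋂ i ∈ S, A i).Nonempty).card := by
  let e := (EuclideanSpace.equiv (Fin d) ℝ).toLinearEquiv
  have hpre : ∀ S : Finset ι,
      (⋂ i ∈ S, e.toLinearMap ⁻¹' A i).Nonempty ↔ (⋂ i ∈ S, A i).Nonempty := fun S => by
    rw [← Set.preimage_iInter₂]
    exact e.surjective.nonempty_preimage
  have hfin : finrank ℝ (EuclideanSpace ℝ (Fin d)) = d := finrank_euclideanSpace_fin
  have := choose_le_card_not_intersecting (fun i => e.toLinearMap ⁻¹' A i)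
    (fun i => (hA i).linear_preimage e.toLinearMap) V r
    (by simpa only [hpre, hfin] using hV)
  simpa only [hpre, hfin] using this

open scoped Classical in
/-- If no more than `d + r` indices form a common face of the nerves of `t` families of convex sets
in `ℝ^d`, then the number of common non-faces of size `d + 1` is at least `∑ i, C(f i, d + 1)` for
some `f` of prescribed sum. -/
theorem exists_sum_choose_le_card {ι : Type*} [Finite ι] {d r : ℕ} (t : ℕ) :
    ∀ (A : Fin t → ι → Set (Fin d → ℝ)) (_ : ∀ j i, Convex ℝ (A j i)) (V : Finset ι)
      (_ : d + r ≤ V.card)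
      (_ : ∀ S ⊆ V, (∀ j, (⋂ i ∈ S, A j i).Nonempty) → S.card ≤ d + r),
      ∃ f : Fin t → ℕ, ∑ j, f j + (d + r) = V.card + t * d ∧
        ∑ j, (f j).choose (d + 1) ≤ ((powersetCard (d + 1) V).filter
          fun S => ¬ ∀ j, (⋂ i ∈ S, A j i).Nonempty).card := by
  induction t with
  | zero =>
    intro A _ V hV hno
    refine ⟨0, ?_, by simp⟩
    have := hno V subset_rfl fun j => j.elim0
    simp
    omega
  | succ t ih =>
    intro A hA V hV hno
    obtain ⟨K, hK, hKmax⟩ := exists_max_image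
      (V.powerset.filter fun S => (⋂ i ∈ S, A 0 i).Nonempty) card
      ⟨∅, mem_filter.2 ⟨empty_mem_powerset V, by simp⟩⟩
    rw [mem_filter, mem_powerset] at hK
    have hmax : ∀ S ⊆ V, (⋂ i ∈ S, A 0 i).Nonempty → S.card ≤ K.card := fun S hS hne =>
      hKmax S (mem_filter.2 ⟨mem_powerset.2 hS, hne⟩)
    rcases Nat.lt_or_ge K.card (d + r) with hlt | hge
    · refine ⟨Fin.cons (V.card - r) fun _ => d, ?_, ?_⟩
      · simp [Fin.sum_univ_succ, add_mul]
        omega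
      · simp only [Fin.sum_univ_succ, Fin.cons_zero, Fin.cons_succ, Nat.choose_succ_self,
          sum_const_zero, add_zero]
        refine (choose_le_card_not_intersecting_pi (A 0) (hA 0) V r fun S hS hne =>
          (hmax S hS hne).trans hlt.le).trans (card_le_card ?_)
        exact monotone_filter_right _ fun S _ hS h => hS (h 0)
    · obtain ⟨f, hf, hfc⟩ := ih (fun j => A j.succ) (fun j => hA j.succ) K hge
        fun S hS hne => hno S (hS.trans hK.1) (Fin.cases
          (hK.2.mono (Set.biInter_subset_biInter_left hS)) hne)
      have hKV := card_le_card hK.1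
      refine ⟨Fin.cons (V.card - (K.card - d)) f, ?_, ?_⟩
      · simp only [Fin.sum_univ_succ, Fin.cons_zero, Fin.cons_succ, add_mul]
        omega
      · simp only [Fin.sum_univ_succ, Fin.cons_zero, Fin.cons_succ]
        have h0 := choose_le_card_not_intersecting_pi (A 0) (hA 0) V (K.card - d)
          fun S hS hne => (hmax S hS hne).trans (by omega)
        refine (add_le_add h0 hfc).trans ?_
        rw [← card_union_of_disjoint]
        · refine card_le_card (union_subset ?_ fun S hS => ?_)
          · exact monotone_filter_right _ fun S _ hS h => hS (h 0)
          · rw [mem_filter, mem_powersetCard] at hS ⊢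
            exact ⟨⟨hS.1.1.trans hK.1, hS.1.2⟩, fun h => hS.2 fun j => h j.succ⟩
        · refine disjoint_left.2 fun S hS hS' => (mem_filter.1 hS).2 ?_
          exact hK.2.mono (Set.biInter_subset_biInter_left
            (mem_powersetCard.1 (mem_filter.1 hS').1).1)

open scoped Classical in
/-- Exact fractional Helly theorem for Cartesian products of convex sets. -/
theorem stmt3 (d r t n : ℕ) (hd : 0 < d) (hr : 0 < r) (ht : 0 < t) (hn : d + r < n)
    (hrt : (t - 1) * d ≤ r)
    (F : Fin n → Set (Fin t → Fin d → ℝ)) (hF : ∀ i, IsProdOfConvex t d (F i))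
    (hcount : gFun d n t r <
      ((Finset.powersetCard (d + 1) (Finset.univ : Finset (Fin n))).filter
        (fun S : Finset (Fin n) => (⋂ i ∈ S, F i).Nonempty)).card) :
    ∃ S : Finset (Fin n), d + r + 1 ≤ S.card ∧ (⋂ i ∈ S, F i).Nonempty := by
  by_contra! hcon
  choose A hA hFA using hF
  have hiff : ∀ S : Finset (Fin n),
      (⋂ i ∈ S, F i).Nonempty ↔ ∀ j, (⋂ i ∈ S, A i j).Nonempty := by
    intro S
    constructor
    · rintro ⟨x, hx⟩ j
      refine ⟨x j, Set.mem_iInter₂.2 fun i hi => ?_⟩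
      have hxi := Set.mem_iInter₂.1 hx i hi
      rw [hFA i] at hxi
      exact hxi j
    · intro h
      choose x hx using h
      refine ⟨x, Set.mem_iInter₂.2 fun i hi => ?_⟩
      rw [hFA i]
      exact fun j => Set.mem_iInter₂.1 (hx j) i hi
  obtain ⟨f, hf, hfc⟩ := exists_sum_choose_le_card (d := d) (r := r) t (fun j i => A i j)
    (fun j i => hA i j) Finset.univ (by simpa using hn.le) fun S _ hS => by
      by_contra hlt
      exact ((hiff S).2 hS).ne_empty (hcon S (by omega))
  simp only [← hiff] at hfc
  have hsum : ∑ j, f j = n - r + (t - 1) * d := by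
    obtain ⟨s, rfl⟩ := Nat.exists_eq_succ_of_ne_zero ht.ne'
    simp only [Finset.card_univ, Fintype.card_fin, Nat.succ_eq_add_one, add_mul, one_mul,
      Nat.add_sub_cancel] at hf ⊢
    omega
  have hinf : sInf {m : ℕ | ∃ f : Fin t → ℕ,
      (∑ i, f i) = n - r + (t - 1) * d ∧ m = ∑ i, (f i).choose (d + 1)} ≤
      ∑ j, (f j).choose (d + 1) := Nat.sInf_le ⟨f, hsum, rfl⟩
  have hcompl := Finset.card_filter_add_card_filter_not
    (s := Finset.powersetCard (d + 1) (Finset.univ : Finset (Fin n)))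
    (fun S : Finset (Fin n) => (⋂ i ∈ S, F i).Nonempty)
  rw [Finset.card_powersetCard, Finset.card_univ, Fintype.card_fin] at hcompl
  unfold gFun at hcount
  omega
end

section
/- Let d, r, n be positive integers with n >= d + r. Then there exists a family F of n convex sets in R^d satisfying all of the following: (1) every subfamily of F with more than d + (n-d)/(r+1) sets contains d+1 members with a common point; (2) every intersecting subfamily of F has size at most d + r; (3) exactly C(n, d+1) - C(n-r, d+1) of the (d+1)-element subfamilies of F are intersecting. -/
/-- `T` has an element exceeding every other element of `T` by more than `r`. -/
def TopGap (r : ℕ) (T : Finset ℕ) : Prop :=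
  ∃ j ∈ T, ∀ i ∈ T.erase j, i + r < j

/-- Evaluation at `t` of the polynomial of degree less than `d` with coefficient vector `x`. -/
noncomputable def coeffEval (d : ℕ) (t : ℝ) : (Fin d → ℝ) →ₗ[ℝ] ℝ :=
  Polynomial.leval t ∘ₗ (Polynomial.degreeLT ℝ d).subtype ∘ₗ
    (Polynomial.degreeLTEquiv ℝ d).symm.toLinearMap

/-- The Lagrange coefficient at `j` of the node `i` of `S`. -/
noncomputable def lagrangeWeight (S : Finset ℕ) (i j : ℕ) : ℝ :=
  (Lagrange.basis S (fun k : ℕ => (k : ℝ)) i).eval (j : ℝ)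

lemma natCast_injOn (S : Finset ℕ) : Set.InjOn (fun k : ℕ => (k : ℝ)) (S : Set ℕ) :=
  fun _ _ _ _ h => Nat.cast_injective h

lemma coeffEval_eq_sum {d : ℕ} {S : Finset ℕ} (hS : S.card = d) (j : ℕ) (x : Fin d → ℝ) :
    coeffEval d j x = ∑ i ∈ S, coeffEval d i x * lagrangeWeight S i j := by
  set p := (Polynomial.degreeLTEquiv ℝ d).symm x with hp
  have hdeg : (p : Polynomial ℝ).degree < S.card := by
    rw [hS]; exact Polynomial.mem_degreeLT.1 p.2
  have h := Lagrange.eq_interpolate (natCast_injOn S) hdeg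
  have h' := congrArg (Polynomial.eval (j : ℝ)) h
  simpa [Lagrange.interpolate_apply, Polynomial.eval_finsetSum, coeffEval, lagrangeWeight]
    using h'

lemma exists_coeffEval_eq {d : ℕ} {S : Finset ℕ} (hS : S.card = d) (y : ℕ → ℝ) :
    ∃ x : Fin d → ℝ, ∀ i ∈ S, coeffEval d i x = y i := by
  have hdeg := Lagrange.degree_interpolate_lt y (natCast_injOn S)
  rw [hS] at hdeg
  refine ⟨Polynomial.degreeLTEquiv ℝ d ⟨_, Polynomial.mem_degreeLT.2 hdeg⟩, fun i hi => ?_⟩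
  have := Lagrange.eval_interpolate_at_node y (natCast_injOn S) hi
  simpa [coeffEval, Polynomial.eval_finsetSum] using this

lemma one_le_lagrangeWeight_max {S : Finset ℕ} {m j : ℕ} (hm : ∀ i ∈ S.erase m, i < m)
    (hj : m < j) : 1 ≤ lagrangeWeight S m j := by
  unfold lagrangeWeight Lagrange.basis
  rw [Polynomial.eval_prod]
  calc (1 : ℝ) = ∏ _i ∈ S.erase m, (1 : ℝ) := by simp
    _ ≤ _ := by
      refine Finset.prod_le_prod (fun _ _ => zero_le_one) fun i hi => ?_
      have h1 : (i : ℝ) < m := by exact_mod_cast hm i hi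
      have h2 : (m : ℝ) < j := by exact_mod_cast hj
      simp only [Lagrange.basisDivisor, Polynomial.eval_mul, Polynomial.eval_C,
        Polynomial.eval_sub, Polynomial.eval_X]
      rw [inv_mul_eq_div, one_le_div (by linarith)]
      linarith

lemma exists_sum_abs_lagrangeWeight_le (n : ℕ) :
    ∃ C : ℝ, 0 ≤ C ∧ ∀ S ⊆ Finset.range n, ∀ j < n, ∑ i ∈ S, |lagrangeWeight S i j| ≤ C := by
  refine ⟨∑ S ∈ (Finset.range n).powerset, ∑ j ∈ Finset.range n,
    ∑ i ∈ S, |lagrangeWeight S i j|, by positivity, fun S hS j hj => ?_⟩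
  refine le_trans ?_ (Finset.single_le_sum
    (f := fun S => ∑ j ∈ Finset.range n, ∑ i ∈ S, |lagrangeWeight S i j|)
    (fun _ _ => by positivity) (Finset.mem_powerset.2 hS))
  exact Finset.single_le_sum (f := fun j => ∑ i ∈ S, |lagrangeWeight S i j|)
    (fun _ _ => by positivity) (Finset.mem_range.2 hj)

/-- The slab of polynomials of degree less than `d` whose value at `j` lies in
`[B ^ (2 * j), B ^ (2 * j + 2 * r + 1)]`. -/
noncomputable def slab (d r : ℕ) (B : ℝ) (j : ℕ) : Set (Fin d → ℝ) :=
  coeffEval d j ⁻¹' Set.Icc (B ^ (2 * j)) (B ^ (2 * j + 2 * r + 1))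

lemma convex_slab (d r : ℕ) (B : ℝ) (j : ℕ) : Convex ℝ (slab d r B j) :=
  (convex_Icc _ _).linear_preimage _

lemma sum_mul_weight_le {S : Finset ℕ} {f w : ℕ → ℝ} {C M : ℝ} (hM : 0 ≤ M)
    (hf : ∀ i ∈ S, |f i| ≤ M) (hw : ∑ i ∈ S, |w i| ≤ C) : |∑ i ∈ S, f i * w i| ≤ M * C :=
  calc |∑ i ∈ S, f i * w i| ≤ ∑ i ∈ S, |f i * w i| := Finset.abs_sum_le_sum_abs _ _
    _ ≤ ∑ i ∈ S, M * |w i| := Finset.sum_le_sum fun i hi => by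
        rw [abs_mul]; exact mul_le_mul_of_nonneg_right (hf i hi) (abs_nonneg _)
    _ = M * ∑ i ∈ S, |w i| := by rw [Finset.mul_sum]
    _ ≤ M * C := mul_le_mul_of_nonneg_left hw hM

lemma not_nonempty_of_topGap {d r n : ℕ} {B C : ℝ} (hC : 0 ≤ C) (hB : C + 2 ≤ B)
    (hCw : ∀ S ⊆ Finset.range n, ∀ j < n, ∑ i ∈ S, |lagrangeWeight S i j| ≤ C)
    {T : Finset ℕ} (hT : T ⊆ Finset.range n) (hcard : T.card = d + 1) (hgap : TopGap r T) :
    ¬ (⋂ i ∈ T, slab d r B i).Nonempty := by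
  rintro ⟨x, hx⟩
  obtain ⟨j, hjT, hj⟩ := hgap
  have hx' : ∀ i ∈ T, B ^ (2 * i) ≤ coeffEval d i x ∧
      coeffEval d i x ≤ B ^ (2 * i + 2 * r + 1) := by
    simpa [slab] using hx
  have hB0 : 0 < B := by linarith
  have hS : (T.erase j).card = d := by rw [Finset.card_erase_of_mem hjT, hcard]; rfl
  have hw := hCw (T.erase j) ((Finset.erase_subset _ _).trans hT) j (Finset.mem_range.1 (hT hjT))
  have hpos : 0 < B ^ (2 * j) := by positivity
  have hle := sum_mul_weight_le (f := fun i => coeffEval d i x) (M := B ^ (2 * j) / B)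
    (by positivity) (fun i hi => by
      have hi' := hx' i (Finset.mem_of_mem_erase hi)
      rw [abs_of_nonneg (le_trans (by positivity) hi'.1), le_div_iff₀ hB0]
      calc _ ≤ B ^ (2 * i + 2 * r + 1) * B := mul_le_mul_of_nonneg_right hi'.2 hB0.le
        _ = B ^ (2 * i + 2 * r + 2) := by ring
        _ ≤ _ := pow_le_pow_right₀ (by linarith) (by have := hj i hi; omega)) hw
  rw [← coeffEval_eq_sum hS] at hle
  have h1 := (hx' j hjT).1.trans ((le_abs_self _).trans hle)
  rw [div_mul_eq_mul_div, le_div_iff₀ hB0] at h1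
  nlinarith

lemma nonempty_of_not_topGap {d r n : ℕ} (hd : 0 < d) {B C : ℝ} (hC : 0 ≤ C)
    (hB : C + 2 ≤ B)
    (hCw : ∀ S ⊆ Finset.range n, ∀ j < n, ∑ i ∈ S, |lagrangeWeight S i j| ≤ C)
    {T : Finset ℕ} (hT : T ⊆ Finset.range n) (hcard : T.card = d + 1) (hgap : ¬ TopGap r T) :
    (⋂ i ∈ T, slab d r B i).Nonempty := by
  have hB0 : 0 < B := by linarith
  have hB1 : 1 ≤ B := by linarith
  have hTne : T.Nonempty := Finset.card_pos.1 (by omega)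
  obtain ⟨j, hjT, hjmax⟩ := T.exists_max_image id hTne
  set S := T.erase j with hSdef
  have hS : S.card = d := by rw [hSdef, Finset.card_erase_of_mem hjT, hcard]; rfl
  obtain ⟨m, hmS, hmmax⟩ := S.exists_max_image id (Finset.card_pos.1 (by omega))
  simp only [id] at hjmax hmmax
  have hmj : m < j :=
    lt_of_le_of_ne (hjmax m (Finset.mem_of_mem_erase hmS)) (Finset.ne_of_mem_erase hmS)
  have hjm : j ≤ m + r := by
    by_contra! h
    exact hgap ⟨j, hjT, fun i hi => by have := hmmax i hi; omega⟩
  have hlt : ∀ i ∈ S.erase m, i < m := fun i hi =>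
    lt_of_le_of_ne (hmmax i (Finset.mem_of_mem_erase hi)) (Finset.ne_of_mem_erase hi)
  obtain ⟨x, hx⟩ := exists_coeffEval_eq hS (fun i => B ^ (2 * i + 2 * r + 1))
  have hw := hCw S ((Finset.erase_subset _ _).trans hT) j (Finset.mem_range.1 (hT hjT))
  have hwm := one_le_lagrangeWeight_max hlt hmj
  have hw' : ∑ i ∈ S.erase m, |lagrangeWeight S i j| ≤ C :=
    (Finset.sum_le_sum_of_subset_of_nonneg (Finset.erase_subset _ _)
      fun _ _ _ => abs_nonneg _).trans hw
  set U := B ^ (2 * m + 2 * r + 1) with hU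
  have hUpos : 0 < U := by positivity
  have hupper := sum_mul_weight_le (S := S) (f := fun i => coeffEval d i x) (M := U) hUpos.le
    (fun i hi => by
      simp only [hx i hi]
      rw [abs_of_pos (by positivity)]
      exact pow_le_pow_right₀ hB1 (by have := hmmax i hi; omega)) hw
  rw [← coeffEval_eq_sum hS] at hupper
  have hlower := sum_mul_weight_le (S := S.erase m) (f := fun i => coeffEval d i x)
    (M := U / B ^ 2) (by positivity)
    (fun i hi => by
      simp only [hx i (Finset.mem_of_mem_erase hi)]
      rw [abs_of_pos (by positivity), le_div_iff₀ (by positivity), ← pow_add]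
      exact pow_le_pow_right₀ hB1 (by have := hlt i hi; omega)) hw'
  have hsum := coeffEval_eq_sum hS j x
  rw [← Finset.add_sum_erase _ _ hmS, hx m hmS, ← hU] at hsum
  refine ⟨x, ?_⟩
  simp only [slab, Set.mem_iInter, Set.mem_preimage, Set.mem_Icc]
  intro i hi
  by_cases hij : i = j
  · subst hij
    constructor
    · have h1 : B ^ (2 * i) * B ≤ U := by
        rw [← pow_succ]; exact pow_le_pow_right₀ hB1 (by omega)
      have h2 : U / B ^ 2 * C ≤ U - U / B := by
        have : U - U / B - U / B ^ 2 * C = U / B ^ 2 * (B ^ 2 - B - C) := by field_simp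
        have h3 : 0 ≤ U / B ^ 2 * (B ^ 2 - B - C) :=
          mul_nonneg (by positivity) (by nlinarith)
        linarith
      have h4 : B ^ (2 * i) ≤ U / B := (le_div_iff₀ hB0).2 h1
      have h5 := (abs_le.1 hlower).1
      nlinarith
    · refine ((le_abs_self _).trans hupper).trans ?_
      calc U * C ≤ U * B := mul_le_mul_of_nonneg_left (by linarith) hUpos.le
        _ = B ^ (2 * m + 2 * r + 1 + 1) := by rw [hU, ← pow_succ]
        _ ≤ _ := pow_le_pow_right₀ hB1 (by omega)
  · rw [hx i (Finset.mem_erase.2 ⟨hij, hi⟩)]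
    exact ⟨pow_le_pow_right₀ hB1 (by omega), le_rfl⟩

/-- There are convex sets in `ℝ^d` whose intersecting `(d+1)`-subfamilies are those
without a top gap. -/
lemma exists_convex_inter_nonempty_iff {d : ℕ} (hd : 0 < d) (r n : ℕ) :
    ∃ A : ℕ → Set (Fin d → ℝ), (∀ i, Convex ℝ (A i)) ∧
      ∀ T ⊆ Finset.range n, T.card = d + 1 → ((⋂ i ∈ T, A i).Nonempty ↔ ¬ TopGap r T) := by
  obtain ⟨C, hC, hCw⟩ := exists_sum_abs_lagrangeWeight_le n
  exact ⟨slab d r (C + 2), convex_slab d r _, fun T hT hcard =>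
    ⟨fun h hgap => not_nonempty_of_topGap hC le_rfl hCw hT hcard hgap h,
      nonempty_of_not_topGap hd hC le_rfl hCw hT hcard⟩⟩

/-- A set all of whose `(d+1)`-subsets have a top gap has a large maximum. -/
lemma exists_large_mem_of_forall_topGap {d r : ℕ} (hd : 0 < d) (t : ℕ) :
    ∀ S : Finset ℕ, S.card = d + t → (∀ T ⊆ S, T.card = d + 1 → TopGap r T) →
      ∃ j ∈ S, d + t * (r + 1) ≤ j + 1 := by
  induction t with
  | zero =>
    intro S hS _
    by_contra! h
    have hsub : S ⊆ Finset.range (d - 1) := fun i hi =>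
      Finset.mem_range.2 (by have := h i hi; omega)
    have := Finset.card_le_card hsub
    rw [Finset.card_range] at this
    omega
  | succ t ih =>
    intro S hS hgap
    obtain ⟨j, hjS, hjmax⟩ := S.exists_max_image id (Finset.card_pos.1 (by omega))
    simp only [id] at hjmax
    obtain ⟨m, hmS, hm⟩ := ih (S.erase j) (by rw [Finset.card_erase_of_mem hjS]; omega)
      fun T hT => hgap T (hT.trans (Finset.erase_subset _ _))
    obtain ⟨X, hmX, hXS, hX⟩ := Finset.exists_subsuperset_card_eq
      (Finset.singleton_subset_iff.2 hmS) (n := d) (by rw [Finset.card_singleton]; exact hd)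
      (by rw [Finset.card_erase_of_mem hjS]; omega)
    rw [Finset.singleton_subset_iff] at hmX
    have hjX : j ∉ X := fun h => Finset.notMem_erase j S (hXS h)
    obtain ⟨k, hk, hkgap⟩ := hgap (insert j X)
      (Finset.insert_subset hjS (hXS.trans (Finset.erase_subset _ _)))
      (by rw [Finset.card_insert_of_notMem hjX, hX])
    have hkj : k = j := by
      by_contra hne
      have h1 := hkgap j (Finset.mem_erase.2 ⟨Ne.symm hne, Finset.mem_insert_self _ _⟩)
      have h2 := hjmax k
        (Finset.mem_of_mem_erase (hXS ((Finset.mem_insert.1 hk).resolve_left hne)))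
      omega
    subst hkj
    have h1 := hkgap m (Finset.mem_erase.2
      ⟨Finset.ne_of_mem_erase hmS, Finset.mem_insert_of_mem hmX⟩)
    refine ⟨k, hjS, ?_⟩
    rw [add_mul]
    omega

/-- A set with more than `d + r` elements has a `(d+1)`-subset with a top gap. -/
lemma exists_topGap_of_lt_card {d r : ℕ} {S : Finset ℕ} (hS : d + r < S.card) :
    ∃ T ⊆ S, T.card = d + 1 ∧ TopGap r T := by
  obtain ⟨j, hjS, hjmax⟩ := S.exists_max_image id (Finset.card_pos.1 (by omega))
  simp only [id] at hjmax
  have hsub : S.filter (fun i => ¬ i + r < j) ⊆ Finset.Icc (j - r) j := fun i hi => by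
    rw [Finset.mem_filter] at hi
    have := hjmax i hi.1
    rw [Finset.mem_Icc]
    omega
  have h1 := Finset.card_le_card hsub
  rw [Nat.card_Icc] at h1
  have h2 := Finset.card_filter_add_card_filter_not (s := S) (fun i => i + r < j)
  obtain ⟨X, hXS, hX⟩ := Finset.exists_subset_card_eq
    (s := S.filter (fun i => i + r < j)) (n := d) (by omega)
  have hlt : ∀ i ∈ X, i + r < j := fun i hi => (Finset.mem_filter.1 (hXS hi)).2
  have hjX : j ∉ X := fun h => by have := hlt j h; omega
  refine ⟨insert j X, Finset.insert_subset hjS (hXS.trans (Finset.filter_subset _ _)),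
    by rw [Finset.card_insert_of_notMem hjX, hX], j, Finset.mem_insert_self _ _, ?_⟩
  rw [Finset.erase_insert hjX]
  exact hlt

lemma topGap_insert_iff {r n : ℕ} {S : Finset ℕ} (hS : S ⊆ Finset.range n) :
    TopGap r (insert n S) ↔ S ⊆ Finset.range (n - r) := by
  have hnS : n ∉ S := fun h => by simpa using hS h
  constructor
  · rintro ⟨j, hj, hgap⟩ i hi
    rcases Finset.mem_insert.1 hj with rfl | hj
    · rw [Finset.erase_insert hnS] at hgap
      have := hgap i hi
      exact Finset.mem_range.2 (by omega)
    · have h1 := Finset.mem_range.1 (hS hj)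
      have := hgap n (Finset.mem_erase.2 ⟨by omega, Finset.mem_insert_self _ _⟩)
      omega
  · intro h
    refine ⟨n, Finset.mem_insert_self _ _, ?_⟩
    rw [Finset.erase_insert hnS]
    intro i hi
    have := Finset.mem_range.1 (h hi)
    omega

open scoped Classical in
lemma card_filter_topGap {d : ℕ} (hd : 0 < d) (r n : ℕ) :
    ((Finset.powersetCard (d + 1) (Finset.range n)).filter (TopGap r)).card =
      (n - r).choose (d + 1) := by
  induction n with
  | zero => simp
  | succ n ih =>
    rw [Finset.range_add_one, Finset.powersetCard_succ_insert Finset.notMem_range_self,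
      Finset.filter_union, Finset.card_union_of_disjoint, ih]
    · have himage : ((Finset.powersetCard d (Finset.range n)).image (insert n)).filter
          (TopGap r) = (Finset.powersetCard d (Finset.range (n - r))).image (insert n) := by
        ext T
        simp only [Finset.mem_filter, Finset.mem_image, Finset.mem_powersetCard]
        constructor
        · rintro ⟨⟨S, ⟨hS, hcard⟩, rfl⟩, hgap⟩
          exact ⟨S, ⟨(topGap_insert_iff hS).1 hgap, hcard⟩, rfl⟩
        · rintro ⟨S, ⟨hS, hcard⟩, rfl⟩
          have hS' : S ⊆ Finset.range n :=
            hS.trans (Finset.range_subset_range.2 (Nat.sub_le _ _))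
          exact ⟨⟨S, ⟨hS', hcard⟩, rfl⟩,
            (topGap_insert_iff hS').2 hS⟩
      rw [himage, Finset.card_image_of_injOn, Finset.card_powersetCard, Finset.card_range]
      · rcases le_or_gt r n with h | h
        · rw [Nat.succ_sub h, Nat.choose_succ_succ, add_comm]
        · have h1 : n - r = 0 := by omega
          have h2 : n + 1 - r = 0 := by omega
          rw [h1, h2, Nat.choose_eq_zero_of_lt hd, add_zero]
      · intro S hS S' hS' h
        have hn : ∀ X ∈ Finset.powersetCard d (Finset.range (n - r)), n ∉ X := fun X hX hnX => by
          have := Finset.mem_range.1 ((Finset.mem_powersetCard.1 hX).1 hnX)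
          omega
        rw [← Finset.erase_insert (hn S hS), h, Finset.erase_insert (hn S' hS')]
    · refine Finset.disjoint_filter_filter (Finset.disjoint_left.2 fun T hT hT' => ?_)
      obtain ⟨S, -, rfl⟩ := Finset.mem_image.1 hT'
      simpa using (Finset.mem_powersetCard.1 hT).1 (Finset.mem_insert_self n S)

lemma map_val_subset_range {n : ℕ} (S : Finset (Fin n)) :
    S.map Fin.valEmbedding ⊆ Finset.range n := fun i hi => by
  obtain ⟨k, -, rfl⟩ := Finset.mem_map.1 hi
  exact Finset.mem_range.2 k.2

open scoped Classical in
/-- Extremal family for the fractional Helly theorem for convex sets in ℝ^d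
satisfying a `(p, d+1)`-condition. -/
theorem stmt4 (d r n : ℕ) (hd : 0 < d) (hr : 0 < r) (hn : d + r ≤ n) :
    ∃ A : Fin n → Set (Fin d → ℝ),
      (∀ i, Convex ℝ (A i)) ∧
      (∀ S : Finset (Fin n),
        (d : ℝ) + ((n : ℝ) - (d : ℝ)) / ((r : ℝ) + 1) < (S.card : ℝ) →
        ∃ T ⊆ S, T.card = d + 1 ∧ (⋂ i ∈ T, A i).Nonempty) ∧
      (∀ S : Finset (Fin n), (⋂ i ∈ S, A i).Nonempty → S.card ≤ d + r) ∧
      ((Finset.powersetCard (d + 1) (Finset.univ : Finset (Fin n))).filter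
          (fun S : Finset (Fin n) => (⋂ i ∈ S, A i).Nonempty)).card
        = n.choose (d + 1) - (n - r).choose (d + 1) := by
  obtain ⟨A, hconv, hA⟩ := exists_convex_inter_nonempty_iff hd r n
  have hA' : ∀ T : Finset (Fin n), T.card = d + 1 →
      ((⋂ i ∈ T, A i).Nonempty ↔ ¬ TopGap r (T.map Fin.valEmbedding)) := fun T hT => by
    rw [← hA _ (map_val_subset_range T) (by rwa [Finset.card_map])]
    simp
  refine ⟨fun i => A i, fun i => hconv i, fun S hS => ?_, fun S hS => ?_, ?_⟩
  · by_contra! h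
    have hnd : (d : ℝ) ≤ n := by exact_mod_cast (by omega : d ≤ n)
    have hdS : d ≤ S.card := by
      have : (d : ℝ) ≤ S.card := le_trans (le_add_of_nonneg_right
        (div_nonneg (by linarith) (by positivity))) hS.le
      exact_mod_cast this
    obtain ⟨t, ht⟩ := Nat.exists_eq_add_of_le hdS
    obtain ⟨j, hj, hjt⟩ := exists_large_mem_of_forall_topGap (r := r) hd t
      (S.map Fin.valEmbedding) (by rw [Finset.card_map, ht]) fun T hT hcard => by
        obtain ⟨X, hX, rfl⟩ := Finset.subset_map_iff.1 hT
        rw [Finset.card_map] at hcard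
        have := h X hX hcard
        by_contra hgap
        exact ((hA' X hcard).2 hgap).ne_empty this
    have hjn := Finset.mem_range.1 (map_val_subset_range S hj)
    have hle : d + t * (r + 1) ≤ n := by omega
    have hle' : (d : ℝ) + t * (r + 1) ≤ n := by exact_mod_cast hle
    rw [ht, Nat.cast_add, add_lt_add_iff_left, div_lt_iff₀ (by positivity)] at hS
    linarith
  · by_contra! h
    obtain ⟨T, hT, hcard, hgap⟩ := exists_topGap_of_lt_card (S := S.map Fin.valEmbedding)
      (r := r) (d := d) (by rwa [Finset.card_map])
    obtain ⟨X, hX, rfl⟩ := Finset.subset_map_iff.1 hT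
    rw [Finset.card_map] at hcard
    exact (hA' X hcard).1 (hS.mono (Set.biInter_subset_biInter_left hX)) hgap
  · have hcount : ((Finset.powersetCard (d + 1) (Finset.univ : Finset (Fin n))).filter
        (fun S => TopGap r (S.map Fin.valEmbedding))).card = (n - r).choose (d + 1) := by
      have hrange : Finset.range n = (Finset.univ : Finset (Fin n)).map Fin.valEmbedding := by
        rw [Fin.map_valEmbedding_univ, Nat.Iio_eq_range]
      rw [← card_filter_topGap hd r n, hrange, Finset.powersetCard_map, Finset.filter_map,
        Finset.card_map]
      rfl
    have htotal := Finset.card_filter_add_card_filter_not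
      (s := Finset.powersetCard (d + 1) (Finset.univ : Finset (Fin n)))
      (fun S => TopGap r (S.map Fin.valEmbedding))
    rw [hcount, Finset.card_powersetCard, Finset.card_univ, Fintype.card_fin] at htotal
    rw [Finset.filter_congr fun S hS => hA' S (Finset.mem_powersetCard.1 hS).2]
    omega
end

section
/- Let d, t, r, n be positive integers with n >= d + r and r > (t-1)d. Then there exists a family F of n sets from F_{t,d} satisfying all of the following: (1) every subfamily of F with at least d + (n - t(d-1))/(r - (t-1)d) sets contains d+1 members with a common point; (2) every intersecting subfamily of F has size at most d + r; (3) exactly g_d(n,t,r) of the (d+1)-element subfamilies of F are intersecting. -/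
open Finset in
/-- A Lagrange basis polynomial attached to geometric nodes `δ ^ b` is small at `δ ^ k` when `k`
exceeds all node indices and `b` is not the largest of them. -/
theorem abs_eval_basis_geometric_le {δ : ℝ} (hδ : 0 < δ) (hδ' : δ ≤ 1 / 2) {D : Finset ℕ}
    {b c k : ℕ} (hc : c ∈ D) (hmax : ∀ a ∈ D, a ≤ c) (hb : b ∈ D) (hbc : b ≠ c) (hk : c < k) :
    |(Lagrange.basis D (fun i => δ ^ i) b).eval (δ ^ k)| ≤ 2 ^ #D * δ := by
  have hδ1 : δ ≤ 1 := by linarith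
  have hstep : ∀ {i j : ℕ}, i < j → δ ^ j ≤ δ ^ i * δ := fun {i j} hij => by
    rw [← pow_succ]; exact pow_le_pow_of_le_one hδ.le hδ1 hij
  have hnum : ∀ j ∈ D, |δ ^ k - δ ^ j| ≤ δ ^ j := fun j hj => by
    have h1 := hstep ((hmax j hj).trans_lt hk)
    have h2 : 0 < δ ^ j := pow_pos hδ j
    have h3 : 0 < δ ^ k := pow_pos hδ k
    rw [abs_le]; constructor <;> nlinarith
  have hden : ∀ {i j : ℕ}, i < j → δ ^ i / 2 ≤ δ ^ i - δ ^ j := fun {i j} hij => by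
    have h1 := hstep hij
    have h2 : 0 < δ ^ i := pow_pos hδ i
    nlinarith
  have hsmall : ∀ j ∈ D, b < j → |(δ ^ b - δ ^ j)⁻¹ * (δ ^ k - δ ^ j)| ≤ 2 * δ := by
    intro j hj hbj
    have h0 : 0 < δ ^ b := pow_pos hδ b
    have h1 := hden hbj
    have h2 := hnum j hj
    have h3 := hstep hbj
    have h4 : 0 < δ ^ b - δ ^ j := by linarith
    rw [abs_mul, abs_inv, abs_of_pos h4, inv_mul_le_iff₀ h4]
    nlinarith
  have hle : ∀ j ∈ D.erase b, |(δ ^ b - δ ^ j)⁻¹ * (δ ^ k - δ ^ j)| ≤ 2 := fun j hj => by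
    rw [mem_erase] at hj
    rcases lt_or_gt_of_ne hj.1 with h | h
    · have h0 : 0 < δ ^ j := pow_pos hδ j
      have h1 := hden h
      have h2 := hnum j hj.2
      have h4 : 0 < δ ^ j - δ ^ b := by linarith
      rw [abs_mul, abs_inv, abs_sub_comm (δ ^ b), abs_of_pos h4, inv_mul_le_iff₀ h4]
      linarith
    · exact (hsmall j hj.2 h).trans (by linarith)
  have hcb : c ∈ D.erase b := mem_erase.2 ⟨hbc.symm, hc⟩
  have heval : (Lagrange.basis D (fun i => δ ^ i) b).eval (δ ^ k) =
      ∏ j ∈ D.erase b, ((δ ^ b - δ ^ j)⁻¹ * (δ ^ k - δ ^ j)) := by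
    simp [Lagrange.basis, Lagrange.basisDivisor, Polynomial.eval_prod]
  rw [heval, abs_prod, ← mul_prod_erase _ _ hcb]
  have hprod : ∏ j ∈ (D.erase b).erase c, |(δ ^ b - δ ^ j)⁻¹ * (δ ^ k - δ ^ j)|
      ≤ 2 ^ #((D.erase b).erase c) := by
    rw [← prod_const]
    exact prod_le_prod (fun _ _ => abs_nonneg _) fun j hj => hle j (mem_of_mem_erase hj)
  have hcard : #((D.erase b).erase c) + 1 ≤ #D := by
    rw [card_erase_add_one hcb]; exact card_le_card (erase_subset _ _)
  calc _ ≤ (2 * δ) * 2 ^ #((D.erase b).erase c) :=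
        mul_le_mul (hsmall c hc (lt_of_le_of_ne (hmax b hb) hbc)) hprod
          (prod_nonneg fun _ _ => abs_nonneg _) (by linarith)
    _ = 2 ^ (#((D.erase b).erase c) + 1) * δ := by ring
    _ ≤ 2 ^ #D * δ := by gcongr; norm_num

open Finset in
/-- A polynomial of degree less than `#D` that is bounded on the nodes `δ ^ b`, `b ∈ D`, is nearly
constant on the later nodes. -/
theorem abs_eval_geometric_sub_le {δ B : ℝ} (hδ : 0 < δ) (hδ' : δ ≤ 1 / 2) {D : Finset ℕ}
    {c k : ℕ} (hc : c ∈ D) (hmax : ∀ a ∈ D, a ≤ c) (hk : c < k) {p : Polynomial ℝ}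
    (hp : p.degree < #D)
    (hB : ∀ b ∈ D, |p.eval (δ ^ b) - p.eval (δ ^ c)| ≤ B) :
    |p.eval (δ ^ k) - p.eval (δ ^ c)| ≤ #D * (B * (2 ^ #D * δ)) := by
  have hinj : Set.InjOn (fun i : ℕ => δ ^ i) D := fun i _ j _ h =>
    (pow_right_strictAnti₀ hδ (by linarith)).injective h
  have hB0 : 0 ≤ B := (abs_nonneg _).trans (hB c hc)
  set q := p - Polynomial.C (p.eval (δ ^ c)) with hq
  have hqe : ∀ y, q.eval y = p.eval y - p.eval (δ ^ c) := fun y => by simp [hq]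
  have hqd : q.degree < #D := by
    refine (Polynomial.degree_sub_le _ _).trans_lt (max_lt hp ?_)
    refine Polynomial.degree_C_le.trans_lt ?_
    exact_mod_cast card_pos.2 ⟨c, hc⟩
  have hint := congrArg (Polynomial.eval (δ ^ k)) (Lagrange.eq_interpolate hinj hqd)
  rw [Lagrange.interpolate_apply, Polynomial.eval_finsetSum] at hint
  rw [← hqe, hint]
  refine (abs_sum_le_sum_abs _ _).trans ?_
  rw [← nsmul_eq_mul]
  refine sum_le_card_nsmul _ _ _ fun b hb => ?_
  rw [Polynomial.eval_mul, Polynomial.eval_C, hqe, abs_mul]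
  by_cases hbc : b = c
  · subst hbc; simp; positivity
  · exact mul_le_mul (hB b hb) (abs_eval_basis_geometric_le hδ hδ' hc hmax hb hbc hk)
      (abs_nonneg _) hB0

/-- All but fewer than `d` of the elements of `S` lie within distance `s` below any given element
of `S`. -/
def Clustered (d s : ℕ) (S : Finset ℕ) : Prop :=
  ∀ a ∈ S, (S.filter (fun b => b + s < a)).card < d

open Finset in
theorem exists_initial_subset_card_eq (S : Finset ℕ) {k : ℕ} (hk : k ≤ #S) :
    ∃ D ⊆ S, #D = k ∧ ∀ b ∈ D, ∀ a ∈ S \ D, b < a := by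
  induction k with
  | zero => exact ⟨∅, by simp⟩
  | succ k ih =>
    obtain ⟨D, hDS, hcard, hD⟩ := ih (by omega)
    have hne : (S \ D).Nonempty := by
      rw [← card_pos, card_sdiff_of_subset hDS]; omega
    have hm := min'_mem _ hne
    set m := (S \ D).min' hne with hmdef
    have hm' := mem_sdiff.1 hm
    refine ⟨insert m D, insert_subset hm'.1 hDS, by rw [card_insert_of_notMem hm'.2, hcard], ?_⟩
    intro b hb a ha
    simp only [mem_sdiff, mem_insert, not_or] at ha hb
    have ha' : a ∈ S \ D := mem_sdiff.2 ⟨ha.1, ha.2.2⟩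
    rcases hb with rfl | hb
    · exact lt_of_le_of_ne (min'_le _ _ ha') (Ne.symm ha.2.1)
    · exact hD b hb a ha'

open Finset in
theorem exists_convex_family_inter_nonempty_iff {d : ℕ} (hd : 0 < d) (s N : ℕ) :
    ∃ A : ℕ → Set (Fin d → ℝ), (∀ k, Convex ℝ (A k)) ∧
      ∀ S ⊆ range N, ((∃ x, ∀ k ∈ S, x ∈ A k) ↔ Clustered d s S) := by
  set B : ℝ := N + s + 1 with hB
  set M : ℝ := d * (B * 2 ^ d) with hM
  have hB0 : 0 < B := by positivity
  have hM0 : 0 < M := by positivity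
  set δ : ℝ := 1 / (2 + 4 * M) with hδdef
  have hδ : 0 < δ := by positivity
  have hδ' : δ ≤ 1 / 2 := by
    rw [hδdef]; exact one_div_le_one_div_of_le (by norm_num) (by linarith)
  have hMδ : d * (B * (2 ^ d * δ)) ≤ 1 / 4 := by
    have : d * (B * (2 ^ d * δ)) = M / (2 + 4 * M) := by rw [hM, hδdef]; ring
    rw [this, div_le_iff₀ (by positivity)]; linarith
  have hinj : Function.Injective (fun i : ℕ => δ ^ i) :=
    (pow_right_strictAnti₀ hδ (by linarith)).injective
  let f : ℕ → (Fin d → ℝ) → ℝ := fun k x => ∑ l : Fin d, x l * (δ ^ k) ^ (l : ℕ)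
  have hlin : ∀ k, IsLinearMap ℝ (f k) := fun k =>
    ⟨fun x y => by simp [f, add_mul, sum_add_distrib],
      fun c x => by simp [f, mul_sum, mul_assoc]⟩
  have hnear : ∀ (D : Finset ℕ) (c k : ℕ) (p : Polynomial ℝ), #D = d → c ∈ D →
      (∀ a ∈ D, a ≤ c) → c < k → p.degree < d →
      (∀ b ∈ D, |p.eval (δ ^ b) - p.eval (δ ^ c)| ≤ B) →
      |p.eval (δ ^ k) - p.eval (δ ^ c)| ≤ 1 / 4 := by
    rintro D c k p rfl hc hmax hk hp hb
    exact (abs_eval_geometric_sub_le hδ hδ' hc hmax hk hp hb).trans hMδ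
  refine ⟨fun k => {x | (k : ℝ) ≤ f k x ∧ f k x ≤ k + s + 1 / 2}, fun k => ?_, fun S hS => ?_⟩
  · exact (convex_halfSpace_ge (hlin k) _).inter (convex_halfSpace_le (hlin k) _)
  have hpoly : (∃ x, ∀ k ∈ S, x ∈ {x | (k : ℝ) ≤ f k x ∧ f k x ≤ k + s + 1 / 2}) ↔
      ∃ p : Polynomial ℝ, p.degree < d ∧
        ∀ k ∈ S, (k : ℝ) ≤ p.eval (δ ^ k) ∧ p.eval (δ ^ k) ≤ k + s + 1 / 2 := by
    constructor
    · rintro ⟨x, hx⟩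
      refine ⟨∑ l : Fin d, Polynomial.C (x l) * Polynomial.X ^ (l : ℕ),
        Polynomial.degree_sum_fin_lt _, fun k hk => ?_⟩
      simpa [Polynomial.eval_finsetSum, f] using hx k hk
    · rintro ⟨p, hp, h⟩
      refine ⟨fun l => p.coeff l, fun k hk => ?_⟩
      have hnat : p.natDegree < d := by
        rcases eq_or_ne p 0 with rfl | h0
        · simpa using hd
        · exact (Polynomial.natDegree_lt_iff_degree_lt h0).2 hp
      have := h k hk
      rw [Polynomial.eval_eq_sum_range' hnat, ← Fin.sum_univ_eq_sum_range
        (fun i => p.coeff i * (δ ^ k) ^ i)] at this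
      exact this
  have hlt : ∀ k ∈ S, (k : ℝ) + 1 ≤ N := fun k hk => by
    exact_mod_cast mem_range.1 (hS hk)
  rw [hpoly]
  constructor
  · rintro ⟨p, hp, h⟩ a ha
    by_contra! hcon
    obtain ⟨D, hDsub, hDcard⟩ := exists_subset_card_eq hcon
    have hne : D.Nonempty := card_pos.1 (by omega)
    have hmem : ∀ b ∈ D, b ∈ S ∧ b + s < a := fun b hb => by simpa using hDsub hb
    have hc := max'_mem D hne
    set c := D.max' hne
    have hca := (hmem c hc).2
    have hcS := h c (hmem c hc).1
    have hab := hnear D c a p hDcard hc (fun b hb => le_max' _ _ hb) (by omega) hp (by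
      intro b hb
      have h1 := h b (hmem b hb).1
      have h2 := hlt b (hmem b hb).1
      have h3 := hlt c (hmem c hc).1
      have h4 : (0 : ℝ) ≤ b := b.cast_nonneg
      have h5 : (0 : ℝ) ≤ c := c.cast_nonneg
      rw [abs_le]; constructor <;> linarith)
    have h6 : (c : ℝ) + s + 1 ≤ a := by exact_mod_cast hca
    have := (abs_le.1 hab).2
    linarith [(h a ha).1]
  · intro hgood
    rcases le_or_gt #S d with hSd | hSd
    · refine ⟨Lagrange.interpolate S (fun i => δ ^ i) (fun k => (k : ℝ)),
        (Lagrange.degree_interpolate_lt _ hinj.injOn).trans_le (by exact_mod_cast hSd),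
        fun k hk => ?_⟩
      rw [Lagrange.eval_interpolate_at_node (v := fun i => δ ^ i) _ hinj.injOn hk]
      have : (0 : ℝ) ≤ s := s.cast_nonneg
      constructor <;> linarith
    · obtain ⟨D, hDS, hDcard, hD⟩ := exists_initial_subset_card_eq S hSd.le
      have hne : D.Nonempty := card_pos.1 (by omega)
      have hc := max'_mem D hne
      set c := D.max' hne
      set v : ℕ → ℝ := fun k => if k = c then c + s + 1 / 4 else k with hv
      set p := Lagrange.interpolate D (fun i => δ ^ i) v with hp
      have hpd : p.degree < d := by
        rw [← hDcard]; exact Lagrange.degree_interpolate_lt _ hinj.injOn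
      have hpe : ∀ k ∈ D, p.eval (δ ^ k) = v k := fun k hk =>
        Lagrange.eval_interpolate_at_node (v := fun i => δ ^ i) _ hinj.injOn hk
      have hs0 : (0 : ℝ) ≤ s := s.cast_nonneg
      refine ⟨p, hpd, fun k hk => ?_⟩
      by_cases hkD : k ∈ D
      · rw [hpe k hkD, hv]
        dsimp only
        split_ifs with hkc
        · subst hkc; constructor <;> linarith
        · constructor <;> linarith
      · have hkD' := mem_sdiff.2 ⟨hk, hkD⟩
        have hck := hD c hc k hkD'
        have hks : k ≤ c + s := by
          by_contra! hcon
          refine (hgood k hk).not_ge (hDcard ▸ card_le_card fun b hb => ?_)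
          have := le_max' D b hb
          exact mem_filter.2 ⟨hDS hb, by omega⟩
        have hab := hnear D c k p hDcard hc (fun b hb => le_max' _ _ hb) hck hpd (by
          intro b hb
          rw [hpe b hb, hpe c hc, hv]
          have h2 := hlt b (hDS hb)
          have h3 := hlt c (hDS hc)
          have h4 : (0 : ℝ) ≤ b := b.cast_nonneg
          have h5 : (0 : ℝ) ≤ c := c.cast_nonneg
          dsimp only
          rw [if_pos rfl, abs_le]
          split_ifs with hbc
          · subst hbc; constructor <;> linarith
          · constructor <;> linarith)
        rw [hpe c hc, hv] at hab
        simp only [if_true] at hab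
        have hab' := abs_le.1 hab
        have h1 : (k : ℝ) ≤ c + s := by exact_mod_cast hks
        have h2 : (c : ℝ) + 1 ≤ k := by exact_mod_cast hck
        constructor <;> linarith

open Finset in
theorem clustered_of_card_le {d s : ℕ} {S : Finset ℕ} (h : #S ≤ d) : Clustered d s S := by
  intro a ha
  refine (card_lt_card ((filter_subset _ _).ssubset_of_ne fun heq => ?_)).trans_le h
  have := (mem_filter.1 (heq ▸ ha)).2
  omega

open Finset in
theorem Clustered.card_le {d s : ℕ} {S : Finset ℕ} (h : Clustered d s S) : #S ≤ d + s := by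
  rcases S.eq_empty_or_nonempty with rfl | hne
  · simp
  have ha := max'_mem S hne
  set a := S.max' hne
  have h1 := h a ha
  have h2 : #{b ∈ S | ¬ b + s < a} ≤ s + 1 := by
    have : {b ∈ S | ¬ b + s < a} ⊆ Icc (a - s) a := fun b hb => by
      have h3 := mem_filter.1 hb
      have h4 := le_max' S b h3.1
      exact mem_Icc.2 ⟨by omega, h4⟩
    refine (card_le_card this).trans ?_
    rw [Nat.card_Icc]; omega
  have := card_filter_add_card_filter_not (s := S) (fun b => b + s < a)
  omega

open Finset in
theorem not_clustered_iff {d s : ℕ} {T : Finset ℕ} (hT : #T = d + 1) :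
    ¬ Clustered d s T ↔ ∃ a ∈ T, ∀ b ∈ T, b ≠ a → b + s < a := by
  unfold Clustered
  push Not
  refine exists_congr fun a => and_congr_right fun ha => ?_
  have hsub : {b ∈ T | b + s < a} ⊆ T.erase a := fun b hb => by
    have := mem_filter.1 hb
    exact mem_erase.2 ⟨by omega, this.1⟩
  have hcard : #(T.erase a) = d := by rw [card_erase_of_mem ha, hT]; rfl
  constructor
  · intro h b hb hne
    have := eq_of_subset_of_card_le hsub (by omega)
    have hmem : b ∈ T.erase a := mem_erase.2 ⟨hne, hb⟩
    rw [← this] at hmem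
    exact (mem_filter.1 hmem).2
  · intro h
    rw [← hcard]
    refine card_le_card fun b hb => ?_
    have := mem_erase.1 hb
    exact mem_filter.2 ⟨this.2, h b this.2 this.1⟩

open Finset in
open scoped Classical in
theorem card_filter_not_clustered {d : ℕ} (hd : 0 < d) (s n : ℕ) :
    #{T ∈ powersetCard (d + 1) (range (n + s)) | ¬ Clustered d s T} = n.choose (d + 1) := by
  induction n with
  | zero =>
    rw [zero_add, Nat.choose_zero_succ, card_eq_zero, filter_eq_empty_iff]
    intro T hT hnot
    rw [mem_powersetCard] at hT
    refine hnot fun a ha => ?_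
    have hlt := mem_range.1 (hT.1 ha)
    rw [filter_eq_empty_iff.2 fun b _ => by omega]
    simpa using hd
  | succ n ih =>
    have hrange : range (n + 1 + s) = insert (n + s) (range (n + s)) := by
      rw [← range_add_one]; congr 1; omega
    have hnot : n + s ∉ range (n + s) := by simp
    have himage : ((powersetCard d (range (n + s))).image (insert (n + s))).filter
        (fun T => ¬ Clustered d s T) = (powersetCard d (range n)).image (insert (n + s)) := by
      ext T
      simp only [mem_filter, mem_image, mem_powersetCard]
      constructor
      · rintro ⟨⟨U, ⟨hU, hUc⟩, rfl⟩, hT⟩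
        have hnU : n + s ∉ U := fun h => hnot (hU h)
        rw [not_clustered_iff (by rw [card_insert_of_notMem hnU, hUc])] at hT
        obtain ⟨a, ha, hT⟩ := hT
        refine ⟨U, ⟨fun b hb => ?_, hUc⟩, rfl⟩
        have hbn := mem_range.1 (hU hb)
        have ha' : a = n + s := by
          by_contra hne
          have h1 := hT (n + s) (mem_insert_self _ _) (Ne.symm hne)
          have h2 := mem_range.1 (hU (mem_of_mem_insert_of_ne ha hne))
          omega
        have := hT b (mem_insert_of_mem hb) (by omega)
        exact mem_range.2 (by omega)
      · rintro ⟨U, ⟨hU, hUc⟩, rfl⟩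
        have hU' : U ⊆ range (n + s) := hU.trans (range_mono (by omega))
        have hnU : n + s ∉ U := fun h => hnot (hU' h)
        refine ⟨⟨U, ⟨hU', hUc⟩, rfl⟩, ?_⟩
        rw [not_clustered_iff (by rw [card_insert_of_notMem hnU, hUc])]
        refine ⟨n + s, mem_insert_self _ _, fun b hb hne => ?_⟩
        have := mem_range.1 (hU (mem_of_mem_insert_of_ne hb hne))
        omega
    rw [hrange, powersetCard_succ_insert hnot, filter_union, card_union_of_disjoint, ih, himage,
      card_image_of_injOn, card_powersetCard, card_range, Nat.choose_succ_succ, add_comm]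
    · intro U hU V hV h
      have hmem : ∀ W ∈ powersetCard d (range n), n + s ∉ W := fun W hW hin => by
        have := mem_range.1 ((mem_powersetCard.1 hW).1 hin)
        omega
      rw [← erase_insert (hmem U hU), ← erase_insert (hmem V hV)]
      exact congrArg (fun W => W.erase (n + s)) h
    · refine disjoint_filter_filter (disjoint_left.2 fun T hT hT' => ?_)
      obtain ⟨U, -, rfl⟩ := mem_image.1 hT'
      exact hnot ((mem_powersetCard.1 hT).1 (mem_insert_self _ _))

open Finset in
/-- A set of natural numbers below `N` with no clustered subset of size `d + 1` is sparse. -/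
theorem card_sub_mul_le_of_forall_not_clustered {d s N : ℕ} (hd : 0 < d) {S : Finset ℕ}
    (hS : S ⊆ range N) (hcard : d ≤ #S)
    (h : ∀ T ⊆ S, #T = d + 1 → ¬ Clustered d s T) : (#S - d) * (s + 1) + d ≤ N := by
  obtain ⟨E, hES, hEcard, hE⟩ := exists_initial_subset_card_eq S (k := d - 1) (by omega)
  have hlow : ∀ a ∈ S \ E, d - 1 ≤ a := fun a ha => by
    rw [← hEcard, ← card_range a]
    exact card_le_card fun b hb => mem_range.2 (hE b hb a ha)
  have hgap : ∀ a ∈ S \ E, ∀ b ∈ S \ E, a < b → a + s < b := by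
    intro a ha b hb hab
    have ha' := mem_sdiff.1 ha
    have hb' := mem_sdiff.1 hb
    have hbE : b ∉ insert a E := by simp [hb'.2, hab.ne']
    have hT : #(insert b (insert a E)) = d + 1 := by
      rw [card_insert_of_notMem hbE, card_insert_of_notMem ha'.2]; omega
    have hsub : insert b (insert a E) ⊆ S :=
      insert_subset hb'.1 (insert_subset ha'.1 hES)
    obtain ⟨x, hx, hx'⟩ := (not_clustered_iff hT).1 (h _ hsub hT)
    have hxb : x = b := by
      by_contra hne
      have h1 := hx' b (by simp) (Ne.symm hne)
      rcases mem_insert.1 (mem_of_mem_insert_of_ne hx hne) with rfl | hxE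
      · omega
      · have := hE x hxE b hb
        omega
    subst hxb
    exact hx' a (by simp) hab.ne
  have hdN : d ≤ N := by simpa using hcard.trans (card_le_card hS)
  have hcardR : #(S \ E) = #S - d + 1 := by
    rw [card_sdiff_of_subset hES]; omega
  have hinj : Set.InjOn (fun a => (a - (d - 1)) / (s + 1)) (S \ E : Finset ℕ) := by
    have key : ∀ a ∈ S \ E, ∀ b ∈ S \ E, a < b →
        (a - (d - 1)) / (s + 1) ≠ (b - (d - 1)) / (s + 1) := by
      intro a ha b hb hab
      have h1 := hgap a ha b hb hab
      have h2 := hlow a ha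
      have h3 : (a - (d - 1)) / (s + 1) + 1 ≤ (b - (d - 1)) / (s + 1) := by
        rw [← Nat.add_div_right _ (Nat.succ_pos s)]
        exact Nat.div_le_div_right (by omega)
      omega
    intro a ha b hb hab
    rcases lt_trichotomy a b with hlt | heq | hlt
    · exact absurd hab (key a ha b hb hlt)
    · exact heq
    · exact absurd hab.symm (key b hb a ha hlt)
  have hmaps : Set.MapsTo (fun a => (a - (d - 1)) / (s + 1)) (S \ E : Finset ℕ)
      (range ((N - d) / (s + 1) + 1) : Finset ℕ) := by
    intro a ha
    have h1 := mem_range.1 (hS (mem_sdiff.1 ha).1)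
    exact mem_coe.2 (mem_range.2 (Nat.lt_succ_of_le (Nat.div_le_div_right (by omega))))
  have hle := card_le_card_of_injOn _ hmaps hinj
  rw [hcardR, card_range] at hle
  have := (Nat.mul_le_mul_right (s + 1) (Nat.le_of_succ_le_succ hle)).trans (Nat.div_mul_le_self _ _)
  omega

open Finset in
/-- Minimizers of `∑ i, C(f i, d+1)` with fixed sum are balanced at their large entries. -/
theorem mul_le_of_sum_choose_minimal {d t M : ℕ} (hd : 0 < d) {f : Fin t → ℕ} (hf : ∑ i, f i = M)
    (hmin : ∀ f' : Fin t → ℕ, ∑ i, f' i = M →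
      ∑ i, (f i).choose (d + 1) ≤ ∑ i, (f' i).choose (d + 1))
    {j : Fin t} (hj : d + 1 ≤ f j) : t * f j + 1 ≤ M + t := by
  have hbal : ∀ i, f j ≤ f i + 1 := by
    intro i
    by_contra! hlt
    have hij : i ≠ j := by rintro rfl; omega
    set f' := Function.update (Function.update f i (f i + 1)) j (f j - 1) with hf'
    have hsplit : ∀ g : Fin t → ℕ, ∑ l, g l = g j + (g i + ∑ l ∈ (univ.erase j).erase i, g l) := by
      intro g
      rw [add_sum_erase _ _ (mem_erase.2 ⟨hij, mem_univ i⟩), add_sum_erase _ _ (mem_univ j)]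
    have hj' : f' j = f j - 1 := by simp [hf']
    have hi' : f' i = f i + 1 := by simp [hf', hij]
    have hrest : ∀ l ∈ (univ.erase j).erase i, f' l = f l := fun l hl => by
      have h1 := mem_erase.1 hl
      have h2 := mem_erase.1 h1.2
      simp [hf', h1.1, h2.1]
    have hsum : ∑ l, f' l = M := by
      rw [← hf, hsplit f, hsplit f', hj', hi', sum_congr rfl hrest]
      have hpair : f j - 1 + (f i + 1) = f j + f i := by omega
      exact (add_assoc _ _ _).symm.trans ((congrArg (· + _) hpair).trans (add_assoc _ _ _))
    have hle := hmin f' hsum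
    rw [hsplit (fun l => (f l).choose (d + 1)), hsplit (fun l => (f' l).choose (d + 1)), hj', hi',
      sum_congr (f := fun l => (f' l).choose (d + 1)) (g := fun l => (f l).choose (d + 1)) rfl
        fun l hl => by rw [hrest l hl]] at hle
    obtain ⟨m, hm⟩ : ∃ m, f j = m + 1 := ⟨f j - 1, by omega⟩
    rw [hm, Nat.add_sub_cancel, Nat.choose_succ_succ' m, Nat.choose_succ_succ' (f i)] at hle
    have hlt' : (f i).choose d < m.choose d := by
      obtain ⟨m', rfl⟩ : ∃ m', m = m' + 1 := ⟨m - 1, by omega⟩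
      obtain ⟨d', rfl⟩ : ∃ d', d = d' + 1 := ⟨d - 1, by omega⟩
      have h1 : (f i).choose (d' + 1) ≤ m'.choose (d' + 1) := Nat.choose_le_choose _ (by omega)
      have h2 : 0 < m'.choose d' := Nat.choose_pos (by omega)
      rw [Nat.choose_succ_succ m']
      exact (h1.trans_lt (Nat.lt_add_of_pos_left h2))
    omega
  have hsum : ∑ i, (f j + (if i = j then 1 else 0)) ≤ ∑ i, (f i + 1) :=
    sum_le_sum fun i _ => by
      split_ifs with h
      · rw [h]
      · exact hbal i
  simpa [sum_add_distrib, hf] using hsum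

open Finset in
theorem exists_balanced (s : ℕ) {t : ℕ} (ht : 0 < t) :
    ∃ σ : Fin t → ℕ, ∑ j, σ j = s ∧ ∀ j, s + 1 ≤ t * (σ j + 1) := by
  refine ⟨fun j => s / t + if (j : ℕ) < s % t then 1 else 0, ?_, fun j => ?_⟩
  · have hlt := Nat.mod_lt s ht
    rw [sum_add_distrib, Fin.sum_univ_eq_sum_range (fun j => if j < s % t then 1 else 0),
      ← card_filter]
    have : {j ∈ range t | j < s % t} = range (s % t) := by
      ext j; simp only [mem_filter, mem_range]; omega
    rw [this, card_range]
    simpa using Nat.div_add_mod s t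
  · have h1 := Nat.div_add_mod s t
    have h2 := Nat.mod_lt s ht
    have h3 : t * (s / t + 1) ≤ t * (s / t + (if (j : ℕ) < s % t then 1 else 0) + 1) :=
      Nat.mul_le_mul_left _ (by omega)
    refine le_trans ?_ h3
    rw [mul_add]
    omega

open Finset in
/-- The labels `k i` of the elements `i ∈ S` having colour `c i = j`. -/
def colourLabels {ι : Type*} {t : ℕ} (c : ι → Fin t) (k : ι → ℕ) (j : Fin t) (S : Finset ι) :
    Finset ℕ :=
  {i ∈ S | c i = j}.image k

section Colouring

variable {ι : Type*} {t : ℕ} {c : ι → Fin t} {k : ι → ℕ}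

open Finset

theorem card_colourLabels (hinj : ∀ i i', c i = c i' → k i = k i' → i = i') (j : Fin t)
    (S : Finset ι) : #(colourLabels c k j S) = #{i ∈ S | c i = j} := by
  refine card_image_of_injOn fun i hi i' hi' h => hinj i i' ?_ h
  rw [(mem_filter.1 hi).2, (mem_filter.1 hi').2]

theorem sum_card_colourLabels (hinj : ∀ i i', c i = c i' → k i = k i' → i = i')
    (S : Finset ι) : ∑ j, #(colourLabels c k j S) = #S := by
  simp_rw [card_colourLabels hinj]
  exact (card_eq_sum_card_fiberwise fun i _ => mem_coe.2 (mem_univ (c i))).symm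

theorem colour_eq_of_not_clustered {d s : ℕ} {j : Fin t}
    (hinj : ∀ i i', c i = c i' → k i = k i' → i = i') {T : Finset ι} (hT : #T = d + 1)
    (h : ¬ Clustered d s (colourLabels c k j T)) : ∀ i ∈ T, c i = j := by
  have hlt : d < #{i ∈ T | c i = j} := by
    rw [← card_colourLabels hinj]
    by_contra! hle
    exact h (clustered_of_card_le hle)
  have := eq_of_subset_of_card_le (filter_subset (fun i => c i = j) T) (by omega)
  exact filter_eq_self.1 this

theorem colourLabels_eq_empty {j j' : Fin t} (hjj : j' ≠ j) {T : Finset ι}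
    (hT : ∀ i ∈ T, c i = j) : colourLabels c k j' T = ∅ := by
  rw [colourLabels, filter_eq_empty_iff.2 fun i hi h => hjj (h.symm.trans (hT i hi)), image_empty]

theorem colourLabels_filter_mem {j : Fin t} {S : Finset ι} {U : Finset ℕ}
    (hU : U ⊆ colourLabels c k j S) :
    colourLabels c k j {i ∈ S | k i ∈ U} = U := by
  ext m
  simp only [colourLabels, mem_image, mem_filter]
  constructor
  · rintro ⟨i, ⟨⟨-, h⟩, -⟩, rfl⟩
    exact h
  · intro hm
    obtain ⟨i, hi, rfl⟩ := mem_image.1 (hU hm)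
    exact ⟨i, ⟨⟨(mem_filter.1 hi).1, hm⟩, (mem_filter.1 hi).2⟩, rfl⟩

open scoped Classical in
theorem card_filter_exists_not_clustered [Fintype ι] {d : ℕ} {N : Fin t → ℕ} {σ : Fin t → ℕ}
    (hinj : ∀ i i', c i = c i' → k i = k i' → i = i') (hlt : ∀ i, k i < N (c i))
    (hsurj : ∀ j, ∀ m < N j, ∃ i, c i = j ∧ k i = m) :
    #{T ∈ powersetCard (d + 1) (univ : Finset ι) |
        ¬ ∀ j, Clustered d (σ j) (colourLabels c k j T)} =
      ∑ j, #{U ∈ powersetCard (d + 1) (range (N j)) | ¬ Clustered d (σ j) U} := by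
  have hunion : {T ∈ powersetCard (d + 1) (univ : Finset ι) |
        ¬ ∀ j, Clustered d (σ j) (colourLabels c k j T)} =
      univ.biUnion fun j => {T ∈ powersetCard (d + 1) (univ : Finset ι) |
        ¬ Clustered d (σ j) (colourLabels c k j T)} := by
    ext T
    simp
  rw [hunion, card_biUnion]
  · refine sum_congr rfl fun j _ => ?_
    refine card_bij (fun T _ => colourLabels c k j T) ?_ ?_ ?_
    · intro T hT
      rw [mem_filter, mem_powersetCard] at hT
      have hcol := colour_eq_of_not_clustered hinj hT.1.2 hT.2
      rw [mem_filter, mem_powersetCard, card_colourLabels hinj, filter_true_of_mem hcol]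
      refine ⟨⟨fun m hm => ?_, hT.1.2⟩, hT.2⟩
      obtain ⟨i, hi, rfl⟩ := mem_image.1 hm
      rw [mem_range, ← (mem_filter.1 hi).2]
      exact hlt i
    · have key : ∀ T ∈ powersetCard (d + 1) (univ : Finset ι), ∀ T' : Finset ι,
          ¬ Clustered d (σ j) (colourLabels c k j T) →
          colourLabels c k j T = colourLabels c k j T' → T ⊆ T' := by
        intro T hT T' hnot h i hi
        have hci := colour_eq_of_not_clustered hinj (mem_powersetCard.1 hT).2 hnot i hi
        have hmem : k i ∈ colourLabels c k j T' :=
          h ▸ mem_image_of_mem _ (mem_filter.2 ⟨hi, hci⟩)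
        obtain ⟨i', hi', hk⟩ := mem_image.1 hmem
        have hi'' := mem_filter.1 hi'
        rw [hinj i i' (hci.trans hi''.2.symm) hk.symm]
        exact hi''.1
      intro T hT T' hT' h
      have h1 := mem_filter.1 hT
      have h2 := mem_filter.1 hT'
      exact (key T h1.1 T' h1.2 h).antisymm (key T' h2.1 T h2.2 h.symm)
    · intro U hU
      rw [mem_filter, mem_powersetCard] at hU
      have heq := colourLabels_filter_mem (c := c) (k := k) (j := j) (U := U)
          (S := {i ∈ (univ : Finset ι) | c i = j}) fun m hm => by
        obtain ⟨i, hi, rfl⟩ := hsurj j m (mem_range.1 (hU.1.1 hm))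
        exact mem_image_of_mem _ (by simpa using hi)
      refine ⟨_, ?_, heq⟩
      rw [mem_filter, mem_powersetCard, heq]
      refine ⟨⟨subset_univ _, ?_⟩, hU.2⟩
      rw [← hU.1.2, ← heq, card_colourLabels hinj, heq]
      congr 1
      ext i
      simp only [mem_filter]
      tauto
  · intro j _ j' _ hjj
    refine disjoint_left.2 fun T hT hT' => ?_
    rw [mem_filter, mem_powersetCard] at hT hT'
    obtain ⟨i, hi⟩ : T.Nonempty := card_pos.1 (by omega)
    exact hjj ((colour_eq_of_not_clustered hinj hT.1.2 hT.2 i hi).symm.trans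
      (colour_eq_of_not_clustered hinj hT'.1.2 hT'.2 i hi))

/-- If no `(d + 1)`-subset of `S` is clustered in every colour, then `S` is monochromatic and
sparse. -/
theorem exists_card_sub_mul_le {d : ℕ} (hd : 0 < d) {N : Fin t → ℕ} {σ : Fin t → ℕ}
    (hinj : ∀ i i', c i = c i' → k i = k i' → i = i') (hlt : ∀ i, k i < N (c i))
    {S : Finset ι} (hS : d + 1 ≤ #S)
    (h : ∀ T ⊆ S, #T = d + 1 → ¬ ∀ j, Clustered d (σ j) (colourLabels c k j T)) :
    ∃ j, (#S - d) * (σ j + 1) + d ≤ N j := by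
  classical
  obtain ⟨i₀, hi₀⟩ : S.Nonempty := card_pos.1 (by omega)
  have hcol : ∀ i ∈ S, c i = c i₀ := by
    intro i hi
    by_contra hne
    have hpair : #{i₀, i} ≤ d + 1 := card_le_two.trans (by omega)
    obtain ⟨T, hTsub, hTS, hT⟩ := exists_subsuperset_card_eq
      (insert_subset hi₀ (singleton_subset_iff.2 hi)) hpair hS
    refine h T hTS hT fun j => ?_
    by_contra hnot
    have hmono := colour_eq_of_not_clustered hinj hT hnot
    exact hne ((hmono i (hTsub (by simp))).trans (hmono i₀ (hTsub (by simp))).symm)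
  have hcard : #(colourLabels c k (c i₀) S) = #S := by
    rw [card_colourLabels hinj, filter_true_of_mem hcol]
  refine ⟨c i₀, ?_⟩
  rw [← hcard]
  refine card_sub_mul_le_of_forall_not_clustered hd (fun m hm => ?_) (by omega) ?_
  · obtain ⟨i, hi, rfl⟩ := mem_image.1 hm
    rw [mem_range, ← (mem_filter.1 hi).2]
    exact hlt i
  · intro U hU hUcard hclust
    have heq := colourLabels_filter_mem hU
    have hsub : {i ∈ S | k i ∈ U} ⊆ S := filter_subset _ _
    have hcol' : ∀ i ∈ {i ∈ S | k i ∈ U}, c i = c i₀ := fun i hi => hcol i (hsub hi)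
    refine h _ hsub ?_ fun j => ?_
    · have hcardU := congrArg card heq
      rwa [card_colourLabels hinj, filter_true_of_mem hcol', hUcard] at hcardU
    · by_cases hj : j = c i₀
      · subst hj
        rwa [heq]
      · rw [colourLabels_eq_empty hj hcol']
        exact clustered_of_card_le (by simp)

end Colouring

theorem exists_colouring {t n : ℕ} (N : Fin t → ℕ) (hN : ∑ j, N j = n) :
    ∃ (c : Fin n → Fin t) (k : Fin n → ℕ), (∀ i i', c i = c i' → k i = k i' → i = i') ∧
      (∀ i, k i < N (c i)) ∧ ∀ j, ∀ m < N j, ∃ i, c i = j ∧ k i = m := by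
  subst hN
  let e := (finSigmaFinEquiv (n := N)).symm
  refine ⟨fun i => (e i).1, fun i => (e i).2, fun i i' h h' => ?_, fun i => (e i).2.2,
    fun j m hm => ⟨e.symm ⟨j, m, hm⟩, by simp, by dsimp only; rw [e.apply_symm_apply]⟩⟩
  refine e.injective (Sigma.ext h ?_)
  exact (Fin.heq_ext_iff (congrArg N h)).2 h'

open scoped Classical in
/-- Extremal family for the fractional Helly theorem for Cartesian products of
convex sets, satisfying a `(p, d+1)`-condition. -/
theorem stmt5 (d t r n : ℕ) (hd : 0 < d) (ht : 0 < t) (hr : 0 < r) (hn : d + r ≤ n)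
    (hrt : (t - 1) * d < r) :
    ∃ F : Fin n → Set (Fin t → Fin d → ℝ),
      (∀ i, IsProdOfConvex t d (F i)) ∧
      (∀ S : Finset (Fin n),
        (d : ℝ) + ((n : ℝ) - (t : ℝ) * ((d : ℝ) - 1)) / ((r : ℝ) - ((t : ℝ) - 1) * (d : ℝ))
          ≤ (S.card : ℝ) →
        ∃ T ⊆ S, T.card = d + 1 ∧ (⋂ i ∈ T, F i).Nonempty) ∧
      (∀ S : Finset (Fin n), (⋂ i ∈ S, F i).Nonempty → S.card ≤ d + r) ∧
      ((Finset.powersetCard (d + 1) (Finset.univ : Finset (Fin n))).filter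
          (fun S : Finset (Fin n) => (⋂ i ∈ S, F i).Nonempty)).card = gFun d n t r := by
  classical
  obtain ⟨f, hfsum, hfmin⟩ := Nat.sInf_mem (s := {m : ℕ | ∃ f : Fin t → ℕ,
      (∑ i, f i) = n - r + (t - 1) * d ∧ m = ∑ i, (f i).choose (d + 1)})
    ⟨_, fun j => if j = ⟨0, ht⟩ then n - r + (t - 1) * d else 0, by simp, rfl⟩
  have hmin : ∀ f' : Fin t → ℕ, ∑ i, f' i = n - r + (t - 1) * d →
      ∑ i, (f i).choose (d + 1) ≤ ∑ i, (f' i).choose (d + 1) := fun f' hf' =>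
    hfmin ▸ Nat.sInf_le ⟨f', hf', rfl⟩
  obtain ⟨s, hs⟩ : ∃ s, r = (t - 1) * d + s := ⟨r - (t - 1) * d, by omega⟩
  have hs0 : 0 < s := by omega
  obtain ⟨σ, hσsum, hσ⟩ := exists_balanced s ht
  have htd : (t - 1) * d + d = t * d := by
    rw [← Nat.succ_mul, Nat.succ_eq_add_one, Nat.sub_add_cancel ht]
  obtain ⟨c, k, hinj, hlt, hsurj⟩ := exists_colouring (n := n) (fun j => f j + σ j)
    (by rw [Finset.sum_add_distrib, hfsum, hσsum]; omega)
  choose A hconv hA using fun j => exists_convex_family_inter_nonempty_iff hd (σ j) (f j + σ j)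
  set F : Fin n → Set (Fin t → Fin d → ℝ) := fun i => {x | x (c i) ∈ A (c i) (k i)} with hF
  have hinter : ∀ S : Finset (Fin n),
      (⋂ i ∈ S, F i).Nonempty ↔ ∀ j, Clustered d (σ j) (colourLabels c k j S) := by
    intro S
    have hlabel : ∀ j, colourLabels c k j S ⊆ Finset.range (f j + σ j) := fun j m hm => by
      obtain ⟨i, hi, rfl⟩ := Finset.mem_image.1 hm
      rw [Finset.mem_range, ← (Finset.mem_filter.1 hi).2]
      exact hlt i
    simp_rw [← fun j => hA j _ (hlabel j)]
    constructor
    · rintro ⟨x, hx⟩ j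
      refine ⟨x j, fun m hm => ?_⟩
      obtain ⟨i, hi, rfl⟩ := Finset.mem_image.1 hm
      obtain ⟨hiS, rfl⟩ := Finset.mem_filter.1 hi
      exact Set.mem_iInter₂.1 hx i hiS
    · intro h
      choose x hx using h
      exact ⟨x, Set.mem_iInter₂.2 fun i hi =>
        hx (c i) (k i) (Finset.mem_image_of_mem _ (Finset.mem_filter.2 ⟨hi, rfl⟩))⟩
  refine ⟨F, fun i => ?_, fun S hS => ?_, fun S hS => ?_, ?_⟩
  · refine ⟨fun j => if j = c i then A (c i) (k i) else Set.univ, fun j => ?_, ?_⟩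
    · dsimp only
      split_ifs
      exacts [hconv _ _, convex_univ]
    · ext x
      simp only [hF, Set.mem_ofPred_eq]
      constructor
      · intro hx j
        split_ifs with hj
        · rwa [hj]
        · trivial
      · intro hx
        simpa using hx (c i)
  · by_contra! hcon
    have hrs : (r : ℝ) - ((t : ℝ) - 1) * (d : ℝ) = s := by
      have h1 : ((t : ℝ) - 1) * d + d = t * d := by ring
      have h2 : (((t - 1) * d : ℕ) : ℝ) + d = t * d := by exact_mod_cast htd
      have h3 : (r : ℝ) = ((t - 1) * d : ℕ) + s := by exact_mod_cast hs
      linarith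
    have hsR : (0 : ℝ) < s := by exact_mod_cast hs0
    rw [hrs, ← le_sub_iff_add_le', div_le_iff₀ hsR] at hS
    have hlarge : n + t + d * s ≤ S.card * s + t * d := by
      have : (n : ℝ) + t + d * s ≤ S.card * s + t * d := by linarith
      exact_mod_cast this
    have hScard : d + 1 ≤ S.card := by
      by_contra! hle
      have := Nat.mul_le_mul_right s (Nat.le_of_lt_succ hle)
      omega
    obtain ⟨j, hj⟩ := exists_card_sub_mul_le (N := fun j => f j + σ j) (σ := σ) hd hinj hlt hScard
      fun T hT hTc hclust => ((hinter T).2 hclust).ne_empty (hcon T hT hTc)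
    obtain ⟨m, hm⟩ : ∃ m, S.card = d + 1 + m := ⟨S.card - (d + 1), by omega⟩
    have hm' : S.card - d = m + 1 := by omega
    rw [hm', Nat.succ_mul] at hj
    have hjd : m * (σ j + 1) + (d + 1) ≤ f j := by omega
    have hbal := mul_le_of_sum_choose_minimal hd hfsum hmin (j := j) (by omega)
    have h1 : t * (m * (σ j + 1) + (d + 1)) ≤ t * f j := Nat.mul_le_mul_left t hjd
    have h2 : m * (s + 1) ≤ m * (t * (σ j + 1)) := Nat.mul_le_mul_left m (hσ j)
    have h3 : t * (m * (σ j + 1) + (d + 1)) = m * (t * (σ j + 1)) + t * d + t := by ring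
    have h4 : S.card * s = d * s + s + m * s := by rw [hm]; ring
    rw [Nat.mul_succ] at h2
    omega
  · have hle : S.card ≤ ∑ j, (d + σ j) := by
      rw [← sum_card_colourLabels hinj S]
      exact Finset.sum_le_sum fun j _ => ((hinter S).1 hS j).card_le
    rw [Finset.sum_add_distrib, hσsum] at hle
    simp only [Finset.sum_const, Finset.card_univ, Fintype.card_fin, smul_eq_mul] at hle
    omega
  · have hbad := card_filter_exists_not_clustered (d := d)
      (N := fun j => f j + σ j) (σ := σ) hinj hlt hsurj
    simp_rw [card_filter_not_clustered hd] at hbad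
    have htotal := Finset.card_filter_add_card_filter_not
      (s := Finset.powersetCard (d + 1) (Finset.univ : Finset (Fin n)))
      (fun S => (⋂ i ∈ S, F i).Nonempty)
    rw [Finset.card_powersetCard, Finset.card_univ, Fintype.card_fin] at htotal
    have hcongr : (Finset.filter (fun S => ¬ (⋂ i ∈ S, F i).Nonempty)
        (Finset.powersetCard (d + 1) (Finset.univ : Finset (Fin n)))).card =
        ∑ j, (f j).choose (d + 1) := by
      rw [← hbad]
      simp_rw [hinter]
    rw [gFun, hfmin, ← hcongr]
    omega
end

section
/- Let d, t, r, n be positive integers with n > d + r and r >= (t-1)d. Then there exists a family F of n sets from F_{t,d} such that exactly g_d(n,t,r) of the (d+1)-element subfamilies of F are intersecting and the maximal size of an intersecting subfamily of F is exactly d + r. -/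
/-- The hyperplane in `ℝ^d` with normal vector `(1, a, …, a^(d-1))` at level `a^d`; these
hyperplanes are in general position. -/
def momentHyperplane (d : ℕ) (a : ℝ) : Set (Fin d → ℝ) :=
  {x | ∑ l, x l * a ^ (l : ℕ) = a ^ d}

lemma convex_momentHyperplane (d : ℕ) (a : ℝ) : Convex ℝ (momentHyperplane d a) := by
  intro x hx y hy u v _ _ huv
  simp only [momentHyperplane, Set.mem_ofPred_eq, Pi.add_apply, Pi.smul_apply, smul_eq_mul,
    add_mul, mul_assoc, Finset.sum_add_distrib, ← Finset.mul_sum] at *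
  rw [hx, hy, ← add_mul, huv, one_mul]

lemma exists_mem_momentHyperplane {d : ℕ} {s : Finset ℝ} (hs : s.card ≤ d) :
    ∃ x, ∀ a ∈ s, x ∈ momentHyperplane d a := by
  set p := Lagrange.interpolate s id (fun a : ℝ => a ^ d) with hp
  refine ⟨fun l => p.coeff l, fun a ha => ?_⟩
  have hinj : Set.InjOn (id : ℝ → ℝ) s := Function.injective_id.injOn
  have heval : p.eval a = a ^ d := Lagrange.eval_interpolate_at_node (v := id) _ hinj ha
  have hdeg : p.degree < d :=
    (Lagrange.degree_interpolate_lt _ hinj).trans_le (by exact_mod_cast hs)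
  have hnat : p.natDegree < d ∨ p = 0 := by
    by_cases h0 : p = 0
    · exact Or.inr h0
    · exact Or.inl ((Polynomial.natDegree_lt_iff_degree_lt h0).2 hdeg)
  rw [momentHyperplane, Set.mem_ofPred_eq, Fin.sum_univ_eq_sum_range (fun l => p.coeff l * a ^ l),
    ← heval]
  rcases hnat with h | h
  · exact (Polynomial.eval_eq_sum_range' h a).symm
  · simp [h]

lemma card_le_of_mem_momentHyperplane {d : ℕ} {s : Finset ℝ} {x : Fin d → ℝ}
    (hx : ∀ a ∈ s, x ∈ momentHyperplane d a) : s.card ≤ d := by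
  set q : Polynomial ℝ := ∑ l : Fin d, Polynomial.C (x l) * Polynomial.X ^ (l : ℕ) with hq
  have hqd : q.degree < d := Polynomial.degree_sum_fin_lt x
  have hmonic : (Polynomial.X ^ d - q).Monic := Polynomial.monic_X_pow_sub hqd
  have hdeg : (Polynomial.X ^ d - q).natDegree ≤ d := by
    refine Polynomial.natDegree_le_of_degree_le ((Polynomial.degree_sub_le _ _).trans ?_)
    exact max_le (by simp) hqd.le
  refine (Polynomial.card_le_degree_of_subset_roots (p := Polynomial.X ^ d - q) ?_).trans hdeg
  intro a ha
  rw [Polynomial.mem_roots hmonic.ne_zero, Polynomial.IsRoot.def]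
  have h := hx a ha
  rw [momentHyperplane, Set.mem_ofPred_eq] at h
  simp [hq, Polynomial.eval_finsetSum, h]

/-- The set `A_1 × ⋯ × A_t` where `A_j` is the `k`-th hyperplane if `k` belongs to the `j`-th
block and `A_j = ℝ^d` otherwise. -/
def blockProduct {n t : ℕ} (d : ℕ) (B : Fin t → Finset (Fin n)) (k : Fin n) :
    Set (Fin t → Fin d → ℝ) :=
  {x | ∀ j, k ∈ B j → x j ∈ momentHyperplane d ((k : ℕ) : ℝ)}

lemma isProdOfConvex_blockProduct {n t : ℕ} (d : ℕ) (B : Fin t → Finset (Fin n)) (k : Fin n) :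
    IsProdOfConvex t d (blockProduct d B k) := by
  refine ⟨fun j => {y | k ∈ B j → y ∈ momentHyperplane d ((k : ℕ) : ℝ)}, fun j => ?_, rfl⟩
  by_cases h : k ∈ B j
  · simpa [h] using convex_momentHyperplane d ((k : ℕ) : ℝ)
  · simpa [h] using convex_univ

lemma nonempty_iInter_blockProduct_iff {n t d : ℕ} (B : Fin t → Finset (Fin n))
    (S : Finset (Fin n)) :
    (⋂ k ∈ S, blockProduct d B k).Nonempty ↔ ∀ j, (S ∩ B j).card ≤ d := by
  let e : Fin n ↪ ℝ := ⟨fun k => ((k : ℕ) : ℝ), fun a b h => Fin.ext (Nat.cast_injective h)⟩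
  constructor
  · rintro ⟨x, hx⟩ j
    rw [← Finset.card_map e]
    refine card_le_of_mem_momentHyperplane (x := x j) fun a ha => ?_
    obtain ⟨k, hk, rfl⟩ := Finset.mem_map.1 ha
    rw [Finset.mem_inter] at hk
    exact Set.mem_iInter₂.1 hx k hk.1 j hk.2
  · intro h
    have h' : ∀ j, ∃ y, ∀ a ∈ (S ∩ B j).map e, y ∈ momentHyperplane d a := fun j =>
      exists_mem_momentHyperplane ((Finset.card_map e).trans_le (h j))
    choose x hx using h'
    refine ⟨x, Set.mem_iInter₂.2 fun k hk j hj => ?_⟩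
    exact hx j (e k) (Finset.mem_map_of_mem e (Finset.mem_inter.2 ⟨hk, hj⟩))

lemma exists_disjoint_blocks {n t : ℕ} {f : Fin t → ℕ} (hf : ∑ i, f i ≤ n) :
    ∃ B : Fin t → Finset (Fin n), (∀ i, (B i).card = f i) ∧
      ∀ i j, i ≠ j → Disjoint (B i) (B j) := by
  obtain ⟨e⟩ : Nonempty ((Σ i, Fin (f i)) ↪ Fin n) :=
    Function.Embedding.nonempty_of_card_le (by simpa using hf)
  refine ⟨fun i => (Finset.univ : Finset (Fin (f i))).map
    ((Function.Embedding.sigmaMk i).trans e), fun i => by simp, fun i j hij => ?_⟩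
  rw [Finset.disjoint_left]
  intro k hi hj
  obtain ⟨a, -, ha⟩ := Finset.mem_map.1 hi
  obtain ⟨b, -, hb⟩ := Finset.mem_map.1 hj
  exact hij (congrArg Sigma.fst (e.injective (ha.trans hb.symm)))

/-- Every minimizer of `∑ i, C(f i, d+1)` of total at least `t * d + 1` has all entries at
least `d`. -/
lemma le_of_forall_sum_choose_le {d t : ℕ} {f : Fin t → ℕ} (hsum : t * d < ∑ i, f i)
    (hmin : ∀ g : Fin t → ℕ, ∑ i, g i = ∑ i, f i →
      ∑ i, (f i).choose (d + 1) ≤ ∑ i, (g i).choose (d + 1)) (i : Fin t) : d ≤ f i := by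
  by_contra! hi
  obtain ⟨j, hj⟩ : ∃ j, d < f j := by
    by_contra! h
    exact hsum.not_ge ((Finset.sum_le_sum fun i _ => h i).trans (by simp))
  have hij : i ≠ j := by rintro rfl; omega
  have split : ∀ h : Fin t → ℕ,
      ∑ k, h k = h i + (h j + ∑ k ∈ (Finset.univ.erase i).erase j, h k) := fun h => by
    rw [Finset.add_sum_erase _ _ (by simp [hij.symm]), Finset.add_sum_erase _ _ (by simp)]
  let g : Fin t → ℕ := fun k => if k = i then f i + 1 else if k = j then f j - 1 else f k
  have hgi : g i = f i + 1 := by simp [g]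
  have hgj : g j = f j - 1 := by simp [g, hij.symm]
  have hg : ∀ k ∈ (Finset.univ.erase i).erase j, g k = f k := by
    intro k hk
    simp only [Finset.mem_erase, Finset.mem_univ, and_true] at hk
    simp [g, hk.1, hk.2]
  have hrest : ∑ k ∈ (Finset.univ.erase i).erase j, g k =
      ∑ k ∈ (Finset.univ.erase i).erase j, f k := Finset.sum_congr rfl hg
  have hrest' : ∑ k ∈ (Finset.univ.erase i).erase j, (g k).choose (d + 1) =
      ∑ k ∈ (Finset.univ.erase i).erase j, (f k).choose (d + 1) :=
    Finset.sum_congr rfl fun k hk => by rw [hg k hk]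
  have hle := hmin g (by rw [split g, split f, hrest, hgi, hgj]; omega)
  rw [split, split (fun k => (g k).choose (d + 1)), hrest', hgi, hgj,
    Nat.choose_eq_zero_of_lt (show f i + 1 < d + 1 by omega)] at hle
  obtain ⟨m, hm⟩ : ∃ m, f j = m + 1 := ⟨f j - 1, by omega⟩
  rw [hm, Nat.choose_succ_succ', Nat.add_sub_cancel] at hle
  have : 0 < m.choose d := Nat.choose_pos (by omega)
  omega

/-- The `(d+1)`-sets meeting each of the disjoint blocks in at most `d` points are those contained
in no block. -/
lemma card_filter_card_inter_le {n t d : ℕ} {B : Fin t → Finset (Fin n)}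
    (hB : ∀ i j, i ≠ j → Disjoint (B i) (B j)) :
    ((Finset.powersetCard (d + 1) (Finset.univ : Finset (Fin n))).filter
      (fun S => ∀ j, (S ∩ B j).card ≤ d)).card =
      n.choose (d + 1) - ∑ j, (B j).card.choose (d + 1) := by
  have hbad : (Finset.powersetCard (d + 1) (Finset.univ : Finset (Fin n))).filter
      (fun S => ¬ ∀ j, (S ∩ B j).card ≤ d) =
      Finset.univ.biUnion fun j => Finset.powersetCard (d + 1) (B j) := by
    ext S
    simp only [Finset.mem_filter, Finset.mem_powersetCard, Finset.subset_univ, true_and,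
      Finset.mem_biUnion, Finset.mem_univ, not_forall, not_le]
    constructor
    · rintro ⟨hS, j, hj⟩
      refine ⟨j, ?_, hS⟩
      rw [← Finset.inter_eq_left]
      exact Finset.eq_of_subset_of_card_le Finset.inter_subset_left (by omega)
    · rintro ⟨j, hj, hS⟩
      refine ⟨hS, j, ?_⟩
      rw [Finset.inter_eq_left.2 hj]
      omega
  have hcard := Finset.card_filter_add_card_filter_not
    (s := Finset.powersetCard (d + 1) (Finset.univ : Finset (Fin n)))
    (fun S => ∀ j, (S ∩ B j).card ≤ d)
  rw [hbad, Finset.card_biUnion, Finset.card_powersetCard] at hcard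
  · simp only [Finset.card_powersetCard, Finset.card_univ, Fintype.card_fin] at hcard
    omega
  · intro i _ j _ hij
    refine Finset.disjoint_left.2 fun S hi hj => ?_
    rw [Finset.mem_powersetCard] at hi hj
    obtain ⟨k, hk⟩ : S.Nonempty := Finset.card_pos.1 (by omega)
    exact Finset.disjoint_left.1 (hB i j hij) (hi.1 hk) (hj.1 hk)

lemma card_add_sum_card_le {n t d : ℕ} {B : Fin t → Finset (Fin n)}
    (hB : ∀ i j, i ≠ j → Disjoint (B i) (B j)) {S : Finset (Fin n)}
    (hS : ∀ j, (S ∩ B j).card ≤ d) : S.card + ∑ j, (B j).card ≤ n + t * d := by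
  have hU : (Finset.univ.biUnion B).card = ∑ j, (B j).card :=
    Finset.card_biUnion fun i _ j _ hij => hB i j hij
  have hI : (S ∩ Finset.univ.biUnion B).card ≤ t * d := by
    rw [Finset.inter_biUnion]
    refine Finset.card_biUnion_le.trans ((Finset.sum_le_sum fun j _ => hS j).trans ?_)
    simp
  have h := Finset.card_union_add_card_inter S (Finset.univ.biUnion B)
  have hle := Finset.card_le_univ (S ∪ Finset.univ.biUnion B)
  rw [Fintype.card_fin] at hle
  omega

lemma exists_card_add_sum_card_eq {n t d : ℕ} {B : Fin t → Finset (Fin n)}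
    (hB : ∀ i j, i ≠ j → Disjoint (B i) (B j)) (hd : ∀ j, d ≤ (B j).card) :
    ∃ S : Finset (Fin n), (∀ j, (S ∩ B j).card ≤ d) ∧
      S.card + ∑ j, (B j).card = n + t * d := by
  choose C hCB hC using fun j => Finset.exists_subset_card_eq (hd j)
  refine ⟨(Finset.univ.biUnion B)ᶜ ∪ Finset.univ.biUnion C, fun j => ?_, ?_⟩
  · rw [← hC j]
    refine Finset.card_le_card fun k hk => ?_
    simp only [Finset.mem_inter, Finset.mem_union, Finset.mem_compl, Finset.mem_biUnion,
      Finset.mem_univ, true_and, not_exists] at hk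
    obtain ⟨h | ⟨i, hi⟩, hj⟩ := hk
    · exact absurd hj (h j)
    · by_cases hij : i = j
      · exact hij ▸ hi
      · exact absurd hj (Finset.disjoint_left.1 (hB i j hij) (hCB i hi))
  · have hdisj : Disjoint (Finset.univ.biUnion B)ᶜ (Finset.univ.biUnion C) :=
      disjoint_compl_left.mono_right (Finset.biUnion_mono fun j _ => hCB j)
    have hcompl := Finset.card_compl_add_card (Finset.univ.biUnion B)
    rw [Finset.card_biUnion fun i _ j _ hij => hB i j hij, Fintype.card_fin] at hcompl
    rw [Finset.card_union_of_disjoint hdisj, Finset.card_biUnion fun i _ j _ hij =>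
      (hB i j hij).mono (hCB i) (hCB j)]
    simp only [hC, Finset.sum_const, Finset.card_univ, Fintype.card_fin, smul_eq_mul]
    omega

open scoped Classical in
/-- Sharpness of the fractional Helly theorem for Cartesian products of convex sets:
a family with exactly `g_d(n,t,r)` intersecting `(d+1)`-tuples whose largest
intersecting subfamily has size exactly `d + r`. -/
theorem stmt6 (d t r n : ℕ) (hd : 0 < d) (ht : 0 < t) (hr : 0 < r) (hn : d + r < n)
    (hrt : (t - 1) * d ≤ r) :
    ∃ F : Fin n → Set (Fin t → Fin d → ℝ),
      (∀ i, IsProdOfConvex t d (F i)) ∧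
      ((Finset.powersetCard (d + 1) (Finset.univ : Finset (Fin n))).filter
          (fun S : Finset (Fin n) => (⋂ i ∈ S, F i).Nonempty)).card = gFun d n t r ∧
      (∀ S : Finset (Fin n), (⋂ i ∈ S, F i).Nonempty → S.card ≤ d + r) ∧
      (∃ S : Finset (Fin n), S.card = d + r ∧ (⋂ i ∈ S, F i).Nonempty) := by
  have htd : t * d = (t - 1) * d + d := by
    obtain ⟨s, rfl⟩ : ∃ s, t = s + 1 := ⟨t - 1, by omega⟩
    rw [Nat.add_sub_cancel, Nat.succ_mul]
  set M := {m : ℕ | ∃ f : Fin t → ℕ,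
      (∑ i, f i) = n - r + (t - 1) * d ∧ m = ∑ i, (f i).choose (d + 1)} with hM
  have hne : M.Nonempty :=
    ⟨_, fun i => if i = ⟨0, ht⟩ then n - r + (t - 1) * d else 0, by simp, rfl⟩
  obtain ⟨f, hfsum, hfmin⟩ := Nat.sInf_mem hne
  have hdf : ∀ i, d ≤ f i := le_of_forall_sum_choose_le (by omega) fun g hg =>
    hfmin ▸ Nat.sInf_le ⟨g, hg.trans hfsum, rfl⟩
  obtain ⟨B, hBcard, hB⟩ := exists_disjoint_blocks (n := n) (f := f) (by omega)
  have hBsum : ∑ j, (B j).card = n - r + (t - 1) * d := by simp only [hBcard, hfsum]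
  refine ⟨blockProduct d B, isProdOfConvex_blockProduct d B, ?_, ?_, ?_⟩
  · simp only [nonempty_iInter_blockProduct_iff]
    rw [gFun, ← hM, hfmin]
    simp only [← hBcard]
    convert card_filter_card_inter_le hB
  · intro S hS
    have := card_add_sum_card_le hB ((nonempty_iInter_blockProduct_iff B S).1 hS)
    omega
  · obtain ⟨S, hS, hcard⟩ := exists_card_add_sum_card_eq hB fun j => (hBcard j).symm ▸ hdf j
    exact ⟨S, by omega, (nonempty_iInter_blockProduct_iff B S).2 hS⟩
end

section
/- Let d, n, r be positive integers with n >= d + r. Then there exist n convex sets A_1, A_2, ..., A_n in R^d such that for every choice of indices 1 <= i_1 < i_2 < ... < i_{d+1} <= n, the intersection of A_{i_1}, A_{i_2}, ..., A_{i_{d+1}} is nonempty if and only if i_{d+1} - i_d <= r. -/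
/-- A family of `n` convex sets in `ℝ^(e+1)`, nonempty and uniformly bounded, in which an increasing
`(e+2)`-tuple intersects when its last two indices differ by at most `r`, and otherwise has no
point that is uniformly close to all its members. -/
structure IsGapFamily {n : ℕ} (r e : ℕ) (A : Fin n → Set (Fin (e + 1) → ℝ)) (R ε : ℝ) : Prop where
  convex : ∀ i, Convex ℝ (A i)
  nonempty : ∀ i, (A i).Nonempty
  norm_sub_le : ∀ i j, ∀ x ∈ A i, ∀ y ∈ A j, ‖x - y‖ ≤ R
  pos : 0 < ε
  exists_mem : ∀ f : Fin (e + 2) → Fin n, StrictMono f →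
    (f (Fin.last (e + 1))).val - (f (Fin.last e).castSucc).val ≤ r → ∃ x, ∀ j, x ∈ A (f j)
  le_of_near : ∀ f : Fin (e + 2) → Fin n, StrictMono f →
    (∃ x, ∀ j, ∃ b ∈ A (f j), ‖x - b‖ ≤ ε) →
      (f (Fin.last (e + 1))).val - (f (Fin.last e).castSucc).val ≤ r

/-- The intervals `[i - r, i]` on the line. -/
theorem isGapFamily_interval (n r : ℕ) :
    IsGapFamily r 0 (fun i : Fin n => {x : Fin 1 → ℝ | (i.val : ℝ) - r ≤ x 0 ∧ x 0 ≤ i.val})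
      (n + r) (1 / 4) where
  convex i := by
    rintro x ⟨hx, hx'⟩ y ⟨hy, hy'⟩ a b ha hb hab
    obtain rfl : b = 1 - a := by linarith
    simp only [Set.mem_ofPred_eq, Pi.add_apply, Pi.smul_apply, smul_eq_mul]
    constructor <;> nlinarith
  nonempty i := ⟨fun _ => i.val, by simp⟩
  norm_sub_le i j x hx y hy := by
    obtain ⟨hx, hx'⟩ := hx
    obtain ⟨hy, hy'⟩ := hy
    have hi : (i.val : ℝ) ≤ n := by exact_mod_cast i.2.le
    have hj : (j.val : ℝ) ≤ n := by exact_mod_cast j.2.le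
    have hi' : (0 : ℝ) ≤ i.val := by positivity
    have hj' : (0 : ℝ) ≤ j.val := by positivity
    refine (pi_norm_le_iff_of_nonneg (by positivity)).2 fun k => ?_
    rw [Fin.fin_one_eq_zero k, Pi.sub_apply, Real.norm_eq_abs, abs_le]
    constructor <;> linarith
  pos := by norm_num
  exists_mem f hf h := by
    have h01 : (f 0).val < (f 1).val := hf (by simp)
    have h' : (f 1).val ≤ (f 0).val + r := by
      have : (f 1).val - (f 0).val ≤ r := h
      omega
    have h01' : ((f 0).val : ℝ) < (f 1).val := by exact_mod_cast h01
    have h'' : ((f 1).val : ℝ) ≤ (f 0).val + r := by exact_mod_cast h'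
    refine ⟨fun _ => (f 0).val, fun j => ?_⟩
    fin_cases j
    · simp
    · exact ⟨by simp; linarith, by simpa using h01'.le⟩
  le_of_near f hf h := by
    obtain ⟨x, hx⟩ := h
    obtain ⟨b, ⟨_, hb⟩, hxb⟩ := hx 0
    obtain ⟨c, ⟨hc, _⟩, hxc⟩ := hx 1
    have hb' := abs_le.1 ((norm_le_pi_norm (x - b) 0).trans hxb)
    have hc' := abs_le.1 ((norm_le_pi_norm (x - c) 0).trans hxc)
    simp only [Pi.sub_apply] at hb' hc'
    have : ((f 1).val : ℝ) < (f 0).val + r + 1 := by linarith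
    have : (f 1).val < (f 0).val + r + 1 := by exact_mod_cast this
    change (f 1).val - (f 0).val ≤ r
    omega

/-- The set over `[0, w]` whose slice at height `t` is the `(t / w) * R`-thickening of `B`. -/
def flare {m : ℕ} (B : Set (Fin m → ℝ)) (R w : ℝ) : Set (Fin (m + 1) → ℝ) :=
  {z | 0 ≤ z 0 ∧ z 0 ≤ w ∧ ∃ b ∈ B, ‖Fin.tail z - b‖ ≤ z 0 / w * R}

theorem convex_flare {m : ℕ} {B : Set (Fin m → ℝ)} (hB : Convex ℝ B) (R w : ℝ) :
    Convex ℝ (flare B R w) := by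
  rintro x ⟨hx, hx', b, hb, hxb⟩ y ⟨hy, hy', c, hc, hyc⟩ s t hs ht hst
  have h0 : (s • x + t • y) 0 = s * x 0 + t * y 0 := rfl
  refine ⟨?_, ?_, s • b + t • c, hB hb hc hs ht hst, ?_⟩
  · rw [h0]; positivity
  · rw [h0]
    obtain rfl : t = 1 - s := by linarith
    nlinarith
  · have : Fin.tail (s • x + t • y) - (s • b + t • c) =
        s • (Fin.tail x - b) + t • (Fin.tail y - c) := by
      ext k
      simp only [Fin.tail, Pi.sub_apply, Pi.add_apply, Pi.smul_apply, smul_eq_mul]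
      ring
    rw [this, h0]
    calc _ ≤ ‖s • (Fin.tail x - b)‖ + ‖t • (Fin.tail y - c)‖ := norm_add_le _ _
      _ = s * ‖Fin.tail x - b‖ + t * ‖Fin.tail y - c‖ := by
        rw [norm_smul, norm_smul, Real.norm_of_nonneg hs, Real.norm_of_nonneg ht]
      _ ≤ s * (x 0 / w * R) + t * (y 0 / w * R) := by gcongr
      _ = _ := by ring

theorem norm_tail_le {m : ℕ} (z : Fin (m + 1) → ℝ) : ‖Fin.tail z‖ ≤ ‖z‖ :=
  (pi_norm_le_iff_of_nonneg (norm_nonneg z)).2 fun k => norm_le_pi_norm z k.succ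

/-- Flaring the members of a gap family over rapidly growing intervals gives a gap family in one
dimension higher. -/
theorem IsGapFamily.exists_succ {n r e : ℕ} {B : Fin n → Set (Fin (e + 1) → ℝ)} {R ε : ℝ}
    (hB : IsGapFamily r e B R ε) (hR : 0 ≤ R) :
    ∃ (A : Fin n → Set (Fin (e + 2) → ℝ)) (R' ε' : ℝ), 0 ≤ R' ∧ IsGapFamily r (e + 1) A R' ε' := by
  have hε := hB.pos
  obtain ⟨M, hM1, hMR⟩ : ∃ M : ℝ, 1 ≤ M ∧ 4 * R ≤ ε * M :=
    ⟨4 * R / ε + 1, by simp; positivity, by field_simp; linarith⟩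
  have hpow : ∀ k : ℕ, 0 < M ^ k := fun k => by positivity
  have hmono : ∀ i j : Fin n, i ≤ j → M ^ i.val ≤ M ^ j.val := fun i j h =>
    pow_le_pow_right₀ hM1 h
  refine ⟨fun i => flare (B i) R (M ^ i.val), M ^ n + 3 * R, min (1 / 2) (ε / 2), by positivity,
    fun i => convex_flare (hB.convex i) _ _, ?_, ?_, by positivity, ?_, ?_⟩
  · intro i
    obtain ⟨b, hb⟩ := hB.nonempty i
    exact ⟨Fin.cons 0 b, le_rfl, (hpow _).le, b, hb, by simp⟩
  · rintro i j x ⟨hx, hx', b, hb, hxb⟩ y ⟨hy, hy', c, hc, hyc⟩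
    have hi : M ^ i.val ≤ M ^ n := pow_le_pow_right₀ hM1 i.2.le
    have hj : M ^ j.val ≤ M ^ n := pow_le_pow_right₀ hM1 j.2.le
    have hxb' : ‖Fin.tail x - b‖ ≤ R :=
      hxb.trans (mul_le_of_le_one_left hR ((div_le_one (hpow _)).2 hx'))
    have hyc' : ‖Fin.tail y - c‖ ≤ R :=
      hyc.trans (mul_le_of_le_one_left hR ((div_le_one (hpow _)).2 hy'))
    have htail : ‖Fin.tail x - Fin.tail y‖ ≤ 3 * R := by
      have := hB.norm_sub_le i j b hb c hc
      calc _ = ‖(Fin.tail x - b) + (b - c) - (Fin.tail y - c)‖ := by congr 1; abel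
        _ ≤ ‖Fin.tail x - b‖ + ‖b - c‖ + ‖Fin.tail y - c‖ :=
          (_root_.norm_sub_le _ _).trans (by gcongr; exact norm_add_le _ _)
        _ ≤ _ := by linarith
    refine (pi_norm_le_iff_of_nonneg (by positivity)).2 fun k => ?_
    refine Fin.cases ?_ (fun k => ?_) k
    · rw [Pi.sub_apply, Real.norm_eq_abs, abs_le]
      constructor <;> linarith
    · have := (norm_le_pi_norm (Fin.tail x - Fin.tail y) k).trans htail
      have h0 := hpow n
      exact this.trans (by linarith)
  · intro f hf h
    obtain ⟨y, hy⟩ := hB.exists_mem (f ∘ Fin.succ) (hf.comp (Fin.strictMono_succ)) h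
    refine ⟨Fin.cons (M ^ (f 0).val) y, fun j => ⟨(hpow _).le, ?_, ?_⟩⟩
    · exact hmono _ _ (hf.monotone (Fin.zero_le j))
    · simp only [Fin.tail_cons, Fin.cons_zero]
      refine Fin.cases ?_ (fun j => ?_) j
      · obtain ⟨b, hb⟩ := hB.nonempty (f 0)
        exact ⟨b, hb, by
          rw [div_self (hpow _).ne', one_mul]
          exact hB.norm_sub_le _ _ y (hy 0) b hb⟩
      · refine ⟨y, hy j, ?_⟩
        rw [sub_self, norm_zero]
        positivity
  · rintro f hf ⟨z, hz⟩
    refine hB.le_of_near (f ∘ Fin.succ) (hf.comp (Fin.strictMono_succ)) ⟨Fin.tail z, fun j => ?_⟩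
    obtain ⟨u, ⟨_, hu, -⟩, hzu⟩ := hz 0
    obtain ⟨v, ⟨hv0, hv, b, hb, hvb⟩, hzv⟩ := hz j.succ
    refine ⟨b, hb, ?_⟩
    have hzu' := abs_le.1 ((norm_le_pi_norm (z - u) 0).trans (hzu.trans (min_le_left _ _)))
    have hzv' := abs_le.1 ((norm_le_pi_norm (z - v) 0).trans (hzv.trans (min_le_left _ _)))
    simp only [Pi.sub_apply] at hzu' hzv'
    have hone : 1 ≤ M ^ (f 0).val := one_le_pow₀ hM1
    have hv2 : v 0 ≤ 2 * M ^ (f 0).val := by linarith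
    have hstep : M ^ (f 0).val * M ≤ M ^ (f j.succ).val := by
      rw [← pow_succ]
      exact pow_le_pow_right₀ hM1 (hf (Fin.succ_pos j))
    have hsmall : v 0 / M ^ (f j.succ).val * R ≤ ε / 2 := by
      rw [div_mul_eq_mul_div, div_le_iff₀ (hpow _)]
      calc v 0 * R ≤ 2 * M ^ (f 0).val * R := by gcongr
        _ = M ^ (f 0).val * (4 * R) / 2 := by ring
        _ ≤ M ^ (f 0).val * (ε * M) / 2 := by gcongr
        _ = ε / 2 * (M ^ (f 0).val * M) := by ring
        _ ≤ _ := by gcongr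
    have htail : ‖Fin.tail z - Fin.tail v‖ ≤ ε / 2 :=
      (norm_tail_le (z - v)).trans (hzv.trans (min_le_right _ _))
    calc ‖Fin.tail z - b‖ = ‖(Fin.tail z - Fin.tail v) + (Fin.tail v - b)‖ := by congr 1; abel
      _ ≤ ‖Fin.tail z - Fin.tail v‖ + ‖Fin.tail v - b‖ := norm_add_le _ _
      _ ≤ ε := by linarith [hvb.trans hsmall]

theorem exists_isGapFamily (n r e : ℕ) :
    ∃ (A : Fin n → Set (Fin (e + 1) → ℝ)) (R ε : ℝ), 0 ≤ R ∧ IsGapFamily r e A R ε := by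
  induction e with
  | zero => exact ⟨_, _, _, by positivity, isGapFamily_interval n r⟩
  | succ e ih =>
    obtain ⟨B, R, ε, hR, hB⟩ := ih
    exact hB.exists_succ hR

/-- There are `n` convex sets `A_1, …, A_n` in ℝ^d such that a `(d+1)`-tuple
`A_{i_1}, …, A_{i_{d+1}}` (with `i_1 < ⋯ < i_{d+1}`) is intersecting
iff `i_{d+1} - i_d ≤ r`. -/
theorem stmt7 (d n r : ℕ) (hd : 0 < d) (hn : 0 < n) (hr : 0 < r) (hdr : d + r ≤ n) :
    ∃ A : Fin n → Set (Fin d → ℝ),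
      (∀ i, Convex ℝ (A i)) ∧
      ∀ f : Fin (d + 1) → Fin n, StrictMono f →
        ((⋂ j, A (f j)).Nonempty ↔
          (f (Fin.last d)).val - (f ⟨d - 1, by omega⟩).val ≤ r) := by
  obtain ⟨e, rfl⟩ : ∃ e, d = e + 1 := ⟨d - 1, by omega⟩
  obtain ⟨A, R, ε, -, hA⟩ := exists_isGapFamily n r e
  refine ⟨A, hA.convex, fun f hf => ⟨?_, fun h => ?_⟩⟩
  · rintro ⟨x, hx⟩
    exact hA.le_of_near f hf
      ⟨x, fun j => ⟨x, Set.mem_iInter.1 hx j, by simpa using hA.pos.le⟩⟩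
  · obtain ⟨x, hx⟩ := hA.exists_mem f hf h
    exact ⟨x, Set.mem_iInter.2 hx⟩
end

section
/- Let d, n, r be positive integers with n >= d + r. Let H be the (d+1)-uniform hypergraph on vertex set {1, 2, ..., n} whose edges are exactly the (d+1)-element subsets {a_1 < a_2 < ... < a_{d+1}} with a_{d+1} - a_d <= r. Then: (1) the maximal size of a clique of H (a vertex subset all of whose (d+1)-element subsets are edges) is d + r; and (2) the maximal size of an independent set of H (a vertex subset containing no edge of H) is d + floor((n-d)/(r+1)). -/
/-- `S` (a finite set of naturals with at least two elements) has its maximum `b`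
within distance `r` of its second largest element. A `(d+1)`-set `{a_1 < ⋯ < a_{d+1}}`
satisfies this iff `a_{d+1} - a_d ≤ r`. -/
def LastGapLe (r : ℕ) (S : Finset ℕ) : Prop :=
  ∃ b ∈ S, (∀ c ∈ S, c ≤ b) ∧ ∃ a ∈ S, a ≠ b ∧ b - a ≤ r

/-- Increasing enumeration of a finite set of naturals by an initial segment of `ℕ`. -/
lemma exists_increasing_enumeration (W : Finset ℕ) :
    ∃ g : ℕ → ℕ, (∀ i j, i < j → j < W.card → g i < g j) ∧
      ∀ i < W.card, g i ∈ W := by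
  refine ⟨fun i => if h : i < W.card then W.orderEmbOfFin rfl ⟨i, h⟩ else 0, ?_, ?_⟩
  · intro i j hij hj
    have hi : i < W.card := hij.trans hj
    simp [hi, hj, hij]
  · intro i hi
    simp [hi]

/-- A finite set of positive naturals has at most as many elements as any upper bound. -/
lemma card_le_of_subset_Icc_one {S : Finset ℕ} {a : ℕ} (h : S ⊆ Finset.Icc 1 a) :
    S.card ≤ a := by
  simpa using Finset.card_le_card h

lemma lastGapLe_of_subset_Icc {d r : ℕ} (hd : 0 < d) {S : Finset ℕ}
    (hS : S ⊆ Finset.Icc 1 (d + r)) (hcard : S.card = d + 1) : LastGapLe r S := by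
  have hne : S.Nonempty := Finset.card_pos.mp (by omega)
  have hb := S.max'_mem hne
  have hcard' : (S.erase (S.max' hne)).card = d := by
    rw [Finset.card_erase_of_mem hb, hcard]; rfl
  have hne' : (S.erase (S.max' hne)).Nonempty := Finset.card_pos.mp (by omega)
  have ha := (S.erase (S.max' hne)).max'_mem hne'
  have hle : d ≤ (S.erase (S.max' hne)).max' hne' := by
    rw [← hcard']
    refine card_le_of_subset_Icc_one fun x hx => ?_
    exact Finset.mem_Icc.mpr ⟨(Finset.mem_Icc.mp (hS (Finset.mem_of_mem_erase hx))).1,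
      Finset.le_max' _ _ hx⟩
  have hbr := (Finset.mem_Icc.mp (hS hb)).2
  exact ⟨_, hb, fun c hc => S.le_max' c hc, _, Finset.mem_of_mem_erase ha,
    Finset.ne_of_mem_erase ha, by omega⟩

/-- The first `d - 1` elements together with two later ones form a `(d+1)`-set
whose last gap is the gap between these two. -/
lemma exists_subset_lastGapLe_iff {W : Finset ℕ} {g : ℕ → ℕ}
    (hg : ∀ i j, i < j → j < W.card → g i < g j) (hmem : ∀ i < W.card, g i ∈ W)
    {d i j : ℕ} (hd : 0 < d) (hi : d ≤ i + 1) (hij : i < j) (hj : j < W.card) (r : ℕ) :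
    ∃ S ⊆ W, S.card = d + 1 ∧ (LastGapLe r S ↔ g j ≤ g i + r) := by
  have hlt : ∀ k ∈ insert j (insert i (Finset.range (d - 1))), k ≤ j ∧ (k ≠ j → k ≤ i) := by
    intro k hk
    simp only [Finset.mem_insert, Finset.mem_range] at hk
    omega
  have hmono : ∀ a b, a ≤ b → b < W.card → g a ≤ g b := by
    intro a b hab hb
    rcases hab.eq_or_lt with rfl | h
    · exact le_rfl
    · exact (hg a b h hb).le
  have hgij := hg i j hij hj
  refine ⟨(insert j (insert i (Finset.range (d - 1)))).image g, ?_, ?_, ?_⟩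
  · intro x hx
    obtain ⟨k, hk, rfl⟩ := Finset.mem_image.mp hx
    exact hmem k ((hlt k hk).1.trans_lt hj)
  · rw [Finset.card_image_of_injOn, Finset.card_insert_of_notMem,
      Finset.card_insert_of_notMem, Finset.card_range]
    · omega
    · simp only [Finset.mem_range]; omega
    · simp only [Finset.mem_insert, Finset.mem_range]; omega
    · intro a ha b hb hab
      have ha' := (hlt a ha).1
      have hb' := (hlt b hb).1
      rcases lt_trichotomy a b with h | h | h
      · have := hg a b h (by omega); omega
      · exact h
      · have := hg b a h (by omega); omega
  · constructor
    · rintro ⟨b, hb, hmax, a, ha, hab, hgap⟩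
      have hjb : g j ≤ b := hmax _ (Finset.mem_image_of_mem g (by simp))
      obtain ⟨k, hk, rfl⟩ := Finset.mem_image.mp hb
      obtain ⟨l, hl, rfl⟩ := Finset.mem_image.mp ha
      have hkj := hmono k j (hlt k hk).1 hj
      have hlj : l ≠ j := by rintro rfl; omega
      have hli := hmono l i ((hlt l hl).2 hlj) (by omega)
      omega
    · intro h
      refine ⟨g j, Finset.mem_image_of_mem g (by simp), ?_, g i,
        Finset.mem_image_of_mem g (by simp), by omega, by omega⟩
      intro c hc
      obtain ⟨k, hk, rfl⟩ := Finset.mem_image.mp hc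
      exact hmono k j (hlt k hk).1 hj

lemma card_le_of_forall_lastGapLe {d r : ℕ} (hd : 0 < d) {W : Finset ℕ}
    (hW : ∀ S ⊆ W, S.card = d + 1 → LastGapLe r S) : W.card ≤ d + r := by
  by_contra! hcard
  obtain ⟨g, hg, hmem⟩ := exists_increasing_enumeration W
  obtain ⟨S, hS, hSc, hiff⟩ := exists_subset_lastGapLe_iff hg hmem (i := d - 1) (j := d + r)
    hd (by omega) (by omega) hcard r
  have hle := hiff.mp (hW S hS hSc)
  have hgrow : ∀ k, d - 1 + k < W.card → g (d - 1) + k ≤ g (d - 1 + k) := by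
    intro k
    induction k with
    | zero => intro _; exact le_rfl
    | succ k ih =>
      intro hk
      have h₁ := ih (by omega)
      have h₂ := hg (d - 1 + k) (d - 1 + (k + 1)) (by omega) hk
      omega
  have h := hgrow (r + 1) (by omega)
  rw [show d - 1 + (r + 1) = d + r by omega] at h
  omega

lemma card_le_of_forall_not_lastGapLe {d n r : ℕ} (hd : 0 < d) {W : Finset ℕ}
    (hWn : W ⊆ Finset.Icc 1 n) (hW : ∀ S ⊆ W, S.card = d + 1 → ¬ LastGapLe r S) :
    W.card ≤ d + (n - d) / (r + 1) := by
  by_contra! hcard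
  obtain ⟨g, hg, hmem⟩ := exists_increasing_enumeration W
  have hinit : ∀ k < W.card, k + 1 ≤ g k := by
    intro k
    induction k with
    | zero => intro h; exact (Finset.mem_Icc.mp (hWn (hmem 0 h))).1
    | succ k ih =>
      intro hk
      have h₁ := ih (by omega)
      have h₂ := hg k (k + 1) (by omega) hk
      omega
  have hgrow : ∀ k, d - 1 + k < W.card → d + k * (r + 1) ≤ g (d - 1 + k) := by
    intro k
    induction k with
    | zero => intro h; have := hinit _ h; simp only [Nat.add_zero] at *; omega
    | succ k ih =>
      intro hk
      have h₁ := ih (by omega)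
      obtain ⟨S, hS, hSc, hiff⟩ := exists_subset_lastGapLe_iff hg hmem (i := d - 1 + k)
        (j := d - 1 + (k + 1)) hd (by omega) (by omega) hk r
      have h₂ : ¬ g (d - 1 + (k + 1)) ≤ g (d - 1 + k) + r := fun h =>
        hW S hS hSc (hiff.mpr h)
      rw [Nat.add_mul]
      omega
  have hdW : d < W.card := (Nat.le_add_right _ _).trans_lt hcard
  have hlast : d - 1 + (W.card - d) < W.card := by omega
  have h₁ := hgrow _ hlast
  have h₂ := (Finset.mem_Icc.mp (hWn (hmem _ hlast))).2
  have h₃ : W.card - d ≤ (n - d) / (r + 1) :=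
    (Nat.le_div_iff_mul_le (by omega)).mpr (by omega)
  omega

lemma exists_forall_not_lastGapLe {d n r : ℕ} (hn : d ≤ n) :
    ∃ W : Finset ℕ, W ⊆ Finset.Icc 1 n ∧ W.card = d + (n - d) / (r + 1) ∧
      ∀ S ⊆ W, S.card = d + 1 → ¬ LastGapLe r S := by
  set q := (n - d) / (r + 1)
  have hqn : q * (r + 1) ≤ n - d := Nat.div_mul_le_self _ _
  have hmem : ∀ x, x ∈ Finset.Icc 1 d ∪ (Finset.Icc 1 q).image (fun k => d + k * (r + 1)) →
      (1 ≤ x ∧ x ≤ d) ∨ ∃ k, 1 ≤ k ∧ k ≤ q ∧ x = d + k * (r + 1) := by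
    intro x hx
    rcases Finset.mem_union.mp hx with h | h
    · exact Or.inl (Finset.mem_Icc.mp h)
    · obtain ⟨k, hk, rfl⟩ := Finset.mem_image.mp h
      exact Or.inr ⟨k, (Finset.mem_Icc.mp hk).1, (Finset.mem_Icc.mp hk).2, rfl⟩
  refine ⟨Finset.Icc 1 d ∪ (Finset.Icc 1 q).image (fun k => d + k * (r + 1)), ?_, ?_, ?_⟩
  · intro x hx
    rw [Finset.mem_Icc]
    rcases hmem x hx with h | ⟨k, hk, hkq, rfl⟩
    · omega
    · have h₁ : k * (r + 1) ≤ q * (r + 1) := Nat.mul_le_mul_right _ hkq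
      have h₂ : 1 * (r + 1) ≤ k * (r + 1) := Nat.mul_le_mul_right _ hk
      omega
  · rw [Finset.card_union_of_disjoint, Finset.card_image_of_injective]
    · simp
    · intro a b hab
      simpa using hab
    · rw [Finset.disjoint_left]
      intro x hx hx'
      obtain ⟨k, hk, rfl⟩ := Finset.mem_image.mp hx'
      have h₁ : 1 * (r + 1) ≤ k * (r + 1) :=
        Nat.mul_le_mul_right _ (Finset.mem_Icc.mp hk).1
      have h₂ := (Finset.mem_Icc.mp hx).2
      omega
  · rintro S hS hSc ⟨b, hb, hmax, a, ha, hab, hgap⟩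
    have hle := hmax a ha
    rcases hmem b (hS hb) with h | ⟨k, hk, -, rfl⟩
    · have := card_le_of_subset_Icc_one (S := S) (a := d) fun x hx => by
        have h₁ := hmax x hx
        rw [Finset.mem_Icc]
        rcases hmem x (hS hx) with h₂ | ⟨k, hk, -, rfl⟩
        · exact h₂
        · omega
      omega
    · rcases hmem a (hS ha) with h | ⟨l, hl, -, rfl⟩
      · have h₁ : 1 * (r + 1) ≤ k * (r + 1) := Nat.mul_le_mul_right _ hk
        omega
      · have hlk : l < k := by
          by_contra! hkl
          have h₁ : k * (r + 1) ≤ l * (r + 1) := Nat.mul_le_mul_right _ hkl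
          omega
        have h₁ : (l + 1) * (r + 1) ≤ k * (r + 1) := Nat.mul_le_mul_right _ hlk
        rw [Nat.add_mul] at h₁
        omega

/-- For the `(d+1)`-uniform hypergraph on `{1,…,n}` whose edges are the `(d+1)`-sets
`{a_1 < ⋯ < a_{d+1}}` with `a_{d+1} - a_d ≤ r`: the maximal clique size is `d + r`,
and the maximal independent set size is `d + ⌊(n-d)/(r+1)⌋`. -/
theorem stmt9 (d n r : ℕ) (hd : 0 < d) (hr : 0 < r) (hn : d + r ≤ n) :
    (∃ W : Finset ℕ, W ⊆ Finset.Icc 1 n ∧ W.card = d + r ∧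
      ∀ S ⊆ W, S.card = d + 1 → LastGapLe r S) ∧
    (∀ W : Finset ℕ, W ⊆ Finset.Icc 1 n →
      (∀ S ⊆ W, S.card = d + 1 → LastGapLe r S) → W.card ≤ d + r) ∧
    (∃ W : Finset ℕ, W ⊆ Finset.Icc 1 n ∧ W.card = d + (n - d) / (r + 1) ∧
      ∀ S ⊆ W, S.card = d + 1 → ¬ LastGapLe r S) ∧
    (∀ W : Finset ℕ, W ⊆ Finset.Icc 1 n →
      (∀ S ⊆ W, S.card = d + 1 → ¬ LastGapLe r S) → W.card ≤ d + (n - d) / (r + 1)) := by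
  exact ⟨⟨Finset.Icc 1 (d + r), Finset.Icc_subset_Icc_right hn, by simp,
      fun _ hS hcard => lastGapLe_of_subset_Icc hd hS hcard⟩,
    fun _ _ hW => card_le_of_forall_lastGapLe hd hW,
    exists_forall_not_lastGapLe (by omega),
    fun _ hWn hW => card_le_of_forall_not_lastGapLe hd hWn hW⟩
end

section
/- Let m and n be positive integers with m <= n, and write n = m*q + s with 0 <= s < m. Then there exists a family F of n sets in R^m, each of the form B_1 x B_2 x ... x B_m with every B_i a convex subset of R, such that every intersecting subfamily of F has size at most m and the number of intersecting pairs of members of F is exactly C(n,2) - s * C(ceil(n/m), 2) - (m - s) * C(floor(n/m), 2). -/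
open Finset in
/-- The number of pairs on which `f` is not injective is the sum over the fibres of `f` of their
numbers of pairs. -/
theorem card_filter_not_injOn_pairs {α β : Type*} [Fintype α] [DecidableEq α] [Fintype β]
    [DecidableEq β] (f : α → β) [DecidablePred fun S : Finset α => ¬ Set.InjOn f S] :
    #((powersetCard 2 univ).filter fun S : Finset α => ¬ Set.InjOn f S) =
      ∑ b, (#{a | f a = b}).choose 2 := by
  have h : ((powersetCard 2 univ).filter fun S : Finset α => ¬ Set.InjOn f S) =
      univ.biUnion fun b => powersetCard 2 {a | f a = b} := by
    ext S
    simp only [mem_filter, mem_powersetCard, subset_univ, true_and, mem_biUnion, mem_univ]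
    constructor
    · rintro ⟨hS, hf⟩
      obtain ⟨x, y, hxy, rfl⟩ := card_eq_two.mp hS
      have : f x = f y := by
        by_contra hne
        exact hf (by simp [Set.injOn_pair, hne])
      exact ⟨f y, by simp [insert_subset_iff, this], hS⟩
    · rintro ⟨b, hb, hS⟩
      refine ⟨hS, fun hf => ?_⟩
      obtain ⟨x, y, hxy, rfl⟩ := card_eq_two.mp hS
      simp only [insert_subset_iff, singleton_subset_iff, mem_filter, mem_univ, true_and] at hb
      exact hxy (hf (by simp) (by simp) (hb.1.trans hb.2.symm))
  rw [h, card_biUnion]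
  · simp
  · intro b _ c _ hbc
    refine disjoint_left.mpr fun S hb hc => hbc ?_
    rw [mem_powersetCard] at hb hc
    obtain ⟨x, hx⟩ := card_pos.mp (by omega : 0 < #S)
    exact (mem_filter.mp (hb.1 hx)).2.symm.trans (mem_filter.mp (hc.1 hx)).2

open Finset in
/-- The size of a residue class modulo `m` in `Fin n`. -/
theorem card_filter_fin_mod_eq {m : ℕ} (n : ℕ) (hm : 0 < m) (j : Fin m) :
    #{i : Fin n | (⟨i % m, Nat.mod_lt _ hm⟩ : Fin m) = j} =
      n / m + if (j : ℕ) < n % m then 1 else 0 := by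
  have h := Nat.count_modEq_card n hm j
  rw [Nat.mod_eq_of_lt j.isLt] at h
  rw [← h, Nat.count_eq_card_filter_range, ← card_map Fin.valEmbedding]
  congr 1
  ext a
  simp only [mem_map, mem_filter, mem_univ, true_and, Fin.valEmbedding_apply, mem_range,
    Fin.ext_iff, Nat.ModEq, Nat.mod_eq_of_lt j.isLt]
  exact ⟨by rintro ⟨i, hi, rfl⟩; exact ⟨i.isLt, hi⟩, fun ⟨ha, hj⟩ => ⟨⟨a, ha⟩, hj, rfl⟩⟩

/-- Boxes fixing the coordinate `f i` to the value `v i`, with `v` injective, have a common point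
exactly when `f` is injective on the index set. -/
theorem iInter_coordinate_hyperplanes_nonempty_iff {ι κ : Type*} (f : ι → κ) {v : ι → ℝ}
    (hv : Function.Injective v) (S : Finset ι) :
    (⋂ i ∈ S, {x : κ → ℝ | x (f i) = v i}).Nonempty ↔ Set.InjOn f S := by
  classical
  constructor
  · rintro ⟨x, hx⟩ a ha b hb hab
    simp only [Set.mem_iInter, Set.mem_ofPred_eq] at hx
    exact hv (by rw [← hx a ha, ← hx b hb, hab])
  · intro hf
    refine ⟨fun k => if h : ∃ i ∈ S, f i = k then v h.choose else 0, ?_⟩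
    simp only [Set.mem_iInter, Set.mem_ofPred_eq]
    intro i hi
    have h : ∃ a ∈ S, f a = f i := ⟨i, hi, rfl⟩
    rw [dif_pos h, hf h.choose_spec.1 hi h.choose_spec.2]

open scoped Classical in
/-- Sharpness of Turán-type bound for intersections of boxes (products of
convex subsets of ℝ) in ℝ^m. -/
theorem stmt11 (m n q s : ℕ) (hm : 0 < m) (hn : 0 < n) (hmn : m ≤ n)
    (hqs : n = m * q + s) (hs : s < m) :
    ∃ F : Fin n → Set (Fin m → ℝ),
      (∀ i, ∃ B : Fin m → Set ℝ, (∀ j, Convex ℝ (B j)) ∧ F i = {x | ∀ j, x j ∈ B j}) ∧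
      (∀ S : Finset (Fin n), (⋂ i ∈ S, F i).Nonempty → S.card ≤ m) ∧
      ((Finset.powersetCard 2 (Finset.univ : Finset (Fin n))).filter
          (fun S : Finset (Fin n) => (⋂ i ∈ S, F i).Nonempty)).card
        = n.choose 2 - s * ((n + m - 1) / m).choose 2 - (m - s) * (n / m).choose 2 := by
  let f : Fin n → Fin m := fun i => ⟨i % m, Nat.mod_lt _ hm⟩
  have hv : Function.Injective fun i : Fin n => ((i : ℕ) : ℝ) :=
    Nat.cast_injective.comp Fin.val_injective
  have hF := iInter_coordinate_hyperplanes_nonempty_iff f hv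
  refine ⟨fun i => {x | x (f i) = ((i : ℕ) : ℝ)}, fun i => ?_, fun S hS => ?_, ?_⟩
  · refine ⟨fun j => if j = f i then {((i : ℕ) : ℝ)} else Set.univ, fun j => ?_, ?_⟩
    · dsimp only
      split_ifs
      exacts [convex_singleton _, convex_univ]
    · ext x
      constructor
      · intro hx j
        by_cases hj : j = f i
        · subst hj
          simpa using hx
        · simp [hj]
      · intro hx
        simpa using hx (f i)
  · simpa using Finset.card_le_card_of_injOn f (t := Finset.univ) (by simp) ((hF S).mp hS)
  · simp only [hF]
    have hdiv : n / m = q := by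
      rw [hqs, Nat.mul_add_div hm, Nat.div_eq_of_lt hs, add_zero]
    have hmod : n % m = s := by
      rw [hqs, Nat.mul_add_mod, Nat.mod_eq_of_lt hs]
    have hceil : s * ((n + m - 1) / m).choose 2 = s * (q + 1).choose 2 := by
      rcases Nat.eq_zero_or_pos s with rfl | hpos
      · simp
      · have : n + m - 1 = m * (q + 1) + (s - 1) := by
          rw [mul_add]
          omega
        rw [this, Nat.mul_add_div hm, Nat.div_eq_of_lt (by omega), add_zero]
    have hlt : (Finset.univ.filter fun j : Fin m => (j : ℕ) < s).card = s := by
      rw [Fin.card_filter_val_lt]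
      omega
    have hsum : ∑ j : Fin m, (q + if (j : ℕ) < s then 1 else 0).choose 2 =
        s * (q + 1).choose 2 + (m - s) * q.choose 2 := by
      have hge := Finset.card_filter_add_card_filter_not (s := (Finset.univ : Finset (Fin m)))
        (fun j : Fin m => (j : ℕ) < s)
      rw [hlt, Finset.card_univ, Fintype.card_fin] at hge
      simp only [apply_ite (fun k => (q + k).choose 2), add_zero]
      rw [Finset.sum_ite, Finset.sum_const, Finset.sum_const, hlt, smul_eq_mul, smul_eq_mul,
        Nat.eq_sub_of_add_eq' hge]
    have hbad := card_filter_not_injOn_pairs f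
    have hfiber : ∀ j, (Finset.univ.filter fun i => f i = j).card = _ :=
      card_filter_fin_mod_eq n hm
    simp only [hfiber, hdiv, hmod, hsum] at hbad
    have htotal := Finset.card_filter_add_card_filter_not
      (s := Finset.powersetCard 2 (Finset.univ : Finset (Fin n))) (fun S => Set.InjOn f S)
    rw [Finset.card_powersetCard, Finset.card_univ, Fintype.card_fin] at htotal
    rw [hceil, hdiv]
    omega
end

section
/- For every integer t >= 2 and real c > 0 there exists a real c' > 0 such that the following holds for every n: if G is a simple graph on n vertices that contains at least c * n^t cliques of size t and contains no induced subgraph isomorphic to K_t^{(2)}, then G contains a clique of size at least c' * n. -/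
namespace SimpleGraph

open Finset
open scoped Classical

variable {V : Type*} (G : SimpleGraph V)

/-- The common neighbours of `x` and `y` inside `A`. -/
noncomputable def commonNeighborsIn (A : Finset V) (x y : V) : Finset V :=
  A.filter fun v => G.Adj x v ∧ G.Adj y v

/-- The cliques of size `t` inside `A`. -/
noncomputable def cliquesIn (t : ℕ) (A : Finset V) : Finset (Finset V) :=
  (A.powersetCard t).filter fun S => G.IsClique (S : Set V)

/-- `A` contains an induced copy of the 2-blowup of `K_t`, described recursively: a nonadjacent
pair together with an induced 2-blowup of `K_{t-1}` in its common neighbourhood. -/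
def HasInducedBlowup : ℕ → Finset V → Prop
  | 0, _ => True
  | t + 1, A => ∃ x ∈ A, ∃ y ∈ A, x ≠ y ∧ ¬ G.Adj x y ∧
      HasInducedBlowup t (G.commonNeighborsIn A x y)

variable {G}

theorem mem_commonNeighborsIn {A : Finset V} {x y v : V} :
    v ∈ G.commonNeighborsIn A x y ↔ v ∈ A ∧ G.Adj x v ∧ G.Adj y v := by
  simp [commonNeighborsIn]

theorem commonNeighborsIn_subset (A : Finset V) (x y : V) : G.commonNeighborsIn A x y ⊆ A :=
  filter_subset _ _

theorem mem_cliquesIn {t : ℕ} {A S : Finset V} :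
    S ∈ G.cliquesIn t A ↔ (S ⊆ A ∧ S.card = t) ∧ G.IsClique (S : Set V) := by
  simp [cliquesIn, mem_powersetCard]

theorem HasInducedBlowup.mono {t : ℕ} {A B : Finset V} (hAB : A ⊆ B)
    (h : G.HasInducedBlowup t A) : G.HasInducedBlowup t B := by
  induction t generalizing A B with
  | zero => trivial
  | succ t ih =>
    obtain ⟨x, hx, y, hy, hxy, hadj, h⟩ := h
    exact ⟨x, hAB hx, y, hAB hy, hxy, hadj, ih (filter_subset_filter _ hAB) h⟩

theorem HasInducedBlowup.exists_embedding {t : ℕ} {A : Finset V} (h : G.HasInducedBlowup t A) :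
    ∃ f : Fin t × Fin 2 → V, Function.Injective f ∧ (∀ u, f u ∈ A) ∧
      ∀ u v, G.Adj (f u) (f v) ↔ u.1 ≠ v.1 := by
  induction t generalizing A with
  | zero => exact ⟨fun u => u.1.elim0, fun u => u.1.elim0, fun u => u.1.elim0, fun u => u.1.elim0⟩
  | succ t ih =>
    obtain ⟨x, hx, y, hy, hxy, hadj, h⟩ := h
    obtain ⟨g, hinj, hmem, hg⟩ := ih h
    simp only [mem_commonNeighborsIn] at hmem
    have hadj' : ¬ G.Adj y x := fun h => hadj h.symm
    let f : Fin (t + 1) → Fin 2 → V :=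
      Fin.cons (α := fun _ => Fin 2 → V) ![x, y] fun i j => g (i, j)
    have hpair (j : Fin 2) (u : Fin t × Fin 2) : G.Adj (![x, y] j) (g u) := by
      fin_cases j
      · exact (hmem u).2.1
      · exact (hmem u).2.2
    have hf : ∀ u v : Fin (t + 1) × Fin 2, G.Adj (f u.1 u.2) (f v.1 v.2) ↔ u.1 ≠ v.1 := by
      rintro ⟨i, a⟩ ⟨j, b⟩
      cases i using Fin.cases with
      | zero =>
        cases j using Fin.cases with
        | zero => fin_cases a <;> fin_cases b <;> simp [f, hadj, hadj']
        | succ j => simpa [f, (Fin.succ_ne_zero j).symm] using hpair a (j, b)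
      | succ i =>
        cases j using Fin.cases with
        | zero => simpa [f] using (hpair b (i, a)).symm
        | succ j => simpa [f] using hg (i, a) (j, b)
    refine ⟨fun u => f u.1 u.2, ?_, ?_, hf⟩
    · rintro ⟨i, a⟩ ⟨j, b⟩ huv
      have hij : i = j := by
        by_contra hne
        have := (hf (i, a) (j, b)).2 hne
        exact G.ne_of_adj this huv
      subst hij
      cases i using Fin.cases with
      | zero =>
        fin_cases a <;> fin_cases b <;> simp_all [f, hxy.symm]
      | succ i =>
        have : ((i, a) : Fin t × Fin 2) = (i, b) := hinj (by simpa [f] using huv)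
        simpa using this
    · rintro ⟨i, a⟩
      cases i using Fin.cases with
      | zero => fin_cases a <;> simpa [f]
      | succ i => exact (hmem (i, a)).1

/-- A graph of bounded independence number without an induced 2-blowup of `K_{t+1}` has a clique
of linear size. -/
theorem card_le_of_isIndepSet_card_le_of_isClique_card_le {m k t : ℕ} {A : Finset V}
    (hm : ∀ S ⊆ A, G.IsIndepSet (S : Set V) → S.card ≤ m)
    (hk : ∀ K ⊆ A, G.IsClique (K : Set V) → K.card ≤ k)
    (hA : ¬ G.HasInducedBlowup (t + 1) A) :
    A.card ≤ (m * m + m + 1) ^ t * k := by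
  induction t generalizing A with
  | zero =>
    have hclique : G.IsClique (A : Set V) := by
      intro x hx y hy hxy
      by_contra hadj
      exact hA ⟨x, hx, y, hy, hxy, hadj, trivial⟩
    simpa using hk A subset_rfl hclique
  | succ t ih =>
    obtain ⟨S, hS, hmax⟩ := exists_max_image
      (A.powerset.filter fun S : Finset V => G.IsIndepSet (S : Set V)) Finset.card ⟨∅, by simp⟩
    simp only [mem_filter, mem_powerset, and_imp] at hS hmax
    obtain ⟨hSA, hSind⟩ := hS
    have hSm : S.card ≤ m := hm S hSA hSind
    set L := (m * m + m + 1) ^ t * k with hL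
    let P : V → Finset V := fun s => A.filter fun v => ∀ u ∈ S, u ≠ s → v ≠ u ∧ ¬ G.Adj v u
    have hP : ∀ s ∈ S, (P s).card ≤ L := by
      intro s hs
      have hclique : G.IsClique (P s : Set V) := by
        intro v hv w hw hvw
        by_contra hadj
        simp only [P, coe_filter, Set.mem_ofPred_eq] at hv hw
        have hw' : w ∉ S.erase s := fun h =>
          (hw.2 w (mem_of_mem_erase h) (ne_of_mem_erase h)).1 rfl
        have hv' : v ∉ insert w (S.erase s) := by
          rw [mem_insert, not_or]
          exact ⟨hvw, fun h => (hv.2 v (mem_of_mem_erase h) (ne_of_mem_erase h)).1 rfl⟩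
        have hle := hmax (insert v (insert w (S.erase s)))
          (by
            simp only [insert_subset_iff]
            exact ⟨hv.1, hw.1, (erase_subset _ _).trans hSA⟩)
          (by
            have hsub : G.IsIndepSet ((S.erase s : Finset V) : Set V) :=
              hSind.mono (by simp)
            intro a ha b hb hab
            simp only [coe_insert, Set.mem_insert_iff, mem_coe] at ha hb
            have key : ∀ x, (∀ u ∈ S, u ≠ s → x ≠ u ∧ ¬ G.Adj x u) → ∀ u ∈ S.erase s,
                ¬ G.Adj x u ∧ ¬ G.Adj u x := fun x hx u hu =>
              have := (hx u (mem_of_mem_erase hu) (ne_of_mem_erase hu)).2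
              ⟨this, fun h => this h.symm⟩
            have hadj' : ¬ G.Adj w v := fun h => hadj h.symm
            rcases ha with rfl | rfl | ha <;> rcases hb with rfl | rfl | hb
            · exact absurd rfl hab
            · exact hadj
            · exact (key _ hv.2 b hb).1
            · exact hadj'
            · exact absurd rfl hab
            · exact (key _ hw.2 b hb).1
            · exact (key _ hv.2 a ha).2
            · exact (key _ hw.2 a ha).2
            · exact hsub ha hb hab)
        rw [card_insert_of_notMem hv', card_insert_of_notMem hw', card_erase_of_mem hs] at hle
        omega
      exact (hk _ (filter_subset _ _) hclique).trans (Nat.le_mul_of_pos_left _ (by positivity))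
    have hN : ∀ p ∈ S.offDiag, (G.commonNeighborsIn A p.1 p.2).card ≤ L := by
      rintro ⟨x, y⟩ hp
      rw [mem_offDiag] at hp
      obtain ⟨hx, hy, hxy⟩ := hp
      have hsub := commonNeighborsIn_subset (G := G) A x y
      exact ih (fun T hT => hm T (hT.trans hsub)) (fun T hT => hk T (hT.trans hsub))
        fun h => hA ⟨x, hSA hx, y, hSA hy, hxy, hSind hx hy hxy, h⟩
    have hcover : A ⊆ (S.offDiag.biUnion fun p => G.commonNeighborsIn A p.1 p.2) ∪
        S.biUnion P := by
      intro v hv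
      rw [mem_union]
      by_cases hvS : v ∈ S
      · right
        exact mem_biUnion.2 ⟨v, hvS, mem_filter.2
          ⟨hv, fun u hu huv => ⟨huv.symm, hSind hvS hu huv.symm⟩⟩⟩
      · have hnbr : ∃ s ∈ S, G.Adj s v := by
          by_contra! hno
          have hle := hmax (insert v S) (insert_subset hv hSA) (by
            intro a ha b hb hab
            simp only [coe_insert, Set.mem_insert_iff, mem_coe] at ha hb
            rcases ha with rfl | ha <;> rcases hb with rfl | hb
            · exact absurd rfl hab
            · exact fun h => hno b hb h.symm
            · exact hno a ha
            · exact hSind ha hb hab)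
          rw [card_insert_of_notMem hvS] at hle
          omega
        obtain ⟨s, hs, hsv⟩ := hnbr
        by_cases hother : ∃ u ∈ S, u ≠ s ∧ G.Adj u v
        · obtain ⟨u, hu, hus, huv⟩ := hother
          left
          exact mem_biUnion.2 ⟨(s, u), mem_offDiag.2 ⟨hs, hu, hus.symm⟩,
            mem_commonNeighborsIn.2 ⟨hv, hsv, huv⟩⟩
        · push Not at hother
          right
          exact mem_biUnion.2 ⟨s, hs, mem_filter.2 ⟨hv, fun u hu hus =>
            ⟨fun h => hvS (h ▸ hu), fun h => hother u hu hus h.symm⟩⟩⟩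
    calc A.card ≤ S.offDiag.card * L + S.card * L :=
          (card_le_card hcover).trans <| (card_union_le _ _).trans <|
            add_le_add (card_biUnion_le_card_mul _ _ _ hN) (card_biUnion_le_card_mul _ _ _ hP)
      _ ≤ (m * m) * L + m * L := by
          gcongr
          rw [offDiag_card]
          exact (Nat.sub_le _ _).trans (Nat.mul_le_mul hSm hSm)
      _ ≤ (m * m + m + 1) * L := by nlinarith
      _ = (m * m + m + 1) ^ (t + 1) * k := by rw [hL, pow_succ]; ring

theorem cliquesIn_card_le {t n : ℕ} {A : Finset V} (hA : A.card ≤ n) :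
    (G.cliquesIn t A).card ≤ n ^ t :=
  calc (G.cliquesIn t A).card ≤ (A.powersetCard t).card := card_filter_le _ _
    _ = A.card.choose t := card_powersetCard _ _
    _ ≤ A.card ^ t := Nat.choose_le_pow _ _
    _ ≤ n ^ t := Nat.pow_le_pow_left hA t

theorem cliquesIn_succ_card_le_sum (t : ℕ) (A : Finset V) :
    (G.cliquesIn (t + 1) A).card ≤
      ∑ x ∈ A, (G.cliquesIn t (G.commonNeighborsIn A x x)).card := by
  have hsub : G.cliquesIn (t + 1) A ⊆
      A.biUnion fun x => (G.cliquesIn t (G.commonNeighborsIn A x x)).image (insert x) := by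
    intro S hS
    obtain ⟨⟨hSA, hcard⟩, hclique⟩ := mem_cliquesIn.1 hS
    obtain ⟨x, hx⟩ : S.Nonempty := card_pos.1 (by omega)
    refine mem_biUnion.2 ⟨x, hSA hx, mem_image.2 ⟨S.erase x, mem_cliquesIn.2 ⟨⟨?_, ?_⟩, ?_⟩,
      insert_erase hx⟩⟩
    · intro v hv
      have hxv : G.Adj x v := hclique hx (mem_of_mem_erase hv) (ne_of_mem_erase hv).symm
      exact mem_commonNeighborsIn.2 ⟨hSA (mem_of_mem_erase hv), hxv, hxv⟩
    · rw [card_erase_of_mem hx, hcard, Nat.add_sub_cancel]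
    · exact hclique.subset (by simp)
  exact (card_le_card hsub).trans <| card_biUnion_le.trans <|
    sum_le_sum fun x _ => card_image_le

/-- A weak form of Bonferroni's inequality for families with uniformly small pairwise
intersections. -/
theorem sum_card_le_card_biUnion_add {α β : Type*} [DecidableEq β] (S : Finset α) (F : α → Finset β) (e : ℝ)
    (hF : ∀ x ∈ S, ∀ y ∈ S, x ≠ y → ((F x ∩ F y).card : ℝ) ≤ e) (he : 0 ≤ e) :
    ∑ x ∈ S, ((F x).card : ℝ) ≤ (S.biUnion F).card + (S.card : ℝ) ^ 2 * e := by
  induction S using Finset.induction_on with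
  | empty => simp
  | insert a S ha ih =>
    have ih := ih fun x hx y hy => hF x (mem_insert_of_mem hx) y (mem_insert_of_mem hy)
    have hinter : ((F a ∩ S.biUnion F).card : ℝ) ≤ S.card * e := by
      rw [inter_biUnion]
      calc ((S.biUnion fun x => F a ∩ F x).card : ℝ) ≤ ∑ x ∈ S, ((F a ∩ F x).card : ℝ) := by
            exact_mod_cast card_biUnion_le
        _ ≤ S.card • e := sum_le_card_nsmul _ _ _ fun x hx =>
            hF a (mem_insert_self _ _) x (mem_insert_of_mem hx) (by rintro rfl; exact ha hx)
        _ = S.card * e := nsmul_eq_mul _ _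
    have hunion : ((F a ∪ S.biUnion F).card : ℝ) + (F a ∩ S.biUnion F).card =
        (F a).card + (S.biUnion F).card := by
      exact_mod_cast card_union_add_card_inter _ _
    rw [sum_insert ha, biUnion_insert, card_insert_of_notMem ha]
    push_cast
    have hS : (0 : ℝ) ≤ S.card * e := by positivity
    nlinarith

/-- If nonadjacent pairs `x, y` have few cliques in their common neighbourhood, then an independent set
of vertices, each lying in many cliques, is small. -/
theorem isIndepSet_card_lt {t n m : ℕ} {A B : Finset V} {d e : ℝ} (hA : A.card ≤ n)
    (hd : ∀ x ∈ B, d ≤ (G.cliquesIn t (G.commonNeighborsIn A x x)).card)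
    (he : ∀ x ∈ B, ∀ y ∈ B, x ≠ y → ¬ G.Adj x y →
      ((G.cliquesIn t (G.commonNeighborsIn A x y)).card : ℝ) ≤ e)
    (he0 : 0 ≤ e) (hlt : (n : ℝ) ^ t + (m : ℝ) ^ 2 * e < m * d)
    {S : Finset V} (hSB : S ⊆ B) (hS : G.IsIndepSet (S : Set V)) : S.card < m := by
  by_contra! hm
  obtain ⟨T, hTS, rfl⟩ := exists_subset_card_eq hm
  let F : V → Finset (Finset V) := fun x => G.cliquesIn t (G.commonNeighborsIn A x x)
  have hinter : ∀ x ∈ T, ∀ y ∈ T, x ≠ y → ((F x ∩ F y).card : ℝ) ≤ e := by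
    intro x hx y hy hxy
    refine le_trans ?_ (he x (hSB (hTS hx)) y (hSB (hTS hy)) hxy (hS (hTS hx) (hTS hy) hxy))
    refine Nat.cast_le.2 (card_le_card fun K hK => ?_)
    obtain ⟨h₁, h₂⟩ := mem_inter.1 hK
    obtain ⟨⟨hKx, hcard⟩, hclique⟩ := mem_cliquesIn.1 h₁
    have hKy := (mem_cliquesIn.1 h₂).1.1
    refine mem_cliquesIn.2 ⟨⟨fun v hv => ?_, hcard⟩, hclique⟩
    have hvx := mem_commonNeighborsIn.1 (hKx hv)
    exact mem_commonNeighborsIn.2 ⟨hvx.1, hvx.2.1, (mem_commonNeighborsIn.1 (hKy hv)).2.1⟩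
  have hsum := sum_card_le_card_biUnion_add T F e hinter he0
  have hlow : T.card * d ≤ ∑ x ∈ T, ((F x).card : ℝ) := by
    rw [← nsmul_eq_mul]
    exact card_nsmul_le_sum _ _ _ fun x hx => hd x (hSB (hTS hx))
  have hup : ((T.biUnion F).card : ℝ) ≤ (n : ℝ) ^ t := by
    have hsub : T.biUnion F ⊆ G.cliquesIn t A := biUnion_subset.2 fun x _ K hK => by
      obtain ⟨⟨hK, hcard⟩, hclique⟩ := mem_cliquesIn.1 hK
      exact mem_cliquesIn.2 ⟨⟨hK.trans (commonNeighborsIn_subset _ _ _), hcard⟩, hclique⟩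
    exact_mod_cast (card_le_card hsub).trans (cliquesIn_card_le hA)
  linarith

/-- Positive density of `K_{t+1}` gives a linear number of vertices of positive clique-degree. -/
theorem le_card_filter_cliquesIn {t n : ℕ} {A : Finset V} {c : ℝ} (hc : 0 < c) (hn : 0 < n)
    (hA : A.card ≤ n) (h : c * (n : ℝ) ^ (t + 1) ≤ (G.cliquesIn (t + 1) A).card) :
    c / 2 * n ≤ ((A.filter fun x =>
      c / 2 * (n : ℝ) ^ t ≤ (G.cliquesIn t (G.commonNeighborsIn A x x)).card).card : ℝ) := by
  set d : V → ℝ := fun x => (G.cliquesIn t (G.commonNeighborsIn A x x)).card with hd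
  set B := A.filter fun x => c / 2 * (n : ℝ) ^ t ≤ d x
  have hn' : (0 : ℝ) < (n : ℝ) ^ t := by positivity
  have hA' : (A.card : ℝ) ≤ n := by exact_mod_cast hA
  have hsum : ((G.cliquesIn (t + 1) A).card : ℝ) ≤ ∑ x ∈ A, d x := by
    simp only [hd]
    exact_mod_cast cliquesIn_succ_card_le_sum t A
  have hpoint : ∀ x ∈ A, d x ≤ (if c / 2 * (n : ℝ) ^ t ≤ d x then (n : ℝ) ^ t else 0) +
      c / 2 * (n : ℝ) ^ t := by
    intro x _
    have hdx : d x ≤ (n : ℝ) ^ t := by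
      have := cliquesIn_card_le (G := G) (t := t)
        ((card_le_card (commonNeighborsIn_subset (G := G) A x x)).trans hA)
      simp only [hd]
      exact_mod_cast this
    split_ifs with hx
    · have : 0 < c / 2 * (n : ℝ) ^ t := by positivity
      linarith
    · linarith
  have hup : ∑ x ∈ A, d x ≤ B.card * (n : ℝ) ^ t + A.card * (c / 2 * (n : ℝ) ^ t) := by
    refine (sum_le_sum hpoint).trans_eq ?_
    rw [sum_add_distrib, ← sum_filter, sum_const, sum_const, nsmul_eq_mul, nsmul_eq_mul]
  have hAn : A.card * (c / 2 * (n : ℝ) ^ t) ≤ n * (c / 2 * (n : ℝ) ^ t) := by gcongr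
  refine le_of_mul_le_mul_right ?_ hn'
  rw [pow_succ] at h
  linarith

/-- Positive density of `K_{t+1}` and no induced 2-blowup of `K_{t+1}` force a clique of linear
size. -/
theorem exists_isClique_of_not_hasInducedBlowup (t : ℕ) {c : ℝ} (hc : 0 < c) :
    ∃ c' : ℝ, 0 < c' ∧ ∀ {V : Type*} (G : SimpleGraph V) (n : ℕ) (A : Finset V), A.card ≤ n →
      c * (n : ℝ) ^ (t + 1) ≤ (G.cliquesIn (t + 1) A).card → ¬ G.HasInducedBlowup (t + 1) A →
      ∃ K ⊆ A, G.IsClique (K : Set V) ∧ c' * n ≤ K.card := by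
  induction t generalizing c with
  | zero =>
    refine ⟨c, hc, fun G n A _ hcount hA => ⟨A, subset_rfl, ?_, ?_⟩⟩
    · intro x hx y hy hxy
      by_contra hadj
      exact hA ⟨x, hx, y, hy, hxy, hadj, trivial⟩
    · have hle := cliquesIn_card_le (G := G) (t := 1) (le_refl A.card)
      rw [pow_one] at hle
      rw [zero_add, pow_one] at hcount
      exact hcount.trans (by exact_mod_cast hle)
  | succ t ih =>
    obtain ⟨m, hm⟩ := exists_nat_gt (4 / c)
    have hm0 : (0 : ℝ) < m := (by positivity : (0 : ℝ) < 4 / c).trans hm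
    obtain ⟨δ, hδ, ih⟩ := ih (c := 1 / (2 * (m : ℝ) ^ 2)) (by positivity)
    set M : ℕ := (m * m + m + 1) ^ (t + 1) with hM
    have hM0 : (0 : ℝ) < M := by rw [hM]; positivity
    refine ⟨min δ (c / (4 * M)), by positivity, fun G n A hAn hcount hA => ?_⟩
    rcases Nat.eq_zero_or_pos n with rfl | hn
    · exact ⟨∅, by simp, by simp, by simp⟩
    have hn' : (0 : ℝ) < n := by exact_mod_cast hn
    by_contra! hno
    set B := A.filter fun x => c / 2 * (n : ℝ) ^ (t + 1) ≤
      (G.cliquesIn (t + 1) (G.commonNeighborsIn A x x)).card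
    have hBA : B ⊆ A := filter_subset _ _
    have hBcard : c / 2 * n ≤ (B.card : ℝ) := le_card_filter_cliquesIn hc hn hAn hcount
    have hindep : ∀ S ⊆ B, G.IsIndepSet (S : Set _) → S.card ≤ m := by
      intro S hSB hS
      refine (isIndepSet_card_lt (t := t + 1) (d := c / 2 * (n : ℝ) ^ (t + 1))
        (e := 1 / (2 * (m : ℝ) ^ 2) * (n : ℝ) ^ (t + 1)) hAn
        (fun x hx => (mem_filter.1 hx).2) ?_ (by positivity) ?_ hSB hS).le
      · intro x hx y hy hxy hadj
        by_contra! hlt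
        have hsub := commonNeighborsIn_subset (G := G) A x y
        obtain ⟨K, hK, hclique, hcard⟩ := ih G n _ ((card_le_card hsub).trans hAn) hlt.le
          fun h => hA ⟨x, hBA hx, y, hBA hy, hxy, hadj, h⟩
        have hlt := hno K (hK.trans hsub) hclique
        have : min δ (c / (4 * M)) * n ≤ δ * n := by gcongr; exact min_le_left _ _
        linarith
      · have hnt : (0 : ℝ) < (n : ℝ) ^ (t + 1) := by positivity
        have hmc : 4 < m * c := (div_lt_iff₀ hc).1 hm
        have hcancel : (m : ℝ) ^ 2 * (1 / (2 * (m : ℝ) ^ 2) * (n : ℝ) ^ (t + 1)) =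
            (n : ℝ) ^ (t + 1) / 2 := by field_simp
        rw [hcancel]
        nlinarith
    have hclique : ∀ K ⊆ B, G.IsClique (K : Set _) → K.card ≤ ⌊c / (4 * M) * n⌋₊ := by
      intro K hK hclique
      have hlt := hno K (hK.trans hBA) hclique
      have : min δ (c / (4 * M)) * n ≤ c / (4 * M) * n := by gcongr; exact min_le_right _ _
      exact Nat.le_floor (by linarith)
    have hle := card_le_of_isIndepSet_card_le_of_isClique_card_le hindep hclique
      fun h => hA (h.mono hBA)
    have hle' : (B.card : ℝ) ≤ M * ⌊c / (4 * M) * n⌋₊ := by exact_mod_cast hle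
    have hfloor : (⌊c / (4 * M) * n⌋₊ : ℝ) ≤ c / (4 * M) * n := Nat.floor_le (by positivity)
    have hcancel : M * (c / (4 * M) * n) = c / 4 * n := by field_simp
    have hmul := mul_le_mul_of_nonneg_left hfloor hM0.le
    have : 0 < c * n := by positivity
    linarith

end SimpleGraph

open scoped Classical in
/-- Holmsen's theorem: a graph with positive `K_t`-density and no induced
2-blowup of `K_t` contains a linear-size clique. -/
theorem stmt12 (t : ℕ) (ht : 2 ≤ t) (c : ℝ) (hc : 0 < c) :
    ∃ c' : ℝ, 0 < c' ∧ ∀ n : ℕ, ∀ G : SimpleGraph (Fin n),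
      c * (n : ℝ) ^ t ≤
        (((Finset.powersetCard t (Finset.univ : Finset (Fin n))).filter
          (fun S : Finset (Fin n) => G.IsClique (S : Set (Fin n)))).card : ℝ) →
      (¬ ∃ f : Fin t × Fin 2 → Fin n, Function.Injective f ∧
        ∀ u v : Fin t × Fin 2, G.Adj (f u) (f v) ↔ u.1 ≠ v.1) →
      ∃ S : Finset (Fin n), G.IsClique (S : Set (Fin n)) ∧ c' * (n : ℝ) ≤ (S.card : ℝ) := by
  obtain ⟨t, rfl⟩ : ∃ s, t = s + 1 := ⟨t - 1, by omega⟩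
  obtain ⟨c', hc', h⟩ := SimpleGraph.exists_isClique_of_not_hasInducedBlowup t hc
  refine ⟨c', hc', fun n G hcount hG => ?_⟩
  obtain ⟨K, -, hK, hcard⟩ := h G n Finset.univ (by simp)
    (by unfold SimpleGraph.cliquesIn; convert hcount) fun hb => by
      obtain ⟨f, hinj, -, hf⟩ := hb.exists_embedding
      exact hG ⟨f, hinj, hf⟩
  exact ⟨K, hK, hcard⟩
end

section
/- Let t and d be positive integers and let F be a finite family of at least d+1 sets from F_{t,d}. If every d+1 members of F have a common point, then all members of F have a common point. In other words, the family F_{t,d} has Helly number at most d+1. -/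
/-- The family `𝓕_{t,d}` has Helly number at most `d + 1`. -/
theorem stmt15 (t d : ℕ) (ht : 0 < t) (hd : 0 < d)
    (F : Finset (Set (Fin t → Fin d → ℝ)))
    (hcard : d + 1 ≤ F.card)
    (hF : ∀ A ∈ F, IsProdOfConvex t d A)
    (hint : ∀ H ⊆ F, H.card = d + 1 → (⋂₀ (H : Set (Set (Fin t → Fin d → ℝ)))).Nonempty) :
    (⋂₀ (F : Set (Set (Fin t → Fin d → ℝ)))).Nonempty := by
  choose! A hconv hA using hF
  have hcoord : ∀ j, (⋂ S ∈ F, A S j).Nonempty := fun j ↦ by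
    refine Convex.helly_theorem (𝕜 := ℝ) (by simpa using hcard)
      (fun S hS ↦ hconv S hS j) fun H hHF hH ↦ ?_
    obtain ⟨x, hx⟩ := hint H hHF (by simpa using hH)
    refine ⟨x j, Set.mem_iInter₂.2 fun S hS ↦ ?_⟩
    have hxS : x ∈ S := hx S hS
    rw [hA S (hHF hS)] at hxS
    exact hxS j
  choose x hx using hcoord
  refine ⟨x, fun S hS ↦ ?_⟩
  rw [hA S hS]
  exact fun j ↦ Set.mem_iInter₂.1 (hx j) S hS
end

section
/- For every positive integer m there exists a family F of m^2 nonempty sets such that: (1) every subfamily of F whose members pairwise intersect is intersecting (in particular F has Helly number at most 2); (2) exactly C(m^2, 2) - m * C(m, 2) pairs of members of F are intersecting; and (3) every intersecting subfamily of F has size at most m. -/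
/-- If `i` is determined by `(p i, q i)`, then a function `f` with `f (p i) = q i` for all `i ∈ S`
exists iff `p` is injective on `S`. -/
theorem nonempty_iInter_eval_iff_injOn {ι α β : Type*} [Nonempty β] {p : ι → α} {q : ι → β}
    (hpq : ∀ i j, p i = p j → q i = q j → i = j) (S : Finset ι) :
    (⋂ i ∈ S, {f : α → β | f (p i) = q i}).Nonempty ↔ Set.InjOn p S := by
  constructor
  · rintro ⟨f, hf⟩ i hi j hj hij
    simp only [Set.mem_iInter, Set.mem_ofPred_eq] at hf
    exact hpq i j hij (by rw [← hf i hi, ← hf j hj, hij])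
  · intro hinj
    classical
    refine ⟨fun a => if h : ∃ i ∈ S, p i = a then q h.choose else Classical.arbitrary β, ?_⟩
    simp only [Set.mem_iInter, Set.mem_ofPred_eq]
    intro i hi
    have h : ∃ j ∈ S, p j = p i := ⟨i, hi, rfl⟩
    rw [dif_pos h, hinj h.choose_spec.1 hi h.choose_spec.2]

open scoped Classical in
/-- If all fibres of `p` have `k` elements, the number of pairs inside a fibre is
`|β| * C(k, 2)`. -/
theorem card_filter_not_injOn {α β : Type*} [Fintype α] [Fintype β] [DecidableEq β] (p : α → β) (k : ℕ)
    (hp : ∀ b, (Finset.univ.filter (fun a => p a = b)).card = k) :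
    ((Finset.powersetCard 2 (Finset.univ : Finset α)).filter
      (fun S : Finset α => ¬ Set.InjOn p S)).card = Fintype.card β * k.choose 2 := by
  have hunion : (Finset.powersetCard 2 (Finset.univ : Finset α)).filter
      (fun S : Finset α => ¬ Set.InjOn p S) =
      Finset.univ.biUnion
        (fun b => Finset.powersetCard 2 (Finset.univ.filter (fun a => p a = b))) := by
    ext S
    simp only [Finset.mem_filter, Finset.mem_powersetCard, Finset.mem_biUnion,
      Finset.mem_univ, true_and, Finset.subset_iff, implies_true]
    constructor
    · rintro ⟨hS, hinj⟩
      obtain ⟨x, y, hxy, rfl⟩ := Finset.card_eq_two.mp hS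
      refine ⟨p x, ?_, hS⟩
      by_contra hne
      apply hinj
      simp only [Finset.mem_insert, Finset.mem_singleton, forall_eq_or_imp, forall_eq,
        true_and] at hne
      intro a ha b hb hab
      simp only [Finset.coe_insert, Finset.coe_singleton, Set.mem_insert_iff,
        Set.mem_singleton_iff] at ha hb
      rcases ha with rfl | rfl <;> rcases hb with rfl | rfl <;> grind
    · rintro ⟨b, hb, hS⟩
      refine ⟨hS, fun hinj => ?_⟩
      obtain ⟨x, y, hxy, rfl⟩ := Finset.card_eq_two.mp hS
      exact hxy (hinj (by simp) (by simp) ((hb (by simp)).trans (hb (by simp)).symm))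
  rw [hunion, Finset.card_biUnion]
  · simp [Finset.card_powersetCard, hp]
  · intro b _ c _ hbc
    refine Finset.disjoint_left.mpr fun S hSb hSc => hbc ?_
    rw [Finset.mem_powersetCard] at hSb hSc
    obtain ⟨x, hx⟩ := Finset.card_pos.mp (by omega : 0 < S.card)
    exact (Finset.mem_filter.mp (hSb.1 hx)).2.symm.trans (Finset.mem_filter.mp (hSc.1 hx)).2

open scoped Classical in
/-- A family of `m²` nonempty sets with Helly number at most 2 (every pairwise
intersecting subfamily is intersecting) whose intersection graph is the complete
`m`-partite graph `K_{m,…,m}`: it has exactly `C(m²,2) - m·C(m,2)` intersecting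
pairs, yet every intersecting subfamily has size at most `m`. -/
theorem stmt17 (m : ℕ) (hm : 0 < m) :
    ∃ (X : Type) (F : Fin (m ^ 2) → Set X),
      (∀ i, (F i).Nonempty) ∧
      (∀ S : Finset (Fin (m ^ 2)),
        (∀ i ∈ S, ∀ j ∈ S, i ≠ j → (F i ∩ F j).Nonempty) → (⋂ i ∈ S, F i).Nonempty) ∧
      ((Finset.powersetCard 2 (Finset.univ : Finset (Fin (m ^ 2)))).filter
          (fun S : Finset (Fin (m ^ 2)) => (⋂ i ∈ S, F i).Nonempty)).card
        = (m ^ 2).choose 2 - m * m.choose 2 ∧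
      (∀ S : Finset (Fin (m ^ 2)), (⋂ i ∈ S, F i).Nonempty → S.card ≤ m) := by
  have : NeZero m := ⟨hm.ne'⟩
  let e : Fin (m ^ 2) ≃ Fin m × Fin m := (finCongr (sq m)).trans finProdFinEquiv.symm
  let p : Fin (m ^ 2) → Fin m := fun i => (e i).1
  let q : Fin (m ^ 2) → Fin m := fun i => (e i).2
  have hpq : ∀ i j, p i = p j → q i = q j → i = j := fun i j h₁ h₂ =>
    e.injective (Prod.ext h₁ h₂)
  have hinter := nonempty_iInter_eval_iff_injOn hpq
  have hfibre : ∀ b, (Finset.univ.filter (fun i => p i = b)).card = m := by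
    intro b
    have himage : Finset.univ.filter (fun i => p i = b) =
        Finset.univ.map ⟨fun c : Fin m => e.symm (b, c), fun c d h => by simpa using h⟩ := by
      ext i
      simp only [Finset.mem_filter, Finset.mem_univ, true_and, Finset.mem_map]
      constructor
      · rintro rfl
        exact ⟨q i, e.symm_apply_apply i⟩
      · rintro ⟨c, rfl⟩
        exact congrArg Prod.fst (e.apply_symm_apply (b, c))
    rw [himage, Finset.card_map, Finset.card_univ, Fintype.card_fin]
  refine ⟨Fin m → Fin m, fun i => {f | f (p i) = q i}, fun i => ⟨fun _ => q i, rfl⟩, ?_, ?_, ?_⟩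
  · intro S hS
    rw [hinter]
    intro i hi j hj hij
    by_contra hne
    obtain ⟨f, hfi, hfj⟩ := hS i hi j hj hne
    simp only [Set.mem_ofPred_eq] at hfi hfj
    exact hne (hpq i j hij (by rw [← hfi, ← hfj, hij]))
  · have hsplit := Finset.card_filter_add_card_filter_not
      (s := Finset.powersetCard 2 (Finset.univ : Finset (Fin (m ^ 2))))
      (fun S : Finset (Fin (m ^ 2)) => Set.InjOn p S)
    rw [card_filter_not_injOn p m hfibre, Finset.card_powersetCard, Finset.card_univ,
      Fintype.card_fin, Fintype.card_fin] at hsplit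
    simp only [hinter]
    omega
  · intro S hS
    simpa using Finset.card_le_card_of_injOn p (fun i _ => Finset.mem_univ (p i))
      ((hinter S).mp hS)
end
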